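/- arXiv:2405.05717 — 7 statements merged into one kernel-verified Lean document; each statement's English description precedes it below -/
import Mathlib

section
/- Let ψ satisfy hypotheses (i)–(iv) below on the domain Q. Then there exist two sequences {(x_m^{(1)}, y_m^{(1)})}_{m∈ℕ} and {(x_m^{(2)}, y_m^{(2)})}_{m∈ℕ} of points of Q, both converging to the point P₀ = (0, f(0)), such that ψ_{xx}(x_m^{(1)}, y_m^{(1)}) → 1/a and ψ_{xx}(x_m^{(2)}, y_m^{(2)}) → 0 as m → ∞. In particular, ψ_{xx} has no continuous extension to closure(Q) at the point P₀, so ψ restricted to closure(Q) is not C² at P₀. -/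
open Set Filter

/-- First partial derivative in the `x`-direction. -/
noncomputable def pd1 (ψ : ℝ × ℝ → ℝ) (p : ℝ × ℝ) : ℝ :=
  deriv (fun x => ψ (x, p.2)) p.1

/-- First partial derivative in the `y`-direction. -/
noncomputable def pd2 (ψ : ℝ × ℝ → ℝ) (p : ℝ × ℝ) : ℝ :=
  deriv (fun y => ψ (p.1, y)) p.2

/-- The domain `Q = {(x,y) : 0 < x < ε₀, 0 < y < f(x)}`. -/
def Qset (ε₀ : ℝ) (f : ℝ → ℝ) : Set (ℝ × ℝ) :=
  {p | 0 < p.1 ∧ p.1 < ε₀ ∧ 0 < p.2 ∧ p.2 < f p.1}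

/-- The part of the closure of `Q` with `x > 0`, on which the `Oᵢ` are `C¹`. -/
def Dset (ε₀ : ℝ) (f : ℝ → ℝ) : Set (ℝ × ℝ) :=
  closure (Qset ε₀ f) ∩ {p | 0 < p.1}

/-- The upper boundary `{(x, f(x)) : 0 ≤ x ≤ ε₀}`. -/
def Gamf (ε₀ : ℝ) (f : ℝ → ℝ) : Set (ℝ × ℝ) :=
  (fun x => (x, f x)) '' Set.Icc 0 ε₀


open Set Filter

/-- The linear form `α dx + β dy`. -/
noncomputable def lf (α β : ℝ) : ℝ × ℝ →L[ℝ] ℝ :=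
  α • ContinuousLinearMap.fst ℝ ℝ ℝ + β • ContinuousLinearMap.snd ℝ ℝ ℝ

lemma lf_apply (α β : ℝ) (p : ℝ × ℝ) : lf α β p = α * p.1 + β * p.2 := by
  simp [lf]

lemma lf_curve {g : ℝ × ℝ → ℝ} {α β : ℝ} {c1 c2 : ℝ → ℝ} {d1 d2 t : ℝ}
    (h : HasFDerivAt g (lf α β) (c1 t, c2 t)) (h1 : HasDerivAt c1 d1 t) (h2 : HasDerivAt c2 d2 t) :
    HasDerivAt (fun t => g (c1 t, c2 t)) (α * d1 + β * d2) t := by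
  have := h.comp_hasDerivAt t (h1.prodMk h2)
  rw [lf_apply] at this
  exact this

lemma second_min {g g' : ℝ → ℝ} {g2 : ℝ} (h : ∀ᶠ t in nhds 0, HasDerivAt g (g' t) t)
    (h2 : HasDerivAt g' g2 0) (hm : IsLocalMin g 0) : 0 ≤ g2 := by
  by_contra! hneg
  have hd : deriv g =ᶠ[nhds 0] g' := h.mono fun t ht => ht.deriv
  have h0 : deriv g 0 = 0 := hm.deriv_eq_zero
  have hdd : deriv (deriv g) 0 = g2 := by rw [hd.deriv_eq, h2.deriv]
  have hmax : IsLocalMax g 0 :=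
    isLocalMax_of_deriv_deriv_neg (by rw [hdd]; exact hneg) h0 h.self_of_nhds.continuousAt
  have hconst : g =ᶠ[nhds 0] fun _ => g 0 := by
    filter_upwards [hm, hmax] with t h1 h2
    exact le_antisymm h2 h1
  have h1 : deriv g =ᶠ[nhds 0] fun _ => 0 := by
    have := hconst.deriv
    simpa using this
  have : deriv (deriv g) 0 = 0 := by rw [h1.deriv_eq]; simp
  linarith

lemma hess_min {D D1 D2 : ℝ × ℝ → ℝ} {dxx dxy dyy x y : ℝ}
    (h : ∀ᶠ p in nhds (x, y), HasFDerivAt D (lf (D1 p) (D2 p)) p)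
    (h1 : HasFDerivAt D1 (lf dxx dxy) (x, y)) (h2 : HasFDerivAt D2 (lf dxy dyy) (x, y))
    (hm : IsLocalMin D (x, y)) :
    D1 (x, y) = 0 ∧ D2 (x, y) = 0 ∧ (∀ c, 0 ≤ dxx + 2 * c * dxy + c ^ 2 * dyy) ∧ 0 ≤ dyy := by
  have hf : lf (D1 (x, y)) (D2 (x, y)) = 0 := hm.hasFDerivAt_eq_zero h.self_of_nhds
  have key : ∀ c d : ℝ, 0 ≤ d * (d * dxx + c * dxy) + c * (d * dxy + c * dyy) := by
    intro c d
    have hc1 : ∀ t, HasDerivAt (fun t : ℝ => x + t * d) d t := fun t => by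
      simpa using ((hasDerivAt_id t).mul_const d).const_add x
    have hc2 : ∀ t, HasDerivAt (fun t : ℝ => y + t * c) c t := fun t => by
      simpa using ((hasDerivAt_id t).mul_const c).const_add y
    have hten : Tendsto (fun t : ℝ => (x + t * d, y + t * c)) (nhds 0) (nhds (x, y)) := by
      have : ContinuousAt (fun t : ℝ => (x + t * d, y + t * c)) 0 := by fun_prop
      simpa [ContinuousAt] using this
    have e : ((x + (0:ℝ) * d, y + (0:ℝ) * c) : ℝ × ℝ) = (x, y) := by simp
    refine second_min (g := fun t => D (x + t * d, y + t * c))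
      (g' := fun t => D1 (x + t * d, y + t * c) * d + D2 (x + t * d, y + t * c) * c) ?_ ?_ ?_
    · filter_upwards [hten.eventually h] with t ht
      exact lf_curve ht (hc1 t) (hc2 t)
    · have a1 := lf_curve (c1 := fun t => x + t * d) (c2 := fun t => y + t * c) (t := 0)
        (by simpa using h1) (hc1 0) (hc2 0)
      have a2 := lf_curve (c1 := fun t => x + t * d) (c2 := fun t => y + t * c) (t := 0)
        (by simpa using h2) (hc1 0) (hc2 0)
      have := (a1.mul_const d).add (a2.mul_const c)
      refine this.congr_deriv ?_
      ring
    · have := hten.eventually hm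
      simpa [IsLocalMin, IsMinFilter] using this
  have e1 : lf (D1 (x, y)) (D2 (x, y)) (1, 0) = 0 := by rw [hf]; simp
  have e2 : lf (D1 (x, y)) (D2 (x, y)) (0, 1) = 0 := by rw [hf]; simp
  simp only [lf_apply] at e1 e2
  refine ⟨by linarith, by linarith, fun c => ?_, ?_⟩
  · have := key c 1; nlinarith
  · have := key 1 0; nlinarith

lemma phi_d {q κ μ y0 : ℝ} {p : ℝ × ℝ} (hp : 0 < p.1) :
    HasFDerivAt (fun p : ℝ × ℝ => μ * (p.1 ^ (q+1) - κ * p.1 ^ q * (p.2 - y0)^2))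
      (lf (μ * ((q+1) * p.1 ^ q - κ * q * p.1 ^ (q-1) * (p.2 - y0)^2))
        (-(2 * κ * μ * p.1 ^ q * (p.2 - y0)))) p := by
  have hr : ∀ s : ℝ, HasFDerivAt (fun p : ℝ × ℝ => p.1 ^ s)
      ((s * p.1 ^ (s-1)) • ContinuousLinearMap.fst ℝ ℝ ℝ) p := fun s =>
    (Real.hasDerivAt_rpow_const (p := s) (Or.inl hp.ne')).comp_hasFDerivAt p hasFDerivAt_fst
  have hy : HasFDerivAt (fun p : ℝ × ℝ => (p.2 - y0)) (ContinuousLinearMap.snd ℝ ℝ ℝ) p :=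
    hasFDerivAt_snd.sub_const y0
  have := ((hr (q+1)).sub (((hr q).const_mul κ).mul (hy.pow 2))).const_mul μ
  refine this.congr_fderiv ?_
  ext <;> simp [lf] <;> first | ring1 | (left; ring1)

lemma phix_d {q κ μ y0 : ℝ} {p : ℝ × ℝ} (hp : 0 < p.1) :
    HasFDerivAt (fun p : ℝ × ℝ => μ * ((q+1) * p.1 ^ q - κ * q * p.1 ^ (q-1) * (p.2 - y0)^2))
      (lf (μ * ((q+1) * q * p.1 ^ (q-1) - κ * q * (q-1) * p.1 ^ (q-1-1) * (p.2 - y0)^2))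
        (-(2 * κ * μ * q * p.1 ^ (q-1) * (p.2 - y0)))) p := by
  have hr : ∀ s : ℝ, HasFDerivAt (fun p : ℝ × ℝ => p.1 ^ s)
      ((s * p.1 ^ (s-1)) • ContinuousLinearMap.fst ℝ ℝ ℝ) p := fun s =>
    (Real.hasDerivAt_rpow_const (p := s) (Or.inl hp.ne')).comp_hasFDerivAt p hasFDerivAt_fst
  have hy : HasFDerivAt (fun p : ℝ × ℝ => (p.2 - y0)) (ContinuousLinearMap.snd ℝ ℝ ℝ) p :=
    hasFDerivAt_snd.sub_const y0
  have := (((hr q).const_mul (q+1)).sub (((hr (q-1)).const_mul (κ*q)).mul (hy.pow 2))).const_mul μ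
  refine this.congr_fderiv ?_
  ext <;> simp [lf] <;> first | ring1 | (left; ring1)

lemma phiy_d {q κ μ y0 : ℝ} {p : ℝ × ℝ} (hp : 0 < p.1) :
    HasFDerivAt (fun p : ℝ × ℝ => -(2 * κ * μ * p.1 ^ q * (p.2 - y0)))
      (lf (-(2 * κ * μ * q * p.1 ^ (q-1) * (p.2 - y0))) (-(2 * κ * μ * p.1 ^ q))) p := by
  have hr : ∀ s : ℝ, HasFDerivAt (fun p : ℝ × ℝ => p.1 ^ s)
      ((s * p.1 ^ (s-1)) • ContinuousLinearMap.fst ℝ ℝ ℝ) p := fun s =>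
    (Real.hasDerivAt_rpow_const (p := s) (Or.inl hp.ne')).comp_hasFDerivAt p hasFDerivAt_fst
  have hy : HasFDerivAt (fun p : ℝ × ℝ => (p.2 - y0)) (ContinuousLinearMap.snd ℝ ℝ ℝ) p :=
    hasFDerivAt_snd.sub_const y0
  have := (((hr q).const_mul (2 * κ * μ)).mul hy).neg
  refine this.congr_fderiv ?_
  ext <;> simp [lf] <;> ring

/-- Algebra at the contact point. Here `w = x^(q-1)`. -/
lemma barrier_alg {a b N k q κ μ x s w u uxx uxy vyy v o1 o2 o3 o4 o5 g : ℝ}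
    (hN : 0 < N) (hκ : 0 < κ) (hμ : 0 < μ) (hx : 0 < x) (hw : 0 < w) (ha : 0 < a)
    (hq0 : 0 < q) (hq1 : q < 1) (hg : 0 < g) (hgq : (2 - a * k) * q - 1 = g) (hτ : 1 < 2 - a * k)
    (hκb : 2 * κ * (b + 3 * N) = g / 2) (hx1 : x ≤ 1) (hNx : 6 * N * x ≤ g / 4)
    (hNx2 : N * x ≤ 1 / 2) (hell : N * x + N ^ 2 * x / 2 ≤ b)
    (hs : |s| ≤ 1) (hpos : κ * s ^ 2 < x)
    (hu : u ≤ k * x) (h1 : |o1| ≤ N * x ^ 2) (h2 : |o2| ≤ N * x) (h3 : |o3| ≤ N * x)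
    (h4 : |o4| ≤ N * x) (h5 : |o5| ≤ N * x)
    (heq : (2 * x - a * u + o1) * uxx + o2 * uxy + (b + o3) * vyy - (1 + o4) * u + o5 * v = 0)
    (hux : u = μ * ((q+1) * (w * x) - κ * q * w * s^2))
    (hv : v = -(2 * κ * μ * (w * x) * s))
    (hc : ∀ c, 0 ≤ (uxx - μ * ((q+1) * q * w - κ * q * (q-1) * (w / x) * s^2))
      + 2 * c * (uxy - -(2 * κ * μ * q * w * s)) + c ^ 2 * (vyy - -(2 * κ * μ * (w * x))))
    (hyy : 0 ≤ vyy - -(2 * κ * μ * (w * x))) : False := by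
  set A := 2 * x - a * u + o1 with hA
  rw [abs_le] at h1 h2 h3 h4 h5 hs
  set τ := 2 - a * k with hτd
  have hA1 : (τ - N * x) * x ≤ A := by
    have := mul_le_mul_of_nonneg_left hu ha.le
    rw [hA, hτd]; linarith [h1.1, sq x]
  have hAx : x / 2 ≤ A := by
    have := mul_nonneg (by linarith : 0 ≤ τ - N * x - 1 / 2) hx.le
    linarith
  have hA0 : 0 < A := by linarith
  set Dxx := uxx - μ * ((q+1) * q * w - κ * q * (q-1) * (w / x) * s^2) with hDxx
  set Dxy := uxy - -(2 * κ * μ * q * w * s) with hDxy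
  set Dyy := vyy - -(2 * κ * μ * (w * x)) with hDyy
  have hsq : o2 ^ 2 ≤ N ^ 2 * x ^ 2 := by
    rw [← mul_pow]; exact sq_le_sq' (by linarith [h2.1]) h2.2
  have hquot : o2 ^ 2 / (4 * A) ≤ N ^ 2 * x / 2 := by
    rw [div_le_iff₀ (by linarith)]
    have := mul_le_mul_of_nonneg_left hAx (by positivity : 0 ≤ N ^ 2 * x)
    linarith [sq x]
  have hLD : 0 ≤ A * Dxx + o2 * Dxy + (b + o3) * Dyy := by
    have e1 := mul_nonneg hA0.le (hc (o2 / (2 * A)))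
    have e2 : A * (Dxx + 2 * (o2 / (2 * A)) * Dxy + (o2 / (2 * A)) ^ 2 * Dyy)
      = A * Dxx + o2 * Dxy + o2 ^ 2 / (4 * A) * Dyy := by field_simp; ring
    rw [e2] at e1
    have e3 : 0 ≤ (b + o3 - o2 ^ 2 / (4 * A)) * Dyy := mul_nonneg (by linarith [h3.1]) hyy
    linarith
  -- L φ > 0
  have hW : 0 < μ * w := mul_pos hμ hw
  set σ := κ * s ^ 2 with hσ
  have hσ0 : 0 ≤ σ := by positivity
  have hLφ : A * (μ * ((q+1) * q * w - κ * q * (q-1) * (w / x) * s^2))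
      + o2 * (-(2 * κ * μ * q * w * s)) + (b + o3) * (-(2 * κ * μ * (w * x)))
      - (1 + o4) * u + o5 * v ≤ 0 := by
    rw [hDxx, hDxy, hDyy] at hLD
    linarith
  have t1 : (τ - N * x) * x * (μ * w * ((q+1) * q)) ≤
      A * (μ * ((q+1) * q * w - κ * q * (q-1) * (w / x) * s^2)) := by
    have : μ * w * ((q+1) * q) ≤ μ * ((q+1) * q * w - κ * q * (q-1) * (w / x) * s^2) := by
      have : 0 ≤ μ * (κ * q * (1-q) * (w / x) * s^2) := by
        have : 0 < 1 - q := by linarith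
        positivity
      linarith
    exact mul_le_mul hA1 this (by positivity) hA0.le
  have t2 : |o2 * (-(2 * κ * μ * q * w * s))| ≤ N * x * (2 * κ * μ * w) := by
    rw [abs_mul]
    refine mul_le_mul (abs_le.2 h2) ?_ (abs_nonneg _) (by positivity)
    have : |(-(2 * κ * μ * q * w * s))| = 2 * κ * μ * w * (q * |s|) := by
      rw [abs_neg, abs_mul, abs_of_pos (by positivity)]; ring
    rw [this]
    have : q * |s| ≤ 1 := by
      have := mul_le_mul hq1.le (abs_le.2 hs) (abs_nonneg _) zero_le_one
      linarith
    exact mul_le_of_le_one_right (by positivity) this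
  have t3 : (b + o3) * (2 * κ * μ * (w * x)) ≤ (b + N) * (2 * κ * μ * (w * x)) :=
    mul_le_mul_of_nonneg_right (by have := mul_le_of_le_one_right hN.le hx1; linarith [h3.2]) (by positivity)
  have t4 : (1 + o4) * u ≤ (1 + N * x) * (μ * w * x * (q + 1)) := by
    have hu0 : 0 ≤ u := by
      rw [hux]
      have : κ * q * w * s ^ 2 ≤ q * w * x := by
        have := mul_le_mul_of_nonneg_left hpos.le (mul_pos hq0 hw).le
        linarith
      have : 0 ≤ (q+1) * (w * x) - κ * q * w * s^2 := by linarith [mul_pos hw hx]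
      positivity
    have hu1 : u ≤ μ * w * x * (q + 1) := by
      rw [hux]
      have : 0 ≤ μ * (κ * q * w * s^2) := by positivity
      linarith
    exact mul_le_mul (by linarith [h4.2]) hu1 hu0 (by positivity)
  have t5 : |o5 * v| ≤ N * x * (2 * κ * μ * w) := by
    rw [abs_mul]
    refine mul_le_mul (abs_le.2 h5) ?_ (abs_nonneg _) (by positivity)
    have : |v| = 2 * κ * μ * w * (x * |s|) := by
      rw [hv, abs_neg, abs_mul, abs_of_pos (by positivity)]; ring
    rw [this]
    have : x * |s| ≤ 1 := by
      have := mul_le_mul hx1 (abs_le.2 hs) (abs_nonneg _) zero_le_one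
      linarith
    exact mul_le_of_le_one_right (by positivity) this
  have t2' := (abs_le.1 t2).1
  have t5' := (abs_le.1 t5).1
  have tot : μ * w * x * ((τ - N * x) * ((q+1) * q) - 2 * κ * (b + 3 * N) - (1 + N * x) * (q + 1)) ≤ 0 := by
    linarith
  have fin : 0 < (τ - N * x) * ((q+1) * q) - 2 * κ * (b + 3 * N) - (1 + N * x) * (q + 1) := by
    rw [hκb]
    have e : (τ - N * x) * ((q+1) * q) - g / 2 - (1 + N * x) * (q + 1)
      = (q+1) * g - g/2 - N * x * ((q+1) * (q+1)) := by rw [← hgq]; ring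
    rw [e]
    have hNx0 : 0 < N * x := by positivity
    have : (q+1)*(q+1) ≤ 2 * 2 := mul_le_mul (by linarith) (by linarith) (by linarith) (by norm_num)
    have h6 := mul_le_mul_of_nonneg_left this hNx0.le
    have h7 := mul_pos hq0 hg
    linarith
  have := mul_pos (mul_pos hW hx) fin
  linarith

open Set Filter

lemma A_contra {a b N k M r y0 : ℝ} (ha : 0 < a) (hb : 0 < b) (hN : 0 < N) (hr : 0 < r)
    (hak : a * k < 1) {ψ u v uxx uxy vyy o1 o2 o3 o4 o5 : ℝ × ℝ → ℝ} {R : Set (ℝ × ℝ)}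
    (hR : R = {p | 0 < p.1 ∧ p.1 < r ∧ |p.2 - y0| < r})
    (hψ : ∀ p ∈ R, HasFDerivAt ψ (lf (u p) (v p)) p)
    (hu : ∀ p ∈ R, HasFDerivAt u (lf (uxx p) (uxy p)) p)
    (hv : ∀ p ∈ R, HasFDerivAt v (lf (uxy p) (vyy p)) p)
    (hpos : ∀ p ∈ R, 0 < ψ p) (huk : ∀ p ∈ R, u p ≤ k * p.1)
    (h1 : ∀ p ∈ R, |o1 p| ≤ N * p.1 ^ 2) (h2 : ∀ p ∈ R, |o2 p| ≤ N * p.1)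
    (h3 : ∀ p ∈ R, |o3 p| ≤ N * p.1) (h4 : ∀ p ∈ R, |o4 p| ≤ N * p.1)
    (h5 : ∀ p ∈ R, |o5 p| ≤ N * p.1)
    (heq : ∀ p ∈ R, (2 * p.1 - a * u p + o1 p) * uxx p + o2 p * uxy p + (b + o3 p) * vyy p
      - (1 + o4 p) * u p + o5 p * v p = 0)
    (hcont : ContinuousOn ψ {p | 0 ≤ p.1 ∧ p.1 < r ∧ |p.2 - y0| < r})
    (hzero : ∀ y, |y - y0| < r → ψ (0, y) = 0)
    (hM : ∀ p ∈ R, ψ p ≤ M * p.1 ^ 2) : False := by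
  obtain ⟨τ, hτ⟩ : ∃ τ, τ = 2 - a * k := ⟨_, rfl⟩
  have hτ1 : 1 < τ := by linarith
  obtain ⟨q, hq⟩ : ∃ q, q = (1 + 1 / τ) / 2 := ⟨_, rfl⟩
  have hinv : 1 / τ < 1 := by rw [div_lt_one (by linarith)]; exact hτ1
  have hinv0 : 0 < 1 / τ := by positivity
  have hq0 : 0 < q := by linarith
  have hq1 : q < 1 := by linarith
  obtain ⟨g, hg⟩ : ∃ g, g = (τ - 1) / 2 := ⟨_, rfl⟩
  have hg0 : 0 < g := by linarith
  have hgq : τ * q - 1 = g := by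
    rw [hq, hg]; field_simp; ring
  obtain ⟨κ, hκ⟩ : ∃ κ, κ = g / (4 * (b + 3 * N)) := ⟨_, rfl⟩
  have hκ0 : 0 < κ := by rw [hκ]; positivity
  have hκb : 2 * κ * (b + 3 * N) = g / 2 := by rw [hκ]; field_simp; ring
  obtain ⟨h, hh⟩ : ∃ h, h = min r 1 / 2 := ⟨_, rfl⟩
  have hmin : 0 < min r 1 := lt_min hr one_pos
  have hh0 : 0 < h := by linarith
  have hhr : h < r := by have := min_le_left r 1; linarith
  have hh1 : h ≤ 1 := by have := min_le_right r 1; linarith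
  obtain ⟨x1, hx10, hx1r, hx11, hx1h, hx1N, hx1N2, hx1e⟩ : ∃ x1 > 0, x1 < r ∧ x1 < 1 ∧
      x1 < κ * h ^ 2 ∧ 6 * N * x1 < g / 4 ∧ N * x1 < 1 / 2 ∧ N * x1 + N ^ 2 * x1 / 2 < b := by
    have ev : ∀ (F : ℝ → ℝ) (c : ℝ), Continuous F → F 0 < c →
        ∀ᶠ x in nhdsWithin (0:ℝ) (Ioi 0), F x < c := fun F c hF h0 =>
      (hF.continuousAt.tendsto.eventually (gt_mem_nhds h0)).filter_mono nhdsWithin_le_nhds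
    have e1 := ev (fun x => x) r (by fun_prop) hr
    have e2 := ev (fun x => x) 1 (by fun_prop) one_pos
    have e3 := ev (fun x => x) (κ * h ^ 2) (by fun_prop) (by positivity)
    have e4 := ev (fun x => 6 * N * x) (g / 4) (by fun_prop) (by simp; linarith)
    have e5 := ev (fun x => N * x) (1 / 2) (by fun_prop) (by simp)
    have e6 := ev (fun x => N * x + N ^ 2 * x / 2) b (by fun_prop) (by simpa)
    obtain ⟨x, hx, h⟩ := ((e1.and (e2.and (e3.and (e4.and (e5.and e6))))).and
      self_mem_nhdsWithin).exists.imp fun x hx => And.intro hx.2 hx.1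
    exact ⟨x, hx, h⟩
  -- the lower bound at x = x1
  have habs : ∀ y, y ∈ Icc (y0 - h) (y0 + h) → |y - y0| < r := fun y hy => by
    rw [abs_lt]; constructor <;> linarith [hy.1, hy.2]
  obtain ⟨m, hm0, hm⟩ : ∃ m > 0, ∀ y ∈ Icc (y0 - h) (y0 + h), m < ψ (x1, y) := by
    have hc : ContinuousOn (fun y => ψ (x1, y)) (Icc (y0 - h) (y0 + h)) :=
      hcont.comp (by fun_prop) fun y hy => ⟨hx10.le, hx1r, habs y hy⟩
    obtain ⟨y, hy, hmin⟩ := isCompact_Icc.exists_isMinOn (nonempty_Icc.2 (by linarith)) hc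
    have hp : 0 < ψ (x1, y) := hpos _ (by rw [hR]; exact ⟨hx10, hx1r, habs y hy⟩)
    refine ⟨ψ (x1, y) / 2, by positivity, fun z hz => ?_⟩
    have : ψ (x1, y) ≤ ψ (x1, z) := hmin hz
    linarith
  have hpw : 0 < x1 ^ (q + 1) := Real.rpow_pos_of_pos hx10 _
  obtain ⟨μ, hμ⟩ : ∃ μ, μ = m / x1 ^ (q + 1) := ⟨_, rfl⟩
  have hμ0 : 0 < μ := by rw [hμ]; positivity
  have hμm : μ * x1 ^ (q + 1) = m := by rw [hμ]; field_simp
  set φ : ℝ × ℝ → ℝ := fun p => μ * (p.1 ^ (q+1) - κ * p.1 ^ q * (p.2 - y0)^2) with hφ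
  have hφc : Continuous φ := by
    have c1 : Continuous fun p : ℝ × ℝ => p.1 ^ (q + 1) :=
      continuous_fst.rpow_const fun _ => Or.inr (by linarith)
    have c2 : Continuous fun p : ℝ × ℝ => p.1 ^ q :=
      continuous_fst.rpow_const fun _ => Or.inr (by linarith)
    rw [hφ]; fun_prop
  have hφfac : ∀ p : ℝ × ℝ, 0 < p.1 → φ p = μ * p.1 ^ q * (p.1 - κ * (p.2 - y0) ^ 2) := by
    intro p hp
    simp only [hφ]
    rw [Real.rpow_add_one hp.ne']; ring
  have hle : ∀ p ∈ Icc (0:ℝ) x1 ×ˢ Icc (y0 - h) (y0 + h), φ p ≤ ψ p := by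
    by_contra! hcon
    obtain ⟨p₁, hp₁, hlt⟩ := hcon
    have hKc : IsCompact (Icc (0:ℝ) x1 ×ˢ Icc (y0 - h) (y0 + h)) := isCompact_Icc.prod isCompact_Icc
    have hDc : ContinuousOn (fun p => ψ p - φ p) (Icc (0:ℝ) x1 ×ˢ Icc (y0 - h) (y0 + h)) :=
      (hcont.mono fun p hp => ⟨hp.1.1, hp.1.2.trans_lt hx1r, habs _ hp.2⟩).sub hφc.continuousOn
    obtain ⟨⟨x, y⟩, hp, hmin⟩ := hKc.exists_isMinOn ⟨p₁, hp₁⟩ hDc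
    have hneg : ψ (x, y) - φ (x, y) < 0 := by
      have : ψ (x, y) - φ (x, y) ≤ ψ p₁ - φ p₁ := hmin hp₁
      linarith
    have hx0 : 0 < x := by
      rcases hp.1.1.eq_or_lt with h0 | h0
      · exfalso
        simp only at h0
        rw [← h0, hzero y (habs y hp.2)] at hneg
        simp only [hφ] at hneg
        rw [Real.zero_rpow (by linarith), Real.zero_rpow hq0.ne'] at hneg
        simp at hneg
      · exact h0
    have hpR : (x, y) ∈ R := by rw [hR]; exact ⟨hx0, hp.1.2.trans_lt hx1r, habs y hp.2⟩
    have hψp := hpos _ hpR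
    have hφp : 0 < φ (x, y) := by linarith
    have hxq : 0 < x ^ q := Real.rpow_pos_of_pos hx0 _
    have hpar : κ * (y - y0) ^ 2 < x := by
      rw [hφfac _ hx0] at hφp
      have := pos_of_mul_pos_right hφp (by positivity)
      simp only at this
      linarith
    have hxx1 : x < x1 := by
      rcases hp.1.2.eq_or_lt with h0 | h0
      · exfalso
        simp only at h0
        have h7 := hm y hp.2
        have h8 : φ (x, y) ≤ m := by
          rw [← hμm, ← h0]
          simp only [hφ]
          have : 0 ≤ κ * x ^ q * (y - y0) ^ 2 := by positivity
          exact mul_le_mul_of_nonneg_left (by linarith) hμ0.le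
        rw [h0] at h8 hneg
        linarith
      · exact h0
    have hyh : |y - y0| < h := by
      apply abs_lt_of_sq_lt_sq _ hh0.le
      have : κ * (y - y0) ^ 2 < κ * h ^ 2 := by linarith
      exact lt_of_mul_lt_mul_left this hκ0.le
    have hnhds : Icc (0:ℝ) x1 ×ˢ Icc (y0 - h) (y0 + h) ∈ nhds (x, y) :=
      prod_mem_nhds (Icc_mem_nhds hx0 hxx1)
        (Icc_mem_nhds (by linarith [(abs_lt.1 hyh).1]) (by linarith [(abs_lt.1 hyh).2]))
    have hloc : IsLocalMin (fun p => ψ p - φ p) (x, y) := hmin.isLocalMin hnhds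
    have hRn : ∀ᶠ p in nhds (x, y), p ∈ R := by
      have o1 : ∀ᶠ p : ℝ × ℝ in nhds (x, y), 0 < p.1 :=
        continuousAt_fst.eventually (lt_mem_nhds hx0)
      have o2 : ∀ᶠ p : ℝ × ℝ in nhds (x, y), p.1 < r :=
        continuousAt_fst.eventually (gt_mem_nhds (by linarith))
      have o3 : ∀ᶠ p : ℝ × ℝ in nhds (x, y), |p.2 - y0| < r := by
        have : ContinuousAt (fun p : ℝ × ℝ => |p.2 - y0|) (x, y) := by fun_prop
        exact this.eventually (gt_mem_nhds (by simp only; linarith))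
      filter_upwards [o1, o2, o3] with p a1 a2 a3
      rw [hR]; exact ⟨a1, a2, a3⟩
    have lfsub : ∀ α β γ δ : ℝ, lf α β - lf γ δ = lf (α - γ) (β - δ) := by
      intros; ext <;> simp [lf]
    have hD : ∀ᶠ p in nhds (x, y), HasFDerivAt (fun p => ψ p - φ p)
        (lf (u p - μ * ((q+1) * p.1 ^ q - κ * q * p.1 ^ (q-1) * (p.2 - y0)^2))
          (v p - -(2 * κ * μ * p.1 ^ q * (p.2 - y0)))) p := by
      filter_upwards [hRn] with p hp
      have hp' : 0 < p.1 := by rw [hR] at hp; exact hp.1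
      rw [← lfsub]
      exact (hψ p hp).sub (phi_d hp')
    have hD1 := (hu _ hpR).sub (phix_d (q := q) (κ := κ) (μ := μ) (y0 := y0) (p := (x, y)) hx0)
    have hD2 := (hv _ hpR).sub (phiy_d (q := q) (κ := κ) (μ := μ) (y0 := y0) (p := (x, y)) hx0)
    rw [lfsub] at hD1 hD2
    obtain ⟨z1, z2, z3, z4⟩ := hess_min hD hD1 hD2 hloc
    simp only at z1 z2 z3 z4
    have hw : 0 < x ^ (q - 1) := Real.rpow_pos_of_pos hx0 _
    have ew : x ^ q = x ^ (q - 1) * x := by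
      rw [← Real.rpow_add_one hx0.ne']; congr 1; ring
    have ew2 : x ^ (q - 1 - 1) = x ^ (q - 1) / x := by
      rw [Real.rpow_sub_one hx0.ne']
    rw [ew] at z1 z2 z4
    simp only [ew, ew2] at z3
    have c1 : N * x ≤ N * x1 := mul_le_mul_of_nonneg_left hxx1.le hN.le
    have c2 : N ^ 2 * x ≤ N ^ 2 * x1 := mul_le_mul_of_nonneg_left hxx1.le (by positivity)
    exact barrier_alg (a := a) (b := b) (N := N) (k := k) (q := q) (κ := κ) (μ := μ) (x := x)
      (s := y - y0) (w := x ^ (q - 1)) (u := u (x, y)) (uxx := uxx (x, y)) (uxy := uxy (x, y))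
      (vyy := vyy (x, y)) (v := v (x, y)) (g := g)
      hN hκ0 hμ0 hx0 hw ha hq0 hq1 hg0 (by rw [← hτ]; exact hgq) (by linarith) hκb (by linarith)
      (by linarith) (by linarith) (by linarith) (by linarith) hpar (huk _ hpR) (h1 _ hpR)
      (h2 _ hpR) (h3 _ hpR) (h4 _ hpR) (h5 _ hpR) (heq _ hpR) (by linarith) (by linarith) z3 z4
  -- contradiction with ψ ≤ M x²
  have key : ∀ x, 0 < x → x < x1 → μ ≤ M * x ^ (1 - q) := by
    intro x hx0 hxx1
    have hpR : (x, y0) ∈ R := by rw [hR]; exact ⟨hx0, by simp only; linarith, by simpa⟩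
    have e1 := hle (x, y0) ⟨⟨hx0.le, hxx1.le⟩, by simp only; constructor <;> linarith⟩
    have e2 := hM _ hpR
    simp only [hφ, sub_self] at e1 e2
    have e3 : μ * x ^ (q + 1) ≤ M * x ^ 2 := by
      refine le_trans (le_of_eq ?_) (e1.trans e2); ring
    have e4 : x ^ (2:ℕ) = x ^ (1 - q) * x ^ (q + 1) := by
      rw [← Real.rpow_add hx0, ← Real.rpow_natCast]; congr 1; push_cast; ring
    rw [e4, ← mul_assoc] at e3
    exact le_of_mul_le_mul_right e3 (Real.rpow_pos_of_pos hx0 _)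
  have hlim : Tendsto (fun x : ℝ => M * x ^ (1 - q)) (nhdsWithin 0 (Ioi 0)) (nhds 0) := by
    have : ContinuousAt (fun x : ℝ => M * x ^ (1 - q)) 0 :=
      continuousAt_const.mul (Real.continuousAt_rpow_const _ _ (Or.inr (by linarith)))
    have h0 := this.tendsto
    simp only [Real.zero_rpow (by linarith : 1 - q ≠ 0), mul_zero] at h0
    exact h0.mono_left nhdsWithin_le_nhds
  have : μ ≤ 0 := by
    refine ge_of_tendsto hlim ?_
    filter_upwards [Ioo_mem_nhdsGT hx10] with x hx
    exact key x hx.1 hx.2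
  linarith

open Set Filter

lemma mvt_bd {g g' : ℝ → ℝ} {x0 x1 B : ℝ} (hle : x0 ≤ x1) (hc : ContinuousOn g (Icc x0 x1))
    (hd : ∀ x ∈ Ioo x0 x1, HasDerivAt g (g' x) x) (hB : ∀ x ∈ Ioo x0 x1, |g' x| ≤ B) :
    |g x1 - g x0| ≤ B * (x1 - x0) := by
  rcases hle.eq_or_lt with h | h
  · simp [h]
  · obtain ⟨c, hc1, hc2⟩ := exists_hasDerivAt_eq_slope g g' h hc hd
    rw [eq_div_iff (by linarith)] at hc2
    rw [← hc2, abs_mul, abs_of_pos (by linarith : 0 < x1 - x0)]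
    exact mul_le_mul_of_nonneg_right (hB c hc1) (by linarith)

lemma dist_vert (x y z : ℝ) : dist ((x, y) : ℝ × ℝ) (x, z) = |y - z| := by
  simp [Prod.dist_eq, Real.dist_eq]

set_option maxHeartbeats 2000000 in
lemma B_bound {ε₀ a b lam N K M F : ℝ} {f f' : ℝ → ℝ} (hε₀ : 0 < ε₀) (ha : 0 < a) (hb : 0 < b)
    (hlam : 0 < lam) (hN : 0 < N) (hf0 : 0 < f 0) (hK : 0 ≤ K) (hM : 0 ≤ M) (hF : 0 ≤ F)
    (hfl : ∀ x ∈ Ioo 0 ε₀, f 0 < f x ∧ f x ≤ f 0 + F * x ∧ HasDerivAt f (f' x) x ∧ |f' x| ≤ F)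
    (hfc : ContinuousOn f (Icc 0 ε₀))
    {ψ u v uxx uxy vyy o1 o2 o3 o4 o5 β₁ β₂ : ℝ × ℝ → ℝ} {Q : Set (ℝ × ℝ)} (hQ : Q = Qset ε₀ f)
    (hcl : ∀ x y, 0 ≤ x → x < ε₀ → 0 ≤ y → y ≤ f x → (x, y) ∈ closure Q)
    (hψ : ∀ p ∈ Q, HasFDerivAt ψ (lf (u p) (v p)) p)
    (hu : ∀ p ∈ Q, HasFDerivAt u (lf (uxx p) (uxy p)) p)
    (hv : ∀ p ∈ Q, HasFDerivAt v (lf (uxy p) (vyy p)) p)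
    (hψL : ∀ p ∈ closure Q, ∀ q ∈ closure Q, |ψ p - ψ q| ≤ K * dist p q)
    (huL : ∀ p ∈ closure Q, ∀ q ∈ closure Q, |u p - u q| ≤ K * dist p q)
    (hvL : ∀ p ∈ closure Q, ∀ q ∈ closure Q, |v p - v q| ≤ K * dist p q)
    (hψc : ContinuousOn ψ (closure Q))
    (hxx : ∀ p ∈ Q, |uxx p| ≤ K) (hxy : ∀ p ∈ Q, |uxy p| ≤ K)
    (hpos : ∀ p ∈ Q, 0 < ψ p) (huM : ∀ p ∈ Q, |u p| ≤ M * p.1)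
    (h1 : ∀ p ∈ Q, |o1 p| ≤ N * p.1 ^ 2) (h2 : ∀ p ∈ Q, |o2 p| ≤ N * p.1)
    (h3 : ∀ p ∈ Q, |o3 p| ≤ N * p.1) (h4 : ∀ p ∈ Q, |o4 p| ≤ N * p.1)
    (h5 : ∀ p ∈ Q, |o5 p| ≤ N * p.1)
    (heq : ∀ p ∈ Q, (2 * p.1 - a * u p + o1 p) * uxx p + o2 p * uxy p + (b + o3 p) * vyy p
      - (1 + o4 p) * u p + o5 p * v p = 0)
    (hz : ∀ y, 0 < y → y ≤ f 0 → ψ (0, y) = 0) (hvz : ∀ y, 0 < y → y ≤ f 0 → v (0, y) = 0)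
    (hβ₁ : ∀ x ∈ Ioo 0 ε₀, lam ≤ β₁ (x, f x)) (hβ₂ : ∀ x ∈ Ioo 0 ε₀, |β₂ (x, f x)| ≤ 1 / lam)
    (hbc : ∀ x ∈ Ioo 0 ε₀, β₁ (x, f x) * u (x, f x) + β₂ (x, f x) * v (x, f x) + ψ (x, f x) = 0) :
    ∃ C, ∃ t0 > 0, ∀ t, 0 < t → t < t0 → t ^ 2 < ε₀ ∧ |ψ (t ^ 2, f 0)| ≤ C * t ^ 5 := by
  have mQ : ∀ x y, (x, y) ∈ Q ↔ 0 < x ∧ x < ε₀ ∧ 0 < y ∧ y < f x := by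
    intro x y; rw [hQ]; rfl
  have hid : ∀ t : ℝ, HasDerivAt (fun t : ℝ => t) 1 t := hasDerivAt_id
  -- derivative along vertical and horizontal lines
  have dV : ∀ g gx gy x y, HasFDerivAt g (lf gx gy) (x, y) →
      HasDerivAt (fun y => g (x, y)) gy y := by
    intro g gx gy x y h
    have := lf_curve (c1 := fun _ => x) (c2 := fun t => t) h (hasDerivAt_const y x) (hid y)
    simpa using this
  have dH : ∀ g gx gy x y, HasFDerivAt g (lf gx gy) (x, y) →
      HasDerivAt (fun x => g (x, y)) gx x := by
    intro g gx gy x y h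
    have := lf_curve (c1 := fun t => t) (c2 := fun _ => y) h (hid x) (hasDerivAt_const x y)
    simpa using this
  -- 2. bound on v
  set V := K * (1 + F) with hV
  have hV0 : 0 ≤ V := by positivity
  have hvb : ∀ p ∈ Q, |v p| ≤ V * p.1 := by
    rintro ⟨x, y⟩ hp
    obtain ⟨x0, x1, y1, y2⟩ := (mQ x y).1 hp
    obtain ⟨g1, g2, -, -⟩ := hfl x ⟨x0, x1⟩
    have hm : 0 < min y (f 0) := lt_min y1 hf0
    have := hvL (x, y) (subset_closure hp) (0, min y (f 0))
      (hcl _ _ le_rfl hε₀ hm.le (min_le_right _ _))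
    rw [hvz _ hm (min_le_right _ _), sub_zero] at this
    refine this.trans ?_
    rw [hV, mul_assoc]
    refine mul_le_mul_of_nonneg_left ?_ hK
    have hFx : 0 ≤ F * x := by positivity
    rw [Prod.dist_eq]
    refine max_le ?_ ?_
    · simp only [Real.dist_eq, sub_zero, abs_of_pos x0]; linarith
    · simp only [Real.dist_eq]
      rw [abs_of_nonneg (by linarith [min_le_left y (f 0)])]
      rcases min_cases y (f 0) with ⟨h, -⟩ | ⟨h, -⟩ <;> rw [h] <;> linarith
  -- vertical mvt for ψ
  have vert : ∀ x y z B, (x, y) ∈ Q → (x, z) ∈ Q → y ≤ z →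
      (∀ w, y < w → w < z → |v (x, w)| ≤ B) → |ψ (x, z) - ψ (x, y)| ≤ B * (z - y) := by
    intro x y z B hy hz' hyz hB
    have hin : ∀ w ∈ Icc y z, (x, w) ∈ Q := fun w hw => by
      rw [mQ] at hy hz' ⊢
      exact ⟨hy.1, hy.2.1, by linarith [hw.1], by linarith [hw.2]⟩
    exact mvt_bd (g := fun y => ψ (x, y)) (g' := fun y => v (x, y)) hyz
      (fun w hw => (dV _ _ _ _ _ (hψ _ (hin w hw))).continuousAt.continuousWithinAt)
      (fun w hw => dV _ _ _ _ _ (hψ _ (hin w ⟨hw.1.le, hw.2.le⟩))) fun w hw => hB w hw.1 hw.2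
  -- 3. bound on ψ
  set C0 := M + V * F with hC0
  have hC00 : 0 ≤ C0 := by positivity
  have hψ1 : ∀ x y, 0 < x → x < ε₀ → 0 < y → y ≤ f 0 → |ψ (x, y)| ≤ M * x ^ 2 := by
    intro x y x0 x1 y0 y1
    have hin : ∀ z ∈ Ioo 0 x, (z, y) ∈ Q := fun z hz' =>
      (mQ _ _).2 ⟨hz'.1, hz'.2.trans x1, y0, y1.trans_lt (hfl z ⟨hz'.1, hz'.2.trans x1⟩).1⟩
    have := mvt_bd (g := fun x => ψ (x, y)) (g' := fun x => u (x, y)) (B := M * x) x0.le ?_ ?_ ?_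
    · simp only [hz y y0 y1, sub_zero] at this
      linarith [sq x]
    · refine hψc.comp (by fun_prop) fun z hz' => ?_
      refine hcl _ _ hz'.1 (hz'.2.trans_lt x1) y0.le ?_
      rcases hz'.1.eq_or_lt with h | h
      · rw [← h]; exact y1
      · exact y1.trans (hfl z ⟨h, hz'.2.trans_lt x1⟩).1.le
    · exact fun z hz' => dH _ _ _ _ _ (hψ _ (hin z hz'))
    · exact fun z hz' => (huM _ (hin z hz')).trans (mul_le_mul_of_nonneg_left hz'.2.le hM)
  have hψb : ∀ x y, (x, y) ∈ Q → ψ (x, y) ≤ C0 * x ^ 2 := by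
    intro x y hp
    obtain ⟨x0, x1, y1, y2⟩ := (mQ x y).1 hp
    obtain ⟨g1, g2, -, -⟩ := hfl x ⟨x0, x1⟩
    have hVF : 0 ≤ V * F * x ^ 2 := by positivity
    rcases le_total y (f 0) with h | h
    · have := (abs_le.1 (hψ1 x y x0 x1 y1 h)).2
      rw [hC0]; linarith
    · have e1 := (abs_le.1 (hψ1 x (f 0) x0 x1 hf0 le_rfl)).2
      have e2 := vert x (f 0) y (V * x) ((mQ _ _).2 ⟨x0, x1, hf0, g1⟩) hp h
        (fun w h1 h2 => hvb (x, w) ((mQ _ _).2 ⟨x0, x1, by linarith, by linarith⟩))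
      have e3 : V * x * (y - f 0) ≤ V * x * (F * x) :=
        mul_le_mul_of_nonneg_left (by linarith) (by positivity)
      have e4 := (abs_le.1 e2).2
      rw [hC0]; linarith [sq x]
  -- 1. bound on vyy
  set C1 := 2 / b * ((2 + a * M + N) * K + N * K + (1 + N) * M + N * V) with hC1
  have hC10 : 0 ≤ C1 := by positivity
  have hyy : ∀ p ∈ Q, p.1 ≤ 1 → N * p.1 ≤ b / 2 → |vyy p| ≤ C1 * p.1 := by
    intro p hp hp1 hpN
    have x0 : 0 < p.1 := by rw [hQ] at hp; exact hp.1
    have q1 := h1 p hp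
    have q2 := h2 p hp
    have q3 := h3 p hp
    have q4 := h4 p hp
    have q5 := h5 p hp
    have qu := huM p hp
    have qv := hvb p hp
    have hx2 : p.1 ^ 2 ≤ p.1 := by rw [sq]; exact mul_le_of_le_one_right x0.le hp1
    have hNx2 : N * p.1 ^ 2 ≤ N * p.1 := mul_le_mul_of_nonneg_left hx2 hN.le
    have hNx : N * p.1 ≤ N := mul_le_of_le_one_right hN.le hp1
    have A1 : |2 * p.1 - a * u p + o1 p| ≤ (2 + a * M + N) * p.1 := by
      have := mul_le_mul_of_nonneg_left qu ha.le
      have e : |a * u p| ≤ a * (M * p.1) := by rw [abs_mul, abs_of_pos ha]; exact this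
      rw [abs_le] at *
      constructor <;> linarith [q1.1, q1.2, e.1, e.2]
    have B1 : |(2 * p.1 - a * u p + o1 p) * uxx p| ≤ (2 + a * M + N) * p.1 * K := by
      rw [abs_mul]; exact mul_le_mul A1 (hxx p hp) (abs_nonneg _) (by positivity)
    have B2 : |o2 p * uxy p| ≤ N * p.1 * K := by
      rw [abs_mul]; exact mul_le_mul q2 (hxy p hp) (abs_nonneg _) (by positivity)
    have B3 : |(1 + o4 p) * u p| ≤ (1 + N) * (M * p.1) := by
      rw [abs_mul]
      refine mul_le_mul ?_ qu (abs_nonneg _) (by positivity)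
      rw [abs_le] at *
      constructor <;> linarith [q4.1, q4.2]
    have B4 : |o5 p * v p| ≤ N * (V * p.1) := by
      rw [abs_mul]; exact mul_le_mul (q5.trans hNx) qv (abs_nonneg _) (by positivity)
    have e := heq p hp
    have B5 : |(b + o3 p) * vyy p| ≤ ((2 + a * M + N) * K + N * K + (1 + N) * M + N * V) * p.1 := by
      have e' : (b + o3 p) * vyy p = -((2 * p.1 - a * u p + o1 p) * uxx p) - o2 p * uxy p
        + (1 + o4 p) * u p - o5 p * v p := by linarith
      rw [e']
      rw [abs_le] at B1 B2 B3 B4 ⊢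
      constructor <;> linarith [B1.1, B1.2, B2.1, B2.2, B3.1, B3.2, B4.1, B4.2]
    have hb3 : b / 2 ≤ b + o3 p := by linarith [(abs_le.1 q3).1]
    rw [abs_mul, abs_of_pos (by linarith : 0 < b + o3 p)] at B5
    have B6 := (mul_le_mul_of_nonneg_right hb3 (abs_nonneg (vyy p))).trans B5
    have B7 := mul_le_mul_of_nonneg_left B6 (by positivity : 0 ≤ 2 / b)
    calc |vyy p| = 2 / b * (b / 2 * |vyy p|) := by field_simp
      _ ≤ _ := B7
      _ = C1 * p.1 := by rw [hC1]; ring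
  -- 4. refined bound on v
  set C2 := C0 + C1 with hC2
  have hC20 : 0 ≤ C2 := by positivity
  have hv3 : ∀ t x y, 0 < t → t ≤ 1 → N * t ^ 2 ≤ b / 2 → (x, y) ∈ Q → x ≤ t ^ 2 → t < y →
      |v (x, y)| ≤ C2 * t ^ 3 := by
    intro t x y t0 t1 tN hp hxt hty
    obtain ⟨x0, x1, y1, y2⟩ := (mQ x y).1 hp
    have ht21 : t ^ 2 ≤ 1 := pow_le_one₀ t0.le t1
    have hin : ∀ w ∈ Icc (y - t) y, (x, w) ∈ Q := fun w hw =>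
      (mQ _ _).2 ⟨x0, x1, by linarith [hw.1], by linarith [hw.2]⟩
    obtain ⟨η, hη, hs⟩ := exists_hasDerivAt_eq_slope (fun y => ψ (x, y)) (fun y => v (x, y))
      (by linarith : y - t < y)
      (fun w hw => (dV _ _ _ _ _ (hψ _ (hin w hw))).continuousAt.continuousWithinAt)
      (fun w hw => dV _ _ _ _ _ (hψ _ (hin w ⟨hw.1.le, hw.2.le⟩)))
    have hxx2 : x ^ 2 ≤ t ^ 4 := by
      have := pow_le_pow_left₀ x0.le hxt 2
      linarith [(by ring : (t ^ 2) ^ 2 = t ^ 4)]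
    have e1 : |v (x, η)| ≤ C0 * t ^ 3 := by
      rw [hs, abs_div, abs_of_pos (by linarith : 0 < y - (y - t)), div_le_iff₀ (by linarith)]
      have p1 := hpos _ hp
      have p2 := hpos _ (hin (y - t) ⟨le_rfl, by linarith⟩)
      have p3 := hψb _ _ hp
      have p4 := hψb _ _ (hin (y - t) ⟨le_rfl, by linarith⟩)
      have p5 := mul_le_mul_of_nonneg_left hxx2 hC00
      have p6 : C0 * t ^ 3 * (y - (y - t)) = C0 * t ^ 4 := by ring
      rw [p6, abs_le]
      constructor <;> linarith
    have e2 := mvt_bd (g := fun y => v (x, y)) (g' := fun y => vyy (x, y)) (B := C1 * t ^ 2)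
      hη.2.le
      (fun w hw => (dV _ _ _ _ _ (hv _ (hin w ⟨by linarith [hη.1, hw.1], hw.2⟩))).continuousAt.continuousWithinAt)
      (fun w hw => dV _ _ _ _ _ (hv _ (hin w ⟨by linarith [hη.1, hw.1], hw.2.le⟩)))
      (fun w hw => (hyy (x, w) (hin w ⟨by linarith [hη.1, hw.1], hw.2.le⟩) (by simp only; linarith)
        (le_trans (mul_le_mul_of_nonneg_left hxt hN.le) tN)).trans
          (mul_le_mul_of_nonneg_left hxt hC10))
    have e3 : C1 * t ^ 2 * (y - η) ≤ C1 * t ^ 2 * t :=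
      mul_le_mul_of_nonneg_left (by linarith [hη.1]) (by positivity)
    rw [abs_le] at *
    rw [hC2]
    have e4 : C1 * t ^ 2 * t = C1 * t ^ 3 := by ring
    constructor <;> linarith [e1.1, e1.2, e2.1, e2.2]
  set C3 := 1 / lam * (1 / lam * (C2 + K) + (C0 + K)) + K with hC3
  have hC30 : 0 ≤ C3 := by positivity
  refine ⟨C3 + F * C2 + C2 * (F + 1), min (min 1 (f 0 / 3)) (min ε₀ (b / (2 * N))),
    lt_min (lt_min one_pos (by positivity)) (lt_min hε₀ (by positivity)), fun t t0 ht => ?_⟩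
  simp only [lt_min_iff] at ht
  obtain ⟨⟨t1, tf⟩, tε, tb⟩ := ht
  have ht2t : t ^ 2 ≤ t := by rw [sq]; exact mul_le_of_le_one_right t0.le t1.le
  have ht43 : t ^ 4 ≤ t ^ 3 := pow_le_pow_of_le_one t0.le t1.le (by norm_num)
  have ht42 : t ^ 4 ≤ t ^ 2 := pow_le_pow_of_le_one t0.le t1.le (by norm_num)
  have hp4 : 0 < t ^ 4 := by positivity
  have hp2 : 0 < t ^ 2 := by positivity
  have hp3 : 0 < t ^ 3 := by positivity
  have ht2ε : t ^ 2 < ε₀ := by linarith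
  have tN : N * t ^ 2 ≤ b / 2 := by
    have : N * t < N * (b / (2 * N)) := mul_lt_mul_of_pos_left tb hN
    have e : N * (b / (2 * N)) = b / 2 := by field_simp
    have := mul_le_mul_of_nonneg_left ht2t hN.le
    linarith
  refine ⟨ht2ε, ?_⟩
  have hin : ∀ x, 0 < x → x ≤ t ^ 2 → (x, f x - t ^ 4) ∈ Q ∧ t < f x - t ^ 4 := by
    intro x x0 x1
    obtain ⟨g1, -⟩ := hfl x ⟨x0, by linarith⟩
    exact ⟨(mQ _ _).2 ⟨x0, by linarith, by linarith, by linarith⟩, by linarith⟩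
  have hder : ∀ x, 0 < x → x ≤ t ^ 2 → |v (x, f x - t ^ 4)| ≤ C2 * t ^ 3 ∧
      |u (x, f x - t ^ 4)| ≤ C3 * t ^ 3 := by
    intro x x0 x1
    obtain ⟨i1, i2⟩ := hin x x0 x1
    have hxε : x ∈ Ioo 0 ε₀ := ⟨x0, by linarith⟩
    obtain ⟨g1, -⟩ := hfl x hxε
    have hvv := hv3 t x _ t0 t1.le tN i1 x1 i2
    refine ⟨hvv, ?_⟩
    have hbd : (x, f x) ∈ closure Q := hcl _ _ x0.le hxε.2 (by linarith) le_rfl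
    have hd : dist ((x, f x) : ℝ × ℝ) (x, f x - t ^ 4) = t ^ 4 := by
      rw [dist_vert, sub_sub_cancel, abs_of_pos hp4]
    have l1 := hψL _ hbd _ (subset_closure i1)
    have l2 := huL _ hbd _ (subset_closure i1)
    have l3 := hvL _ hbd _ (subset_closure i1)
    rw [hd] at l1 l2 l3
    have k43 := mul_le_mul_of_nonneg_left ht43 hK
    have s1 : |v (x, f x)| ≤ (C2 + K) * t ^ 3 := by
      rw [abs_le] at *
      constructor <;> linarith [l3.1, l3.2, hvv.1, hvv.2]
    have s2 : |ψ (x, f x)| ≤ (C0 + K) * t ^ 3 := by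
      have p1 := hpos _ i1
      have p2 := hψb _ _ i1
      have hxx2 : x ^ 2 ≤ t ^ 3 := by
        have := pow_le_pow_left₀ x0.le x1 2
        linarith [(by ring : (t ^ 2) ^ 2 = t ^ 4)]
      have p3 := mul_le_mul_of_nonneg_left hxx2 hC00
      have p4 : 0 ≤ C0 * t ^ 3 := by positivity
      rw [abs_le] at *
      constructor <;> linarith [l1.1, l1.2]
    have s3 : |u (x, f x)| ≤ 1 / lam * (1 / lam * (C2 + K) + (C0 + K)) * t ^ 3 := by
      have b1 := hβ₁ x hxε
      have b2 := hβ₂ x hxε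
      have e := hbc x hxε
      have e1 : |β₂ (x, f x) * v (x, f x)| ≤ 1 / lam * ((C2 + K) * t ^ 3) := by
        rw [abs_mul]; exact mul_le_mul b2 s1 (abs_nonneg _) (by positivity)
      have e2 : |β₁ (x, f x) * u (x, f x)| ≤ (1 / lam * (C2 + K) + (C0 + K)) * t ^ 3 := by
        rw [abs_le] at e1 s2 ⊢
        constructor <;> linarith [e1.1, e1.2, s2.1, s2.2]
      rw [abs_mul, abs_of_pos (by linarith)] at e2
      have e3 := (mul_le_mul_of_nonneg_right b1 (abs_nonneg (u (x, f x)))).trans e2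
      have e4 := mul_le_mul_of_nonneg_left e3 (by positivity : 0 ≤ 1 / lam)
      calc |u (x, f x)| = 1 / lam * (lam * |u (x, f x)|) := by field_simp
        _ ≤ _ := e4
        _ = _ := by ring
    rw [hC3, add_mul]
    rw [abs_le] at l2 s3 ⊢
    constructor <;> linarith [l2.1, l2.2, s3.1, s3.2]
  -- 6. along the curve
  have hG := mvt_bd (g := fun x => ψ (x, f x - t ^ 4))
    (g' := fun x => u (x, f x - t ^ 4) * 1 + v (x, f x - t ^ 4) * f' x)
    (B := (C3 + F * C2) * t ^ 3) hp2.le ?_ ?_ ?_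
  rotate_left
  · refine hψc.comp (t := closure Q) ?_ ?_
    · exact continuousOn_id.prodMk ((hfc.mono (Icc_subset_Icc_right ht2ε.le)).sub continuousOn_const)
    · intro x hx
      rcases hx.1.eq_or_lt with h | h
      · rw [← h]; exact hcl _ _ le_rfl hε₀ (by linarith) (by linarith)
      · exact subset_closure (hin x h hx.2).1
  · intro x hx
    have d1 : HasDerivAt (fun x => f x - t ^ 4) (f' x) x :=
      (hfl x ⟨hx.1, hx.2.trans ht2ε⟩).2.2.1.sub_const _
    exact lf_curve (c1 := fun x => x) (c2 := fun x => f x - t ^ 4)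
      (hψ _ (hin x hx.1 hx.2.le).1) (hid x) d1
  · intro x hx
    obtain ⟨q1, q2⟩ := hder x hx.1 hx.2.le
    have q3 := (hfl x ⟨hx.1, hx.2.trans ht2ε⟩).2.2.2
    have q4 : |v (x, f x - t ^ 4) * f' x| ≤ C2 * t ^ 3 * F := by
      rw [abs_mul]; exact mul_le_mul q1 q3 (abs_nonneg _) (by positivity)
    simp only [mul_one]
    rw [abs_le] at q2 q4 ⊢
    constructor <;> linarith [q2.1, q2.2, q4.1, q4.2]
  simp only [hz (f 0 - t ^ 4) (by linarith) (by linarith), sub_zero] at hG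
  -- 7. vertical
  obtain ⟨g1, g2, -⟩ := hfl (t ^ 2) ⟨hp2, ht2ε⟩
  have f0Q : (t ^ 2, f 0) ∈ Q := (mQ _ _).2 ⟨hp2, ht2ε, hf0, g1⟩
  have hcQ := hin (t ^ 2) hp2 le_rfl
  have hvert : |ψ (t ^ 2, f 0) - ψ (t ^ 2, f (t ^ 2) - t ^ 4)| ≤ C2 * t ^ 3 * ((F + 1) * t ^ 2) := by
    have hB : ∀ w, t < w → w < f (t ^ 2) → |v (t ^ 2, w)| ≤ C2 * t ^ 3 := fun w w1 w2 =>
      hv3 t _ _ t0 t1.le tN ((mQ _ _).2 ⟨hp2, ht2ε, by linarith, w2⟩) le_rfl w1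
    have hFt : 0 ≤ F * t ^ 2 := by positivity
    rcases le_total (f 0) (f (t ^ 2) - t ^ 4) with h | h
    · have := vert _ _ _ (C2 * t ^ 3) f0Q hcQ.1 h
        (fun w w1 w2 => hB w (by linarith) (by linarith))
      rw [abs_sub_comm]
      exact this.trans (mul_le_mul_of_nonneg_left (by linarith) (by positivity))
    · have := vert _ _ _ (C2 * t ^ 3) hcQ.1 f0Q h
        (fun w w1 w2 => hB w (by linarith [hcQ.2]) (by linarith))
      exact this.trans (mul_le_mul_of_nonneg_left (by linarith) (by positivity))
  have r1 : (C3 + F * C2) * t ^ 3 * t ^ 2 = (C3 + F * C2) * t ^ 5 := by ring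
  have r2 : C2 * t ^ 3 * ((F + 1) * t ^ 2) = C2 * (F + 1) * t ^ 5 := by ring
  rw [r1] at hG
  rw [r2] at hvert
  rw [abs_le] at *
  constructor <;> linarith [hG.1, hG.2, hvert.1, hvert.2]

open Set Filter

lemma hasFDerivAt_lf {g : ℝ × ℝ → ℝ} {p : ℝ × ℝ} (h : DifferentiableAt ℝ g p) :
    HasFDerivAt g (lf (pd1 g p) (pd2 g p)) p ∧ pd1 g p = fderiv ℝ g p (1, 0) ∧
      pd2 g p = fderiv ℝ g p (0, 1) := by
  have h' := h.hasFDerivAt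
  have e1 : pd1 g p = fderiv ℝ g p (1, 0) := by
    have : HasDerivAt (fun x : ℝ => (x, p.2)) ((1:ℝ), (0:ℝ)) p.1 :=
      (hasDerivAt_id p.1).prodMk (hasDerivAt_const _ _)
    exact (HasFDerivAt.comp_hasDerivAt (f := fun x : ℝ => (x, p.2)) p.1 h' this).deriv
  have e2 : pd2 g p = fderiv ℝ g p (0, 1) := by
    have : HasDerivAt (fun y : ℝ => (p.1, y)) ((0:ℝ), (1:ℝ)) p.2 :=
      (hasDerivAt_const _ _).prodMk (hasDerivAt_id p.2)
    exact (HasFDerivAt.comp_hasDerivAt (f := fun y : ℝ => (p.1, y)) p.2 h' this).deriv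
  refine ⟨?_, e1, e2⟩
  refine h'.congr_fderiv ?_
  ext
  · simp [lf, e1]
  · simp [lf, e2]

lemma c2_facts {ψ : ℝ × ℝ → ℝ} {Q : Set (ℝ × ℝ)} (hQ : IsOpen Q) (h : ContDiffOn ℝ 2 ψ Q) :
    (∀ p ∈ Q, HasFDerivAt ψ (lf (pd1 ψ p) (pd2 ψ p)) p) ∧
    (∀ p ∈ Q, HasFDerivAt (pd1 ψ) (lf (pd1 (pd1 ψ) p) (pd2 (pd1 ψ) p)) p) ∧
    (∀ p ∈ Q, HasFDerivAt (pd2 ψ) (lf (pd2 (pd1 ψ) p) (pd2 (pd2 ψ) p)) p) ∧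
    ContinuousOn (pd1 (pd1 ψ)) Q := by
  have hd : ∀ p ∈ Q, DifferentiableAt ℝ ψ p := fun p hp =>
    (h.contDiffAt (hQ.mem_nhds hp)).differentiableAt (by norm_num)
  have hF : ContDiffOn ℝ 1 (fderiv ℝ ψ) Q := h.fderiv_of_isOpen hQ (by norm_num)
  have hFv : ∀ w : ℝ × ℝ, ContDiffOn ℝ 1 (fun p => fderiv ℝ ψ p w) Q := fun w =>
    hF.clm_apply contDiffOn_const
  have c1 : ContDiffOn ℝ 1 (pd1 ψ) Q := (hFv (1, 0)).congr fun p hp => (hasFDerivAt_lf (hd p hp)).2.1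
  have c2 : ContDiffOn ℝ 1 (pd2 ψ) Q := (hFv (0, 1)).congr fun p hp => (hasFDerivAt_lf (hd p hp)).2.2
  have d1 : ∀ p ∈ Q, DifferentiableAt ℝ (pd1 ψ) p := fun p hp =>
    (c1.contDiffAt (hQ.mem_nhds hp)).differentiableAt (by norm_num)
  have d2 : ∀ p ∈ Q, DifferentiableAt ℝ (pd2 ψ) p := fun p hp =>
    (c2.contDiffAt (hQ.mem_nhds hp)).differentiableAt (by norm_num)
  have dF : ∀ p ∈ Q, DifferentiableAt ℝ (fderiv ℝ ψ) p := fun p hp =>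
    (hF.contDiffAt (hQ.mem_nhds hp)).differentiableAt (by norm_num)
  have hsym : ∀ p ∈ Q, pd1 (pd2 ψ) p = pd2 (pd1 ψ) p := by
    intro p hp
    rw [(hasFDerivAt_lf (d2 p hp)).2.1, (hasFDerivAt_lf (d1 p hp)).2.2]
    have E1 : pd1 ψ =ᶠ[nhds p] fun p => fderiv ℝ ψ p (1, 0) := by
      filter_upwards [hQ.mem_nhds hp] with q hq using (hasFDerivAt_lf (hd q hq)).2.1
    have E2 : pd2 ψ =ᶠ[nhds p] fun p => fderiv ℝ ψ p (0, 1) := by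
      filter_upwards [hQ.mem_nhds hp] with q hq using (hasFDerivAt_lf (hd q hq)).2.2
    rw [E1.fderiv_eq, E2.fderiv_eq, fderiv_clm_apply (dF p hp) (by fun_prop),
      fderiv_clm_apply (dF p hp) (by fun_prop)]
    have := (h.contDiffAt (hQ.mem_nhds hp)).isSymmSndFDerivAt (by simp)
    simpa using this (1, 0) (0, 1)
  refine ⟨fun p hp => (hasFDerivAt_lf (hd p hp)).1, fun p hp => (hasFDerivAt_lf (d1 p hp)).1,
    fun p hp => ?_, ?_⟩
  · rw [← hsym p hp]; exact (hasFDerivAt_lf (d2 p hp)).1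
  · have : ContinuousOn (fun p => fderiv ℝ (pd1 ψ) p (1, 0)) Q :=
      (c1.continuousOn_fderiv_of_isOpen hQ (by norm_num)).clm_apply continuousOn_const
    exact this.congr fun p hp => (hasFDerivAt_lf (d1 p hp)).2.1

lemma zero_of_small {z C c : ℝ} (hc : 0 < c) (h : ∀ t ∈ Ioo 0 c, |z| ≤ C * t) : z = 0 := by
  have hl : Tendsto (fun t : ℝ => C * t) (nhdsWithin 0 (Ioi 0)) (nhds 0) := by
    have : ContinuousAt (fun t : ℝ => C * t) 0 := by fun_prop
    have h0 := this.tendsto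
    simp only [mul_zero] at h0
    exact h0.mono_left nhdsWithin_le_nhds
  have : |z| ≤ 0 := by
    refine ge_of_tendsto hl ?_
    filter_upwards [Ioo_mem_nhdsGT hc] with t ht using h t ht
  exact abs_nonpos_iff.1 this

lemma tendsto_of_box {z : ℕ → ℝ × ℝ} {c d : ℝ} 
    (h : ∀ m : ℕ, |(z m).1| ≤ d / (m + 2) ∧ |(z m).2 - c| ≤ d / (m + 2)) :
    Tendsto z atTop (nhds (0, c)) := by
  have hl : Tendsto (fun m : ℕ => d / ((m : ℝ) + 2)) atTop (nhds 0) :=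
    tendsto_const_nhds.div_atTop (tendsto_atTop_add_const_right _ _ tendsto_natCast_atTop_atTop)
  rw [tendsto_iff_dist_tendsto_zero]
  refine squeeze_zero (fun _ => dist_nonneg) (fun m => ?_) hl
  rw [Prod.dist_eq]
  refine max_le ?_ ?_
  · simpa [Real.dist_eq] using (h m).1
  · simpa [Real.dist_eq] using (h m).2

theorem stmt2
    (ε₀ a b ω lam N : ℝ)
    (hε₀ : 0 < ε₀) (ha : 0 < a) (hb : 0 < b) (hω : 0 < ω) (hlam : 0 < lam) (hN : 0 < N)
    (f f' : ℝ → ℝ)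
    (hf0 : 0 < f 0)
    (hfd : ∀ x ∈ Icc (0:ℝ) ε₀, HasDerivAt f (f' x) x)
    (hflip : ∃ K : NNReal, LipschitzOnWith K f (Icc (0:ℝ) ε₀) ∧
      LipschitzOnWith K f' (Icc (0:ℝ) ε₀))
    (hf'ω : ∀ x ∈ Icc (0:ℝ) ε₀, ω ≤ f' x)
    (O₁ O₂ O₃ O₄ O₅ : ℝ × ℝ → ℝ)
    (hO1s : ContDiffOn ℝ 1 O₁ (Dset ε₀ f))
    (hO2s : ContDiffOn ℝ 1 O₂ (Dset ε₀ f))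
    (hO3s : ContDiffOn ℝ 1 O₃ (Dset ε₀ f))
    (hO4s : ContDiffOn ℝ 1 O₄ (Dset ε₀ f))
    (hO5s : ContDiffOn ℝ 1 O₅ (Dset ε₀ f))
    (hO1b : ∀ p ∈ Dset ε₀ f, |O₁ p| ≤ N * p.1 ^ 2 ∧
      ‖fderivWithin ℝ O₁ (Dset ε₀ f) p‖ ≤ N * p.1)
    (hO2b : ∀ p ∈ Dset ε₀ f, |O₂ p| ≤ N * p.1 ∧
      ‖fderivWithin ℝ O₂ (Dset ε₀ f) p‖ ≤ N)
    (hO3b : ∀ p ∈ Dset ε₀ f, |O₃ p| ≤ N * p.1 ∧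
      ‖fderivWithin ℝ O₃ (Dset ε₀ f) p‖ ≤ N)
    (hO4b : ∀ p ∈ Dset ε₀ f, |O₄ p| ≤ N * p.1 ∧
      ‖fderivWithin ℝ O₄ (Dset ε₀ f) p‖ ≤ N)
    (hO5b : ∀ p ∈ Dset ε₀ f, |O₅ p| ≤ N * p.1 ∧
      ‖fderivWithin ℝ O₅ (Dset ε₀ f) p‖ ≤ N)
    (β₁ β₂ : ℝ × ℝ → ℝ)
    (hβ₁c : ContinuousOn β₁ (Gamf ε₀ f)) (hβ₂c : ContinuousOn β₂ (Gamf ε₀ f))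
    (hβ₁ : ∀ p ∈ Gamf ε₀ f, lam ≤ β₁ p)
    (hβ₂ : ∀ p ∈ Gamf ε₀ f, |β₂ p| ≤ 1 / lam)
    (ψ : ℝ × ℝ → ℝ)
    -- (i) ψ ∈ C²(Q) ∩ C^{1,1}(closure Q)
    (hψC2 : ContDiffOn ℝ 2 ψ (Qset ε₀ f))
    (hψC11 : ∃ K : NNReal, LipschitzOnWith K ψ (closure (Qset ε₀ f)) ∧
      LipschitzOnWith K (pd1 ψ) (closure (Qset ε₀ f)) ∧
      LipschitzOnWith K (pd2 ψ) (closure (Qset ε₀ f)))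
    -- (ii) ψ > 0 in Q
    (hψpos : ∀ p ∈ Qset ε₀ f, 0 < ψ p)
    -- (iii) −μ ≤ ψ_x/x ≤ (2−δ)/a in Q
    (hμδ : ∃ μ > (0:ℝ), ∃ δ ∈ Set.Ioo (0:ℝ) 1, ∀ p ∈ Qset ε₀ f,
      -μ ≤ pd1 ψ p / p.1 ∧ pd1 ψ p / p.1 ≤ (2 - δ) / a)
    -- (iv) the equation
    (heq : ∀ p ∈ Qset ε₀ f,
      (2 * p.1 - a * pd1 ψ p + O₁ p) * pd1 (pd1 ψ) p + O₂ p * pd2 (pd1 ψ) p +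
        (b + O₃ p) * pd2 (pd2 ψ) p - (1 + O₄ p) * pd1 ψ p + O₅ p * pd2 ψ p = 0)
    -- boundary conditions
    (hbc1 : ∀ p ∈ closure (Qset ε₀ f), p.1 = 0 → ψ p = 0)
    (hbc2 : ∀ p ∈ closure (Qset ε₀ f), p.2 = 0 → pd2 ψ p = 0)
    (hbc3 : ∀ p ∈ closure (Qset ε₀ f), p.2 = f p.1 →
      β₁ p * pd1 ψ p + β₂ p * pd2 ψ p + ψ p = 0) :
    (∃ z₁ z₂ : ℕ → ℝ × ℝ,
      (∀ m, z₁ m ∈ Qset ε₀ f) ∧ (∀ m, z₂ m ∈ Qset ε₀ f) ∧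
      Tendsto z₁ atTop (nhds ((0:ℝ), f 0)) ∧
      Tendsto z₂ atTop (nhds ((0:ℝ), f 0)) ∧
      Tendsto (fun m => pd1 (pd1 ψ) (z₁ m)) atTop (nhds (1 / a)) ∧
      Tendsto (fun m => pd1 (pd1 ψ) (z₂ m)) atTop (nhds 0)) ∧
    ¬ ∃ l : ℝ, Tendsto (pd1 (pd1 ψ)) (nhdsWithin ((0:ℝ), f 0) (Qset ε₀ f)) (nhds l) := by
  obtain ⟨Kf, hfL, -⟩ := hflip
  obtain ⟨K, hψL, huL, hvL⟩ := hψC11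
  obtain ⟨μ, hμ0, δ, hδ, hμδ⟩ := hμδ
  obtain ⟨Q, hQ⟩ : ∃ Q, Q = Qset ε₀ f := ⟨_, rfl⟩
  have hfcont : ContinuousOn f (Icc 0 ε₀) := fun x hx => (hfd x hx).continuousAt.continuousWithinAt
  have hmono : StrictMonoOn f (Icc 0 ε₀) := by
    refine strictMonoOn_of_deriv_pos (convex_Icc 0 ε₀) hfcont fun x hx => ?_
    have hx' := interior_subset hx
    rw [(hfd x hx').deriv]
    linarith [hf'ω x hx']
  have h0mem : (0:ℝ) ∈ Icc 0 ε₀ := ⟨le_rfl, hε₀.le⟩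
  have hfl : ∀ x ∈ Ioo 0 ε₀, f 0 < f x ∧ f x ≤ f 0 + Kf * x ∧ HasDerivAt f (f' x) x ∧
      |f' x| ≤ Kf := by
    intro x hx
    have hx' : x ∈ Icc 0 ε₀ := ⟨hx.1.le, hx.2.le⟩
    refine ⟨hmono h0mem hx' hx.1, ?_, hfd x hx', ?_⟩
    · have := hfL.dist_le_mul x hx' 0 h0mem
      rw [Real.dist_eq, Real.dist_eq, sub_zero, abs_of_pos hx.1] at this
      linarith [(abs_le.1 this).2]
    · have := (hfd x hx').hasFDerivAt.le_of_lipschitzOn (Icc_mem_nhds hx.1 hx.2) hfL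
      simpa using this
  have mQ : ∀ x y, (x, y) ∈ Q ↔ 0 < x ∧ x < ε₀ ∧ 0 < y ∧ y < f x := by
    intro x y; rw [hQ]; rfl
  have hopen : IsOpen Q := by
    rw [isOpen_iff_mem_nhds]
    rintro ⟨x, y⟩ hp
    obtain ⟨x0, x1, y1, y2⟩ := (mQ x y).1 hp
    have a1 : ∀ᶠ p : ℝ × ℝ in nhds (x, y), 0 < p.1 := continuousAt_fst.eventually (lt_mem_nhds x0)
    have a2 : ∀ᶠ p : ℝ × ℝ in nhds (x, y), p.1 < ε₀ := continuousAt_fst.eventually (gt_mem_nhds x1)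
    have a3 : ∀ᶠ p : ℝ × ℝ in nhds (x, y), 0 < p.2 := continuousAt_snd.eventually (lt_mem_nhds y1)
    have a4 : ∀ᶠ p : ℝ × ℝ in nhds (x, y), 0 < f p.1 - p.2 := by
      have hfx : ContinuousAt f x := (hfd x ⟨x0.le, x1.le⟩).continuousAt
      have : ContinuousAt (fun p : ℝ × ℝ => f p.1 - p.2) (x, y) :=
        (ContinuousAt.comp (g := f) (f := Prod.fst) hfx continuousAt_fst).sub continuousAt_snd
      exact this.eventually (lt_mem_nhds (by simp only; linarith))
    filter_upwards [a1, a2, a3, a4] with p b1 b2 b3 b4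
    exact (mQ p.1 p.2).2 ⟨b1, b2, b3, by linarith⟩
  have hcl : ∀ x y, 0 ≤ x → x < ε₀ → 0 ≤ y → y ≤ f x → (x, y) ∈ closure Q := by
    intro x y x0 x1 y0 y1
    have hfx : 0 < f x := hf0.trans_le (hmono.monotoneOn h0mem ⟨x0, x1.le⟩ x0)
    have hc : Tendsto (fun t : ℝ => (x + t * ((ε₀ - x) / 2), (1 - t) * y + t * (f x / 2)))
        (nhdsWithin 0 (Ioi 0)) (nhds (x, y)) := by
      have : ContinuousAt (fun t : ℝ =>
        (x + t * ((ε₀ - x) / 2), (1 - t) * y + t * (f x / 2))) 0 := by fun_prop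
      have h0 := this.tendsto
      simp only [zero_mul, add_zero, sub_zero, one_mul] at h0
      exact h0.mono_left nhdsWithin_le_nhds
    refine mem_closure_of_tendsto hc ?_
    filter_upwards [Ioo_mem_nhdsGT (one_pos : (0:ℝ) < 1)] with t ht
    have p1 : 0 < t * ((ε₀ - x) / 2) := mul_pos ht.1 (by linarith)
    have p2 : t * ((ε₀ - x) / 2) < 1 * (ε₀ - x) :=
      mul_lt_mul ht.2 (by linarith) (by linarith) (by norm_num)
    have p3 : 0 < t * (f x / 2) := mul_pos ht.1 (by linarith)
    have p4 : 0 ≤ (1 - t) * y := mul_nonneg (by linarith [ht.2]) y0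
    have p5 : (1 - t) * y ≤ (1 - t) * f x := mul_le_mul_of_nonneg_left y1 (by linarith [ht.2])
    have p6 : f x < f (x + t * ((ε₀ - x) / 2)) :=
      hmono ⟨x0, x1.le⟩ ⟨by linarith, by linarith⟩ (by linarith)
    exact (mQ _ _).2 ⟨by linarith, by linarith, by linarith, by linarith⟩
  rw [← hQ] at hψC2 hψL huL hvL hψpos hμδ heq hbc1 hbc2 hbc3 ⊢
  obtain ⟨hψd, hud, hvd, huxxc⟩ := c2_facts hopen hψC2
  have hK0 : (0:ℝ) ≤ K := K.2
  obtain ⟨M, hM⟩ : ∃ M, M = μ + 2 / a := ⟨_, rfl⟩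
  have hM0 : 0 ≤ M := by rw [hM]; positivity
  have hfst : ∀ p ∈ Q, 0 < p.1 := fun p hp => ((mQ p.1 p.2).1 hp).1
  have huM : ∀ p ∈ Q, |pd1 ψ p| ≤ M * p.1 := by
    intro p hp
    have hx := hfst p hp
    obtain ⟨q1, q2⟩ := hμδ p hp
    rw [le_div_iff₀ hx] at q1
    rw [div_le_iff₀ hx] at q2
    have q3 : (2 - δ) / a * p.1 ≤ 2 / a * p.1 := by
      gcongr; linarith [hδ.1]
    have q4 : 0 < μ * p.1 := by positivity
    have q5 : 0 < 2 / a * p.1 := by positivity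
    rw [hM, abs_le]
    constructor <;> linarith
  have lipabs : ∀ g : ℝ × ℝ → ℝ, LipschitzOnWith K g (closure Q) →
      ∀ p ∈ closure Q, ∀ q ∈ closure Q, |g p - g q| ≤ K * dist p q := fun g hg p hp q hq => by
    have := hg.dist_le_mul p hp q hq
    rwa [Real.dist_eq] at this
  have lipd : ∀ g : ℝ × ℝ → ℝ, LipschitzOnWith K g (closure Q) → ∀ p ∈ Q, ∀ α β : ℝ,
      HasFDerivAt g (lf α β) p → |α| ≤ K ∧ |β| ≤ K := by
    intro g hg p hp α β h
    have hn := h.le_of_lipschitzOn (mem_of_superset (hopen.mem_nhds hp) subset_closure) hg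
    have e1 := (lf α β).le_of_opNorm_le hn (1, 0)
    have e2 := (lf α β).le_of_opNorm_le hn (0, 1)
    simp only [lf_apply] at e1 e2
    simpa [Prod.norm_def] using And.intro e1 e2
  have hlineQ : ∀ x y, 0 < x → x < ε₀ → 0 < y → y ≤ f 0 → (x, y) ∈ Q := fun x y x0 x1 y0 y1 =>
    (mQ _ _).2 ⟨x0, x1, y0, y1.trans_lt (hfl x ⟨x0, x1⟩).1⟩
  have hz : ∀ y, 0 < y → y ≤ f 0 → ψ (0, y) = 0 := fun y y0 y1 =>
    hbc1 _ (hcl _ _ le_rfl hε₀ y0.le y1) rfl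
  have huz : ∀ y, 0 < y → y ≤ f 0 → pd1 ψ (0, y) = 0 := by
    intro y y0 y1
    refine zero_of_small (C := K + M) hε₀ fun t ht => ?_
    have hq := hlineQ t y ht.1 ht.2 y0 y1
    have e1 := lipabs _ huL _ (hcl 0 y le_rfl hε₀ y0.le y1) _ (subset_closure hq)
    have e2 := huM _ hq
    have e3 : dist ((0, y) : ℝ × ℝ) (t, y) = t := by
      simp [Prod.dist_eq, Real.dist_eq, abs_of_pos ht.1, ht.1.le]
    rw [e3] at e1
    rw [abs_le] at *
    constructor <;> linarith [e1.1, e1.2, e2.1, e2.2]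
  have hvz1 : ∀ y, 0 < y → y < f 0 → pd2 ψ (0, y) = 0 := by
    intro y y0 y1
    have : (fun y => ψ (0, y)) =ᶠ[nhds y] fun _ => 0 := by
      filter_upwards [Ioo_mem_nhds y0 y1] with w hw using hz w hw.1 hw.2.le
    show deriv (fun y => ψ (0, y)) y = 0
    rw [this.deriv_eq]; simp
  have hvz : ∀ y, 0 < y → y ≤ f 0 → pd2 ψ (0, y) = 0 := by
    intro y y0 y1
    rcases y1.lt_or_eq with h | h
    · exact hvz1 y y0 h
    · refine zero_of_small (C := K) y0 fun t ht => ?_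
      have e1 := lipabs _ hvL _ (hcl 0 y le_rfl hε₀ y0.le y1) _
        (hcl 0 (y - t) le_rfl hε₀ (by linarith [ht.2]) (by linarith [ht.1]))
      rwa [hvz1 (y - t) (by linarith [ht.2]) (by linarith [ht.1]), dist_vert, sub_zero,
        sub_sub_cancel, abs_of_pos ht.1] at e1
  have hQD : ∀ p ∈ Q, p ∈ Dset ε₀ f := fun p hp => by
    refine ⟨?_, hfst p hp⟩
    rw [← hQ]; exact subset_closure hp
  have hGam : ∀ x ∈ Ioo 0 ε₀, (x, f x) ∈ Gamf ε₀ f := fun x hx => ⟨x, ⟨hx.1.le, hx.2.le⟩, rfl⟩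
  obtain ⟨C, t0, ht0, hB⟩ := B_bound (ε₀ := ε₀) (a := a) (b := b) (lam := lam) (N := N) (K := K)
    (M := M) (F := Kf) (f := f) (f' := f') hε₀ ha hb hlam hN hf0 hK0 hM0 Kf.2 hfl hfcont hQ hcl hψd
    hud hvd (lipabs _ hψL) (lipabs _ huL) (lipabs _ hvL) hψL.continuousOn
    (fun p hp => (lipd _ huL p hp _ _ (hud p hp)).1)
    (fun p hp => (lipd _ huL p hp _ _ (hud p hp)).2) hψpos huM
    (fun p hp => (hO1b p (hQD p hp)).1) (fun p hp => (hO2b p (hQD p hp)).1)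
    (fun p hp => (hO3b p (hQD p hp)).1) (fun p hp => (hO4b p (hQD p hp)).1)
    (fun p hp => (hO5b p (hQD p hp)).1) heq hz hvz (fun x hx => hβ₁ _ (hGam x hx))
    (fun x hx => hβ₂ _ (hGam x hx))
    (fun x hx => hbc3 _ (hcl _ _ hx.1.le hx.2 (by linarith [(hfl x hx).1]) le_rfl) rfl)
  -- horizontal calculus
  have dH : ∀ g gx gy x y, HasFDerivAt g (lf gx gy) (x, y) →
      HasDerivAt (fun x => g (x, y)) gx x := by
    intro g gx gy x y h
    have := lf_curve (c1 := fun t => t) (c2 := fun _ => y) h (hasDerivAt_id x) (hasDerivAt_const x y)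
    simpa using this
  have hcH : ∀ g : ℝ × ℝ → ℝ, ContinuousOn g (closure Q) → ∀ x y, x < ε₀ → 0 < y → y ≤ f 0 →
      ContinuousOn (fun x => g (x, y)) (Icc 0 x) := by
    intro g hg x y x1 y0 y1
    refine hg.comp (by fun_prop) fun z hz' => ?_
    exact hcl _ _ hz'.1 (hz'.2.trans_lt x1) y0.le
      (y1.trans (hmono.monotoneOn h0mem ⟨hz'.1, hz'.2.trans x1.le⟩ hz'.1))
  have mvtu : ∀ x y, 0 < x → x < ε₀ → 0 < y → y ≤ f 0 →
      ∃ ξ ∈ Ioo 0 x, pd1 ψ (x, y) = pd1 (pd1 ψ) (ξ, y) * x := by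
    intro x y x0 x1 y0 y1
    obtain ⟨ξ, hξ, e⟩ := exists_hasDerivAt_eq_slope (fun x => pd1 ψ (x, y))
      (fun x => pd1 (pd1 ψ) (x, y)) x0 (hcH _ huL.continuousOn x y x1 y0 y1)
      (fun z hz' => dH _ _ _ _ _ (hud _ (hlineQ z y hz'.1 (hz'.2.trans x1) y0 y1)))
    refine ⟨ξ, hξ, ?_⟩
    rw [huz y y0 y1, sub_zero, sub_zero, eq_div_iff x0.ne'] at e
    exact e.symm
  have ptB : ∀ ε > 0, ∀ r > 0, ∃ ξ, 0 < ξ ∧ ξ < r ∧ ξ < ε₀ ∧ |pd1 (pd1 ψ) (ξ, f 0)| < ε := by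
    intro ε hε r hr
    obtain ⟨t, htp, ht1, ht2, ht3⟩ : ∃ t > 0, t < t0 ∧ t ^ 2 < r ∧ 2 * C * t < ε := by
      have ev : ∀ (F : ℝ → ℝ) (c : ℝ), Continuous F → F 0 < c →
          ∀ᶠ x in nhdsWithin (0:ℝ) (Ioi 0), F x < c := fun F c hF h0 =>
        (hF.continuousAt.tendsto.eventually (gt_mem_nhds h0)).filter_mono nhdsWithin_le_nhds
      have e1 := ev (fun x => x) t0 (by fun_prop) ht0
      have e2 := ev (fun x => x ^ 2) r (by fun_prop) (by simpa)
      have e3 := ev (fun x => 2 * C * x) ε (by fun_prop) (by simpa)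
      obtain ⟨x, hx, h⟩ := ((e1.and (e2.and e3)).and
        self_mem_nhdsWithin).exists.imp fun x hx => And.intro hx.2 hx.1
      exact ⟨x, hx, h⟩
    obtain ⟨b1, b2⟩ := hB t htp ht1
    have hp2 : 0 < t ^ 2 := by positivity
    obtain ⟨ξ, hξ, e⟩ := exists_ratio_hasDerivAt_eq_ratio_slope (fun x => ψ (x, f 0))
      (fun x => pd1 ψ (x, f 0)) hp2 (hcH _ hψL.continuousOn (t ^ 2) (f 0) b1 hf0 le_rfl)
      (fun z hz' => dH _ _ _ _ _ (hψd _ (hlineQ z _ hz'.1 (hz'.2.trans b1) hf0 le_rfl)))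
      (fun x => x ^ 2) (fun x => 2 * x) (by fun_prop)
      (fun z _ => by simpa using hasDerivAt_pow 2 z)
    obtain ⟨η, hη, e2⟩ := mvtu ξ (f 0) hξ.1 (hξ.2.trans b1) hf0 le_rfl
    refine ⟨η, hη.1, by linarith [hη.2, hξ.2], by linarith [hη.2, hξ.2], ?_⟩
    simp only [hz (f 0) hf0 le_rfl] at e
    rw [e2] at e
    have e3 : t ^ 4 * pd1 (pd1 ψ) (η, f 0) = 2 * ψ (t ^ 2, f 0) := by
      have := hξ.1.ne'
      apply mul_right_cancel₀ this
      linear_combination e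
    have e4 : t ^ 4 * |pd1 (pd1 ψ) (η, f 0)| ≤ t ^ 4 * (2 * C * t) := by
      have : t ^ 4 * |pd1 (pd1 ψ) (η, f 0)| = 2 * |ψ (t ^ 2, f 0)| := by
        rw [← abs_of_pos (by positivity : 0 < t ^ 4), ← abs_mul,
          e3, abs_mul]; norm_num
      rw [this]
      linarith [(by ring : t ^ 4 * (2 * C * t) = 2 * (C * t ^ 5))]
    exact (le_of_mul_le_mul_left e4 (by positivity)).trans_lt ht3
  have ptA : ∀ k, a * k < 1 → ∀ r > 0, r ≤ ε₀ → r ≤ f 0 →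
      ∃ x y, 0 < x ∧ x < r ∧ f 0 - r < y ∧ y < f 0 ∧ k < pd1 (pd1 ψ) (x, y) := by
    intro k hk r hr hrε hrf
    by_contra! hcon
    obtain ⟨R, hR⟩ : ∃ R : Set (ℝ × ℝ),
      R = {p | 0 < p.1 ∧ p.1 < r / 2 ∧ |p.2 - (f 0 - r / 2)| < r / 2} := ⟨_, rfl⟩
    have hRm : ∀ p ∈ R, 0 < p.1 ∧ p.1 < r / 2 ∧ f 0 - r < p.2 ∧ p.2 < f 0 := by
      intro p hp
      rw [hR] at hp
      obtain ⟨q1, q2, q3⟩ := hp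
      rw [abs_lt] at q3
      exact ⟨q1, q2, by linarith [q3.1], by linarith [q3.2]⟩
    have hRQ : ∀ p ∈ R, p ∈ Q := by
      intro p hp
      obtain ⟨q1, q2, q3, q4⟩ := hRm p hp
      exact hlineQ p.1 p.2 q1 (by linarith) (by linarith) q4.le
    refine A_contra (a := a) (b := b) (N := N) (k := k) (M := M) (r := r / 2) (y0 := f 0 - r / 2)
      ha hb hN (by linarith) hk hR (fun p hp => hψd p (hRQ p hp)) (fun p hp => hud p (hRQ p hp))
      (fun p hp => hvd p (hRQ p hp)) (fun p hp => hψpos p (hRQ p hp)) ?_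
      (fun p hp => (hO1b p (hQD p (hRQ p hp))).1) (fun p hp => (hO2b p (hQD p (hRQ p hp))).1)
      (fun p hp => (hO3b p (hQD p (hRQ p hp))).1) (fun p hp => (hO4b p (hQD p (hRQ p hp))).1)
      (fun p hp => (hO5b p (hQD p (hRQ p hp))).1) (fun p hp => heq p (hRQ p hp)) ?_ ?_ ?_
    · intro p hp
      obtain ⟨q1, q2, q3, q4⟩ := hRm p hp
      obtain ⟨ξ, hξ, e⟩ := mvtu p.1 p.2 q1 (by linarith) (by linarith) q4.le
      have := hcon ξ p.2 hξ.1 (by linarith [hξ.2]) q3 q4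
      rw [e]
      exact mul_le_mul_of_nonneg_right this q1.le
    · refine hψL.continuousOn.mono ?_
      rintro ⟨x, y⟩ ⟨q1, q2, q3⟩
      simp only at q1 q2 q3
      rw [abs_lt] at q3
      have : f 0 ≤ f x := hmono.monotoneOn h0mem ⟨q1, by linarith⟩ q1
      exact hcl x y q1 (by linarith) (by linarith [q3.1]) (by linarith [q3.2])
    · intro y hy
      rw [abs_lt] at hy
      exact hz y (by linarith [hy.1]) (by linarith [hy.2])
    · intro p hp
      obtain ⟨q1, q2, q3, q4⟩ := hRm p hp
      have := mvt_bd (g := fun x => ψ (x, p.2)) (g' := fun x => pd1 ψ (x, p.2)) (B := M * p.1) q1.le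
        (hcH _ hψL.continuousOn p.1 p.2 (by linarith) (by linarith) q4.le)
        (fun z hz' => dH _ _ _ _ _
          (hψd _ (hlineQ z _ hz'.1 (by linarith [hz'.2]) (by linarith) q4.le)))
        (fun z hz' => (huM _ (hlineQ z _ hz'.1 (by linarith [hz'.2]) (by linarith) q4.le)).trans
          (mul_le_mul_of_nonneg_left hz'.2.le hM0))
      simp only [hz p.2 (by linarith) q4.le, sub_zero] at this
      have h9 := (abs_le.1 this).2
      linarith [sq p.1]
  -- points where ψ_xx takes a prescribed value
  have ptC : ∀ k, 0 < k → a * k < 1 → ∀ r > 0, r ≤ ε₀ → r ≤ f 0 →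
      ∃ p : ℝ × ℝ, 0 < p.1 ∧ p.1 < r ∧ f 0 - r < p.2 ∧ p.2 ≤ f 0 ∧ pd1 (pd1 ψ) p = k := by
    intro k hk0 hk r hr hrε hrf
    obtain ⟨x, y, x0, x1, y0, y1, hlt⟩ := ptA k hk r hr hrε hrf
    obtain ⟨ξ, ξ0, ξ1, -, hξ⟩ := ptB k hk0 r hr
    have hconv : IsPreconnected (Ioo 0 r ×ˢ Ioc (f 0 - r) (f 0)) :=
      ((convex_Ioo 0 r).prod (convex_Ioc (f 0 - r) (f 0))).isPreconnected
    have hsub : Ioo 0 r ×ˢ Ioc (f 0 - r) (f 0) ⊆ Q := fun p hp =>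
      hlineQ p.1 p.2 hp.1.1 (by linarith [hp.1.2]) (by linarith [hp.2.1]) hp.2.2
    have := hconv.intermediate_value (a := (ξ, f 0)) (b := (x, y))
      ⟨⟨ξ0, ξ1⟩, ⟨by simp only; linarith, le_rfl⟩⟩ ⟨⟨x0, x1⟩, ⟨y0, y1.le⟩⟩ (huxxc.mono hsub)
    obtain ⟨p, hp, e⟩ := this ⟨(abs_lt.1 hξ).2.le, hlt.le⟩
    exact ⟨p, hp.1.1, hp.1.2, hp.2.1, hp.2.2, e⟩
  obtain ⟨d, hd⟩ : ∃ d, d = min ε₀ (f 0) := ⟨_, rfl⟩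
  have hd0 : 0 < d := by rw [hd]; exact lt_min hε₀ hf0
  have hdε : d ≤ ε₀ := by rw [hd]; exact min_le_left _ _
  have hdf : d ≤ f 0 := by rw [hd]; exact min_le_right _ _
  have hm2 : ∀ m : ℕ, (2:ℝ) ≤ (m:ℝ) + 2 := fun m => by
    have : (0:ℝ) ≤ m := Nat.cast_nonneg m
    linarith
  have hrm : ∀ m : ℕ, 0 < d / ((m:ℝ) + 2) ∧ d / ((m:ℝ) + 2) ≤ d := fun m => by
    have := hm2 m
    exact ⟨by positivity, div_le_self hd0.le (by linarith)⟩
  have hinv : ∀ m : ℕ, 0 < 1 / ((m:ℝ) + 2) ∧ 1 / ((m:ℝ) + 2) < 1 := fun m => by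
    have := hm2 m
    exact ⟨by positivity, by rw [div_lt_one (by linarith)]; linarith⟩
  have hl : Tendsto (fun m : ℕ => 1 / ((m : ℝ) + 2)) atTop (nhds 0) :=
    tendsto_const_nhds.div_atTop (tendsto_atTop_add_const_right _ _ tendsto_natCast_atTop_atTop)
  have hz1 : ∀ m : ℕ, ∃ p : ℝ × ℝ, 0 < p.1 ∧ p.1 < d / ((m:ℝ) + 2) ∧ f 0 - d / ((m:ℝ) + 2) < p.2 ∧
      p.2 ≤ f 0 ∧ pd1 (pd1 ψ) p = (1 - 1 / ((m:ℝ) + 2)) / a := fun m =>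
    ptC _ (div_pos (by linarith [(hinv m).2]) ha)
      (by rw [mul_div_cancel₀ _ ha.ne']; linarith [(hinv m).1]) _ (hrm m).1
      ((hrm m).2.trans hdε) ((hrm m).2.trans hdf)
  choose z₁ a1 a2 a3 a4 a5 using hz1
  choose ξ b1 b2 b3 b4 using fun m : ℕ => ptB (1 / ((m:ℝ) + 2)) (hinv m).1 _ (hrm m).1
  have main : ∃ z₁ z₂ : ℕ → ℝ × ℝ,
      (∀ m, z₁ m ∈ Q) ∧ (∀ m, z₂ m ∈ Q) ∧
      Tendsto z₁ atTop (nhds ((0:ℝ), f 0)) ∧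
      Tendsto z₂ atTop (nhds ((0:ℝ), f 0)) ∧
      Tendsto (fun m => pd1 (pd1 ψ) (z₁ m)) atTop (nhds (1 / a)) ∧
      Tendsto (fun m => pd1 (pd1 ψ) (z₂ m)) atTop (nhds 0) := by
    refine ⟨z₁, fun m => (ξ m, f 0), fun m => ?_, fun m => ?_, ?_, ?_, ?_, ?_⟩
    · exact hlineQ (z₁ m).1 (z₁ m).2 (a1 m) (by linarith [a2 m, (hrm m).2])
        (by linarith [a3 m, (hrm m).2]) (a4 m)
    · exact hlineQ _ _ (b1 m) (b3 m) hf0 le_rfl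
    · refine tendsto_of_box (d := d) fun m => ⟨?_, ?_⟩
      · rw [abs_of_pos (a1 m)]; exact (a2 m).le
      · rw [abs_le]; constructor <;> linarith [a3 m, a4 m, (hrm m).1]
    · refine tendsto_of_box (d := d) fun m => ⟨?_, ?_⟩
      · simp only; rw [abs_of_pos (b1 m)]; exact (b2 m).le
      · simp only [sub_self, abs_zero]; exact (hrm m).1.le
    · simp only [a5]
      have := (hl.const_sub 1).div_const a
      simpa using this
    · exact squeeze_zero_norm (fun m => by rw [Real.norm_eq_abs]; exact (b4 m).le) hl
  refine ⟨main, ?_⟩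
  rintro ⟨l, hlim⟩
  obtain ⟨w₁, w₂, c1, c2, c3, c4, c5, c6⟩ := main
  have t1 : Tendsto w₁ atTop (nhdsWithin ((0:ℝ), f 0) Q) :=
    tendsto_nhdsWithin_iff.2 ⟨c3, Eventually.of_forall c1⟩
  have t2 : Tendsto w₂ atTop (nhdsWithin ((0:ℝ), f 0) Q) :=
    tendsto_nhdsWithin_iff.2 ⟨c4, Eventually.of_forall c2⟩
  have u1 := tendsto_nhds_unique (hlim.comp t1) c5
  have u2 := tendsto_nhds_unique (hlim.comp t2) c6
  have : 0 < 1 / a := by positivity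
  linarith
end

section
/- Let (ū₁, Ē) : [0,T) → ℝ² be continuously differentiable with ū₁(x₁) > 0 for all x₁ ∈ [0,T), (ū₁, Ē)(0) = (u₀, E₀), and suppose that for all x₁ ∈ [0,T): (ū₁(x₁)^{γ+1} − u_s^{γ+1})·ū₁'(x₁) = Ē(x₁)·ū₁(x₁)^γ and Ē'(x₁) = J/ū₁(x₁) − ρ̄^{in}. Then ½ Ē(x₁)² − H(ū₁(x₁)) = ½ E₀² − H(u₀) for all x₁ ∈ [0,T). -/
open Set Filter intervalIntegral

/-- The sonic speed `u_s = (γ S₀ J^{γ−1})^{1/(γ+1)}`. -/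
noncomputable def usonic (γ S₀ J : ℝ) : ℝ :=
  (γ * S₀ * J ^ (γ - 1)) ^ (1 / (γ + 1))

/-- `ū^{in} = J / ρ̄^{in}`. -/
noncomputable def uIn (ρin J : ℝ) : ℝ := J / ρin

/-- `H(u) = (J/ū^{in}) ∫_{u_s}^{u} t^{−(γ+1)} (t^{γ+1} − u_s^{γ+1})(ū^{in} − t) dt`. -/
noncomputable def Hfun (γ ρin S₀ J : ℝ) (u : ℝ) : ℝ :=
  (J / uIn ρin J) *
    ∫ t in usonic γ S₀ J..u,
      t ^ (-(γ + 1)) * ((t ^ (γ + 1) - usonic γ S₀ J ^ (γ + 1)) * (uIn ρin J - t))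

/-- The critical trajectory `T = {(u,E) ∈ (0,∞) × ℝ : ½E² − H(u) = 0}`. -/
def critTraj (γ ρin S₀ J : ℝ) : Set (ℝ × ℝ) :=
  {p | 0 < p.1 ∧ p.2 ^ 2 / 2 - Hfun γ ρin S₀ J p.1 = 0}

/-- The critical trajectory with acceleration. -/
def critTrajAcc (γ ρin S₀ J : ℝ) : Set (ℝ × ℝ) :=
  {p ∈ critTraj γ ρin S₀ J | 0 ≤ (p.1 - usonic γ S₀ J) * p.2}

/-- The critical trajectory with deceleration. -/
def critTrajDec (γ ρin S₀ J : ℝ) : Set (ℝ × ℝ) :=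
  {p ∈ critTraj γ ρin S₀ J | (p.1 - usonic γ S₀ J) * p.2 ≤ 0}
theorem usonic_pos_aux {γ S₀ J : ℝ} (hγ : 1 < γ) (hS₀ : 0 < S₀) (hJ : 0 < J) :
    0 < usonic γ S₀ J := by
  unfold usonic
  have : 0 < γ := by linarith
  positivity

theorem Hfun_deriv_aux {γ ρin S₀ J v : ℝ} (hγ : 1 < γ) (hS₀ : 0 < S₀) (hJ : 0 < J) (hv : 0 < v) :
    HasDerivAt (Hfun γ ρin S₀ J) ((J / uIn ρin J) * (v ^ (-(γ + 1)) *
      ((v ^ (γ + 1) - usonic γ S₀ J ^ (γ + 1)) * (uIn ρin J - v)))) v := by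
  have hs := usonic_pos_aux hγ hS₀ hJ
  have hc : ContinuousOn (fun t : ℝ => t ^ (-(γ + 1)) *
      ((t ^ (γ + 1) - usonic γ S₀ J ^ (γ + 1)) * (uIn ρin J - t))) (Ioi 0) := by
    intro t ht
    have ht0 : t ≠ 0 := ne_of_gt ht
    apply ContinuousAt.continuousWithinAt
    refine (Real.continuousAt_rpow_const t _ (Or.inl ht0)).mul
      (((Real.continuousAt_rpow_const t _ (Or.inl ht0)).sub continuousAt_const).mul
        (continuousAt_const.sub continuousAt_id))
  unfold Hfun
  apply HasDerivAt.const_mul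
  apply intervalIntegral.integral_hasDerivAt_right
  · apply ContinuousOn.intervalIntegrable
    apply hc.mono
    intro t ht
    exact lt_of_lt_of_le (lt_min hs hv) ht.1
  · exact hc.stronglyMeasurableAtFilter isOpen_Ioi v hv
  · exact hc.continuousAt (isOpen_Ioi.mem_nhds hv)

/-- Conservation of `½Ē² − H(ū₁)` along `C¹` solutions of the one-dimensional steady
Euler–Poisson ODE system (in the multiplied form valid at the sonic value). -/
theorem stmt5
    (γ ρin S₀ J u₀ E₀ T : ℝ)
    (hγ : 1 < γ) (hρin : 0 < ρin) (hS₀ : 0 < S₀) (hJ : 0 < J)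
    (hu₀ : 0 < u₀) (hT : 0 < T)
    (u E u' E' : ℝ → ℝ)
    (hupos : ∀ x ∈ Ico (0:ℝ) T, 0 < u x)
    (hu0 : u 0 = u₀) (hE0 : E 0 = E₀)
    (hud : ∀ x ∈ Ico (0:ℝ) T, HasDerivWithinAt u (u' x) (Ico (0:ℝ) T) x)
    (hEd : ∀ x ∈ Ico (0:ℝ) T, HasDerivWithinAt E (E' x) (Ico (0:ℝ) T) x)
    (hu'c : ContinuousOn u' (Ico (0:ℝ) T))
    (hE'c : ContinuousOn E' (Ico (0:ℝ) T))
    (hODE1 : ∀ x ∈ Ico (0:ℝ) T,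
      (u x ^ (γ + 1) - usonic γ S₀ J ^ (γ + 1)) * u' x = E x * u x ^ γ)
    (hODE2 : ∀ x ∈ Ico (0:ℝ) T, E' x = J / u x - ρin) :
    ∀ x ∈ Ico (0:ℝ) T,
      E x ^ 2 / 2 - Hfun γ ρin S₀ J (u x) = E₀ ^ 2 / 2 - Hfun γ ρin S₀ J u₀ := by
  intro x hx
  have hsub : Icc 0 x ⊆ Ico (0:ℝ) T := fun y hy => ⟨hy.1, lt_of_le_of_lt hy.2 hx.2⟩
  have hd : ∀ y ∈ Ico (0:ℝ) T, HasDerivWithinAt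
      (fun y => E y ^ 2 / 2 - Hfun γ ρin S₀ J (u y)) 0 (Ico (0:ℝ) T) y := by
    intro y hy
    have hp := hupos y hy
    have h1 := (((hEd y hy).pow 2).div_const 2).sub
      ((Hfun_deriv_aux (ρin := ρin) hγ hS₀ hJ hp).comp_hasDerivWithinAt y (hud y hy))
    refine h1.congr_deriv ?_
    have e1 := hODE1 y hy
    have e3 : u y ^ (-(γ + 1)) * u y ^ γ = (u y)⁻¹ := by
      rw [← Real.rpow_add hp, ← Real.rpow_neg_one]
      congr 1
      ring
    have e4 : (J / uIn ρin J) * (u y ^ (-(γ + 1)) *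
        ((u y ^ (γ + 1) - usonic γ S₀ J ^ (γ + 1)) * (uIn ρin J - u y))) * u' y
        = (J / uIn ρin J) * (uIn ρin J - u y) * E y * (u y)⁻¹ := by
      rw [← e3]
      linear_combination (J / uIn ρin J) * (uIn ρin J - u y) * u y ^ (-(γ + 1)) * e1
    rw [e4, hODE2 y hy]
    unfold uIn
    field_simp
    simp
  have hcst := constant_of_has_deriv_right_zero (a := 0) (b := x)
    (f := fun y => E y ^ 2 / 2 - Hfun γ ρin S₀ J (u y))
    (fun y hy => (hd y (hsub hy)).continuousWithinAt.mono hsub)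
    (fun y hy => by
      have hy' := hsub (Ico_subset_Icc_self hy)
      refine (hd y hy').mono_of_mem_nhdsWithin ?_
      exact mem_of_superset (Ico_mem_nhdsGE hy'.2) (Ico_subset_Ico_left hy'.1))
    x ⟨hx.1, le_rfl⟩
  simpa [hu0, hE0] using hcst
end

section
/- Assume ζ₀ := ū^{in}/u_s > 1, and let (u₀, E₀) ∈ T_acc with 0 < u₀ < u_s (so E₀ = −√(2H(u₀)) ≤ 0). Then there exist a finite constant l_max > 0 and a function (ū₁, Ē) : [0, l_max] → ℝ², infinitely differentiable on [0, l_max], with ū₁ > 0 everywhere, (ū₁, Ē)(0) = (u₀, E₀), satisfying (ū₁^{γ+1} − u_s^{γ+1})·ū₁' = Ē·ū₁^γ and Ē' = J/ū₁ − ρ̄^{in} on [0, l_max], such that: (i) ū₁'(x₁) > 0 for all x₁ ∈ [0, l_max); and (ii) ū₁'(x₁) → 0 as x₁ → l_max⁻. Moreover this smooth solution is unique: any other smooth solution of the same system with the same initial data agrees with (ū₁, Ē) on the common interval of definition. -/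
open Set Filter intervalIntegral

lemma time_fun (q : ℝ → ℝ) (s0 : ℝ) (hs0 : 0 < s0) (hq : ContinuousOn q (Icc 0 s0))
    (hpos : ∀ s ∈ Icc 0 s0, 0 < q s) :
    ∃ l : ℝ, 0 < l ∧ ∃ Φ S : ℝ → ℝ, (∀ x, Φ (S x) = x) ∧ (∀ s, S (Φ s) = s) ∧ S 0 = s0 ∧ S l = 0 ∧
      (∀ x ∈ Icc 0 l, S x ∈ Icc 0 s0) ∧ (∀ x < l, 0 < S x) ∧ StrictAnti S ∧
      (∀ x ∈ Icc 0 l, HasDerivAt S (- q (S x)) x) ∧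
      (∀ s ∈ Icc 0 s0, HasDerivAt Φ (- (q s)⁻¹) s) ∧ Continuous S ∧ Continuous Φ := by
  set p : ℝ → ℝ := fun s => (q (projIcc 0 s0 hs0.le s))⁻¹ with hp
  have hqc : Continuous fun s => q (projIcc 0 s0 hs0.le s) := by
    have := hq.domRestrict
    exact this.comp continuous_projIcc
  have hqpos : ∀ s, 0 < q (projIcc 0 s0 hs0.le s) := fun s => hpos _ (projIcc 0 s0 hs0.le s).2
  have hpc : Continuous p := hqc.inv₀ fun s => (hqpos s).ne'
  have hppos : ∀ s, 0 < p s := fun s => inv_pos.2 (hqpos s)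
  obtain ⟨m, hm, hmp⟩ : ∃ m, 0 < m ∧ ∀ s, m ≤ p s := by
    obtain ⟨z, hz, hz'⟩ := isCompact_Icc.exists_isMaxOn (nonempty_Icc.2 hs0.le) hq
    refine ⟨(q z)⁻¹, inv_pos.2 (hpos z hz), fun s => ?_⟩
    exact inv_anti₀ (hqpos s) (hz' (projIcc 0 s0 hs0.le s).2)
  set Θ : ℝ → ℝ := fun s => ∫ t in (0:ℝ)..s, p t with hΘ
  have hd : ∀ s, HasDerivAt Θ (p s) s := fun s =>
    integral_hasDerivAt_right (hpc.intervalIntegrable _ _)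
      (hpc.stronglyMeasurableAtFilter _ _) hpc.continuousAt
  have hmono : StrictMono Θ := strictMono_of_deriv_pos fun s => by
    rw [(hd s).deriv]; exact hppos s
  have h0 : Θ 0 = 0 := by simp [hΘ]
  have hmono2 : Monotone fun s => Θ s - m * s := by
    have hd2 : ∀ s, HasDerivAt (fun s => Θ s - m * s) (p s - m * 1) s := fun s =>
      (hd s).sub ((hasDerivAt_id s).const_mul m)
    refine monotone_of_deriv_nonneg (fun s => (hd2 s).differentiableAt) fun s => ?_
    rw [(hd2 s).deriv]; linarith [hmp s]
  have hcΘ : Continuous Θ := continuous_iff_continuousAt.2 fun s => (hd s).continuousAt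
  have hsurj : Function.Surjective Θ := by
    refine hcΘ.surjective ?_ ?_
    · refine tendsto_atTop_mono' atTop ?_ (tendsto_id.const_mul_atTop hm)
      filter_upwards [eventually_ge_atTop 0] with s hs
      have := hmono2 hs
      simp only [h0] at this; simp only [id]; linarith
    · refine tendsto_atBot_mono' atBot ?_ (tendsto_id.const_mul_atBot hm)
      filter_upwards [eventually_le_atBot 0] with s hs
      have := hmono2 hs
      simp only [h0] at this; simp only [id]; linarith
  let e := hmono.orderIsoOfSurjective Θ hsurj
  have he : ∀ s, e s = Θ s := fun s => rfl
  have hes : ∀ y, Θ (e.symm y) = y := fun y => e.apply_symm_apply y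
  have hse : ∀ y, e.symm (Θ y) = y := fun y => e.symm_apply_apply y
  have hec : Continuous e.symm := e.symm.continuous
  have hanti : StrictAnti fun x => e.symm (Θ s0 - x) := fun x y hxy =>
    e.symm.strictMono (by linarith)
  have hS0 : e.symm (Θ s0 - 0) = s0 := by simp [hse]
  have hSl : e.symm (Θ s0 - Θ s0) = 0 := by
    have := hse 0
    rw [h0] at this; rw [sub_self, this]
  have hmem : ∀ x ∈ Icc 0 (Θ s0), e.symm (Θ s0 - x) ∈ Icc 0 s0 := fun x hx =>
    ⟨hSl ▸ hanti.antitone hx.2, le_of_le_of_eq (hanti.antitone hx.1) hS0⟩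
  have hpe : ∀ s ∈ Icc 0 s0, p s = (q s)⁻¹ := fun s hs => by
    simp only [hp]; rw [projIcc_of_mem hs0.le hs]
  refine ⟨Θ s0, h0 ▸ hmono hs0, fun s => Θ s0 - Θ s, fun x => e.symm (Θ s0 - x), ?_, ?_, hS0, hSl,
    hmem, ?_, hanti, ?_, ?_, ?_, ?_⟩
  · intro x; simp [hes]
  · intro x; simp [hse]
  · intro x hx
    have := hanti hx
    simp only [hSl] at this; exact this
  · intro x hx
    have h1 : HasDerivAt e.symm (p (e.symm (Θ s0 - x)))⁻¹ (Θ s0 - x) :=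
      HasDerivAt.of_local_left_inverse hec.continuousAt (hd _) (hppos _).ne'
        (Eventually.of_forall hes)
    have h2 : HasDerivAt (fun x => Θ s0 - x) (-1) x := by
      simpa using (hasDerivAt_id x).const_sub (Θ s0)
    have := h1.comp x h2
    rw [hpe _ (hmem x hx)] at this
    simpa [Function.comp_def] using this
  · intro s hs
    have := (hd s).const_sub (Θ s0)
    rwa [hpe s hs] at this
  · exact hec.comp (by fun_prop)
  · fun_prop

lemma analyticAt_dslope' {f : ℝ → ℝ} {a t : ℝ} (ha : AnalyticAt ℝ f a) (ht : AnalyticAt ℝ f t) :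
    AnalyticAt ℝ (dslope f a) t := by
  rcases eq_or_ne t a with rfl | hne
  · obtain ⟨p, hp⟩ := ha
    exact ⟨_, hp.has_fpower_series_dslope_fslope⟩
  · refine AnalyticAt.congr ?_ (dslope_eventuallyEq_slope_of_ne f hne).symm
    have : slope f a = fun x => (f x - f a) / (x - a) := by
      ext x; rw [slope_def_field]
    rw [this]
    exact (ht.sub analyticAt_const).div (analyticAt_id.sub analyticAt_const) (sub_ne_zero.2 hne)

lemma analyticAt_rpow' (p : ℝ) {t : ℝ} (ht : 0 < t) : AnalyticAt ℝ (fun x : ℝ => x ^ p) t := by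
  exact (Real.contDiffAt_rpow_const_of_ne ht.ne' : ContDiffAt ℝ ⊤ _ _).analyticAt

lemma second_order {P N m : ℝ → ℝ} {a : ℝ} (hN : AnalyticAt ℝ N a) (hm : ContinuousAt m a)
    (hP : ∀ᶠ t in nhds a, P t = (t - a) ^ 2 * N t)
    (hP' : ∀ᶠ t in nhds a, HasDerivAt P ((t - a) * m t) t) : 2 * N a = m a := by
  have h1 : ∀ᶠ t in nhds a, (t - a) * m t = (t - a) * (2 * N t + (t - a) * deriv N t) := by
    filter_upwards [hP.eventually_nhds, hP', hN.eventually_analyticAt] with t h1 h2 h3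
    have h4 : HasDerivAt (fun t => (t - a) ^ 2 * N t)
        ((2 * (t - a)) * N t + (t - a) ^ 2 * deriv N t) t := by
      have := (((hasDerivAt_id t).sub_const a).pow 2).mul h3.differentiableAt.hasDerivAt
      refine HasDerivAt.congr_deriv this ?_
      simp
    have := h2.unique (h4.congr_of_eventuallyEq h1)
    rw [this]; ring
  have h2 : ∀ᶠ t in nhdsWithin a {a}ᶜ, m t = 2 * N t + (t - a) * deriv N t := by
    filter_upwards [h1.filter_mono nhdsWithin_le_nhds, self_mem_nhdsWithin] with t h1 h2
    exact mul_left_cancel₀ (sub_ne_zero.2 h2) h1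
  have h3 : ContinuousAt (fun t => 2 * N t + (t - a) * deriv N t) a := by
    have := hN.continuousAt
    have := hN.deriv.continuousAt
    fun_prop
  have h4 := (hm.tendsto.mono_left nhdsWithin_le_nhds : Tendsto m (nhdsWithin a {a}ᶜ) _)
  have h5 := (h3.tendsto.mono_left nhdsWithin_le_nhds : Tendsto _ (nhdsWithin a {a}ᶜ) _)
  have := tendsto_nhds_unique (h4.congr' h2) h5
  rw [this]; simp

lemma structA (γ a b : ℝ) (hγ : 1 < γ) (ha : 0 < a) (hab : a < b) :
    ∃ (c : ℝ) (h k : ℝ → ℝ), b < c ∧ (∀ t > 0, AnalyticAt ℝ h t) ∧ (∀ t > 0, AnalyticAt ℝ k t) ∧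
      (∀ t > 0, 0 < k t) ∧ (∀ t > 0, t ≤ c → 0 < h t) ∧
      (∀ t > 0, t ^ (γ + 1) - a ^ (γ + 1) = (t - a) * k t) ∧
      (∀ u > 0, (∫ t in a..u, t ^ (-(γ + 1)) * ((t ^ (γ + 1) - a ^ (γ + 1)) * (b - t)))
        = (u - a) ^ 2 * (c - u) * h u) ∧
      (∀ u > 0, HasDerivAt (fun u => ∫ t in a..u,
          t ^ (-(γ + 1)) * ((t ^ (γ + 1) - a ^ (γ + 1)) * (b - t)))
        (u ^ (-(γ + 1)) * ((u ^ (γ + 1) - a ^ (γ + 1)) * (b - u))) u) := by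
  set A := a ^ (γ + 1) with hA
  set k : ℝ → ℝ := dslope (fun t => t ^ (γ + 1)) a with hk
  have hb : 0 < b := ha.trans hab
  have hApos : 0 < A := Real.rpow_pos_of_pos ha _
  have hkeq : ∀ t, t ^ (γ + 1) - A = (t - a) * k t := fun t => by
    have := sub_smul_dslope (fun t : ℝ => t ^ (γ + 1)) a t
    simp only [smul_eq_mul] at this
    rw [hk, this]
  have hka : ∀ t > 0, AnalyticAt ℝ k t := fun t ht =>
    analyticAt_dslope' (analyticAt_rpow' _ ha) (analyticAt_rpow' _ ht)
  have hkpos : ∀ t > 0, 0 < k t := by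
    intro t ht
    rcases lt_trichotomy t a with h | h | h
    · have := hkeq t
      have h2 : t ^ (γ + 1) < A := Real.rpow_lt_rpow ht.le h (by linarith)
      by_contra hc
      nlinarith
    · rw [h, hk, dslope_same, (Real.hasDerivAt_rpow_const (Or.inl ha.ne')).deriv]
      have := Real.rpow_pos_of_pos ha (γ + 1 - 1)
      positivity
    · have := hkeq t
      have h2 : A < t ^ (γ + 1) := Real.rpow_lt_rpow ha.le h (by linarith)
      by_contra hc
      nlinarith
  set f : ℝ → ℝ := fun t => t ^ (-(γ + 1)) * ((t ^ (γ + 1) - A) * (b - t)) with hf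
  set Q : ℝ → ℝ := fun t => b * t - t ^ 2 / 2 + (A * b / γ) * t ^ (-γ) - A / (γ - 1) * t ^ (1 - γ)
    with hQ
  have hQd : ∀ t > 0, HasDerivAt Q (f t) t := by
    intro t ht
    have h1 : HasDerivAt (fun t : ℝ => t ^ (-γ)) (-γ * t ^ (-γ - 1)) t :=
      Real.hasDerivAt_rpow_const (Or.inl ht.ne')
    have h2 : HasDerivAt (fun t : ℝ => t ^ (1-γ)) ((1-γ) * t ^ (1-γ - 1)) t :=
      Real.hasDerivAt_rpow_const (Or.inl ht.ne')
    have h3 := ((((hasDerivAt_id t).const_mul b).sub (((hasDerivAt_id t).pow 2).div_const 2)).add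
      (h1.const_mul (A * b / γ))).sub (h2.const_mul (A / (γ - 1)))
    refine HasDerivAt.congr_deriv h3 (Eq.symm ?_)
    have e1 : t ^ (-(γ + 1)) * t ^ (γ + 1) = 1 := by
      rw [← Real.rpow_add ht]; simp
    have e2 : t ^ (1 - γ - 1) = t * t ^ (-(γ+1)) := by
      rw [show 1 - γ - 1 = 1 + -(γ+1) by ring, Real.rpow_add ht, Real.rpow_one]
    have e3 : t ^ (-γ - 1) = t ^ (-(γ+1)) := by ring_nf
    have g1 : γ ≠ 0 := by linarith
    have g2 : γ - 1 ≠ 0 := by linarith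
    rw [e2, e3]
    simp only [hf, id]
    have : t ^ (-(γ + 1)) * ((t ^ (γ + 1) - A) * (b - t)) =
      (t ^ (-(γ + 1)) * t ^ (γ + 1)) * (b - t) - A * t ^ (-(γ + 1)) * (b - t) := by ring
    rw [this, e1]
    field_simp
    push_cast
    ring
  have hQan : ∀ t > 0, AnalyticAt ℝ Q t := by
    intro t ht
    have h1 := analyticAt_rpow' (-γ) ht
    have h2 := analyticAt_rpow' (1-γ) ht
    have h0 : AnalyticAt ℝ (fun x : ℝ => x) t := analyticAt_id
    exact (((analyticAt_const.mul h0).sub ((h0.pow 2).div_const)).add (analyticAt_const.mul h1)).sub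
      (analyticAt_const.mul h2)
  have hfpos : ∀ t : ℝ, 0 < t → 0 < t ^ (-(γ+1)) := fun t ht => Real.rpow_pos_of_pos ht _
  have hfeq : ∀ t, f t = (t - a) * (t ^ (-(γ+1)) * k t * (b - t)) := fun t => by
    simp only [hf, hkeq]; ring
  have hanti1 : StrictAntiOn Q (Ioc 0 a) := by
    refine strictAntiOn_of_deriv_neg (convex_Ioc 0 a)
      (fun t ht => (hQd t ht.1).continuousAt.continuousWithinAt) fun t ht => ?_
    rw [interior_Ioc] at ht
    rw [(hQd t ht.1).deriv, hfeq]
    have := hfpos t ht.1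
    have := hkpos t ht.1
    have h3 : 0 < b - t := by linarith [ht.2]
    have h4 : t - a < 0 := by linarith [ht.2]
    exact mul_neg_of_neg_of_pos h4 (by positivity)
  have hmono : StrictMonoOn Q (Icc a b) := by
    refine strictMonoOn_of_deriv_pos (convex_Icc a b)
      (fun t ht => (hQd t (ha.trans_le ht.1)).continuousAt.continuousWithinAt) fun t ht => ?_
    rw [interior_Icc] at ht
    have ht0 : 0 < t := ha.trans ht.1
    rw [(hQd t ht0).deriv, hfeq]
    have := hfpos t ht0
    have := hkpos t ht0
    have h3 : 0 < b - t := by linarith [ht.2]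
    have h4 : 0 < t - a := by linarith [ht.1]
    positivity
  have hanti2 : StrictAntiOn Q (Ici b) := by
    refine strictAntiOn_of_deriv_neg (convex_Ici b)
      (fun t ht => (hQd t (hb.trans_le ht)).continuousAt.continuousWithinAt) fun t ht => ?_
    rw [interior_Ici] at ht
    have ht : b < t := ht
    have ht0 : 0 < t := hb.trans ht
    rw [(hQd t ht0).deriv, hfeq]
    have := hfpos t ht0
    have := hkpos t ht0
    have h3 : b - t < 0 := by linarith
    have h4 : 0 < t - a := by linarith
    exact mul_neg_of_pos_of_neg h4 (mul_neg_of_pos_of_neg (by positivity) h3)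
  have hQb : Q a < Q b := hmono ⟨le_rfl, hab.le⟩ ⟨hab.le, le_rfl⟩ hab
  obtain ⟨c, hbc, hc⟩ : ∃ c, b < c ∧ Q c = Q a := by
    set C := A * b / γ * b ^ (-γ) - Q a with hC
    set T := 2 * b + 2 + 2 * |C| with hT
    have hbT : b ≤ T := by have := abs_nonneg C; linarith
    have hT0 : 0 < T := hb.trans_le hbT
    have hQT : Q T < Q a := by
      have h1 : T ^ (-γ) ≤ b ^ (-γ) := Real.rpow_le_rpow_of_nonpos hb hbT (by linarith)
      have h2 : A * b / γ * T ^ (-γ) ≤ A * b / γ * b ^ (-γ) := by gcongr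
      have h3 : 0 ≤ A / (γ - 1) * T ^ (1 - γ) := by
        have : 0 < γ - 1 := by linarith
        positivity
      have h4 := le_abs_self C
      have h5 := abs_nonneg C
      have : Q T ≤ b * T - T ^ 2 / 2 + C + Q a := by simp only [hQ] at hC ⊢; linarith
      have h6 : b * T - T ^ 2 / 2 = - ((2 * b + 2 + 2 * |C|) * (1 + |C|)) := by rw [hT]; ring
      nlinarith [mul_nonneg hb.le h5]
    have := intermediate_value_Icc' hbT (f := Q)
      (fun t ht => (hQd t (hb.trans_le ht.1)).continuousAt.continuousWithinAt)
    obtain ⟨c, hc, hc'⟩ := this ⟨hQT.le, hQb.le⟩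
    refine ⟨c, lt_of_le_of_ne hc.1 ?_, hc'⟩
    rintro rfl
    linarith
  have hc0 : 0 < c := hb.trans hbc
  have hac : a < c := hab.trans hbc
  set P : ℝ → ℝ := fun t => Q t - Q a with hP
  have hPan : ∀ t > 0, AnalyticAt ℝ P t := fun t ht => (hQan t ht).sub analyticAt_const
  have hPd : ∀ t > 0, HasDerivAt P (f t) t := fun t ht => (hQd t ht).sub_const _
  set P1 := dslope P a with hP1
  have hP1an : ∀ t > 0, AnalyticAt ℝ P1 t := fun t ht => analyticAt_dslope' (hPan a ha) (hPan t ht)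
  set P2 := dslope P1 a with hP2
  have hP2an : ∀ t > 0, AnalyticAt ℝ P2 t := fun t ht => analyticAt_dslope' (hP1an a ha) (hP1an t ht)
  set P3 := dslope P2 c with hP3
  have hP3an : ∀ t > 0, AnalyticAt ℝ P3 t :=
    fun t ht => analyticAt_dslope' (hP2an c hc0) (hP2an t ht)
  have hP1a : P1 a = 0 := by
    rw [hP1, dslope_same, (hPd a ha).deriv, hfeq]; ring
  have e1 : ∀ t, P t = (t - a) ^ 2 * P2 t := by
    intro t
    have h1 := sub_smul_dslope P a t
    have h2 := sub_smul_dslope P1 a t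
    simp only [smul_eq_mul, ← hP1, ← hP2, hP1a] at h1 h2
    have : P a = 0 := by simp [hP]
    rw [this] at h1
    linear_combination -h1 - (t - a) * h2
  have hP2c : P2 c = 0 := by
    have := e1 c
    have h0 : P c = 0 := by simp [hP, hc]
    rw [h0] at this
    have h1 : (c - a)^2 ≠ 0 := pow_ne_zero _ (sub_ne_zero.2 hac.ne')
    simpa [h1] using this.symm
  have e2 : ∀ t, P t = (t - a) ^ 2 * (c - t) * (-P3 t) := by
    intro t
    have h1 := sub_smul_dslope P2 c t
    simp only [smul_eq_mul, ← hP3, hP2c] at h1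
    rw [e1]
    linear_combination - (t - a)^2 * h1
  have hint : ∀ u > 0, (∫ t in a..u, f t) = P u := by
    intro u hu
    have hsub : ∀ t ∈ uIcc a u, 0 < t := fun t ht => (lt_min ha hu).trans_le ht.1
    refine integral_eq_sub_of_hasDerivAt (fun t ht => hQd t (hsub t ht)) ?_
    apply ContinuousOn.intervalIntegrable
    intro t ht
    have ht0 := hsub t ht
    have h1 := (analyticAt_rpow' (-(γ+1)) ht0).continuousAt
    have h2 := (analyticAt_rpow' ((γ+1)) ht0).continuousAt
    have : ContinuousAt f t := by fun_prop
    exact this.continuousWithinAt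
  refine ⟨c, fun t => - P3 t, k, hbc, fun t ht => (hP3an t ht).neg, hka, hkpos, ?_,
    fun t _ => hkeq t, fun u hu => (hint u hu).trans (e2 u), fun u hu => ?_⟩
  · intro t ht htc
    rcases eq_or_ne t a with rfl | hta
    · have h1 := second_order (P := P) (N := P2) (m := fun s => s ^ (-(γ+1)) * k s * (b - s))
        (hP2an t ht) (by
          have h1 := (analyticAt_rpow' (-(γ+1)) ht).continuousAt
          have h2 := (hka t ht).continuousAt
          fun_prop) (Eventually.of_forall e1) (by
          filter_upwards [lt_mem_nhds ht] with s hs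
          rw [← hfeq]; exact hPd s hs)
      have h2 := sub_smul_dslope P2 c t
      simp only [smul_eq_mul, ← hP3, hP2c] at h2
      have := hfpos t ht
      have := hkpos t ht
      have h3 : 0 < b - t := by linarith
      have h4 : 0 < t ^ (-(γ+1)) * k t * (b - t) := by positivity
      by_contra hcon
      nlinarith
    · rcases eq_or_lt_of_le htc with rfl | htc
      · have h2 : HasDerivAt (fun s => (s - a) ^ 2 * (t - s) * (-P3 s))
            ((t - a) ^ 2 * P3 t) t := by
          have := (((((hasDerivAt_id t).sub_const a).pow 2)).mul
            ((hasDerivAt_id t).const_sub t)).mul (hP3an t ht).differentiableAt.hasDerivAt.neg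
          refine this.congr_deriv ?_
          simp
        have h3 := (hPd t ht).unique (h2.congr_of_eventuallyEq (Eventually.of_forall e2))
        rw [hfeq] at h3
        have := hfpos t ht
        have := hkpos t ht
        have h3' : 0 < t - b := by linarith
        have h4' : 0 < t - a := by linarith
        have h4 : 0 < (t - a) * (t ^ (-(γ+1)) * k t * (t - b)) := by positivity
        have h5 : 0 < (t-a)^2 := by positivity
        by_contra hcon
        nlinarith
      · have hPt : 0 < P t := by
          rcases lt_or_gt_of_ne hta with h | h
          · exact sub_pos.2 (hanti1 ⟨ht, h.le⟩ ⟨ha, le_rfl⟩ h)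
          · rcases le_or_gt t b with h' | h'
            · exact sub_pos.2 (hmono ⟨le_rfl, hab.le⟩ ⟨h.le, h'⟩ h)
            · have := hanti2 h'.le hbc.le htc
              rw [hc] at this
              exact sub_pos.2 this
        rw [e2] at hPt
        have h5 : 0 < (t-a)^2 := by have := sub_ne_zero.2 hta; positivity
        have h6 : 0 < c - t := by linarith
        exact (pos_iff_pos_of_mul_pos hPt).1 (by positivity)
  · refine (hPd u hu).congr_of_eventuallyEq ?_
    filter_upwards [lt_mem_nhds hu] with s hs
    exact hint s hs

lemma smooth_ode (q S : ℝ → ℝ) (l : ℝ) (hl : 0 < l)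
    (hS : ∀ x ∈ Icc 0 l, HasDerivAt S (- q (S x)) x)
    (hq : ∀ x ∈ Icc 0 l, ContDiffAt ℝ (⊤ : ℕ∞) q (S x)) :
    ContDiffOn ℝ (⊤ : ℕ∞) S (Icc 0 l) := by
  rw [contDiffOn_infty]
  intro n
  induction n with
  | zero =>
    simp only [Nat.cast_zero, contDiffOn_zero]
    exact fun x hx => (hS x hx).continuousAt.continuousWithinAt
  | succ n ih =>
    push_cast
    rw [contDiffOn_succ_iff_derivWithin (uniqueDiffOn_Icc hl)]
    refine ⟨fun x hx => (hS x hx).differentiableAt.differentiableWithinAt, by simp, ?_⟩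
    have : ContDiffOn ℝ n (fun x => - q (S x)) (Icc 0 l) := by
      intro x hx
      have h1 : ContDiffAt ℝ n q (S x) := (hq x hx).of_le (by exact_mod_cast le_top)
      exact (h1.comp_contDiffWithinAt x (ih x hx)).neg
    refine this.congr fun x hx => ?_
    exact (hS x hx).hasDerivWithinAt.derivWithin (uniqueDiffOn_Icc hl x hx)

lemma energy (γ ρ J A T' : ℝ) (hT : 0 < T') (H v F : ℝ → ℝ)
    (hHd : ∀ t > 0, HasDerivAt H ((t ^ (γ + 1) - A) / t ^ γ * (J / t - ρ)) t)
    (hv : DifferentiableOn ℝ v (Icc 0 T')) (hF : DifferentiableOn ℝ F (Icc 0 T'))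
    (hpos : ∀ x ∈ Icc (0:ℝ) T', 0 < v x)
    (hode : ∀ x ∈ Icc (0:ℝ) T',
            (v x ^ (γ + 1) - A) * derivWithin v (Icc 0 T') x = F x * v x ^ γ ∧
            derivWithin F (Icc 0 T') x = J / v x - ρ)
    (h0 : F 0 ^ 2 = 2 * H (v 0)) : ∀ x ∈ Icc (0:ℝ) T', F x ^ 2 = 2 * H (v x) := by
  have hd : ∀ x ∈ Icc (0:ℝ) T', HasDerivWithinAt (fun x => F x ^ 2 - 2 * H (v x)) 0 (Icc 0 T') x := by
    intro x hx
    have h1 := (hF x hx).hasDerivWithinAt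
    have h2 := (hHd (v x) (hpos x hx)).comp_hasDerivWithinAt x (hv x hx).hasDerivWithinAt
    have h3 := (h1.pow 2).sub (h2.const_mul 2)
    refine h3.congr_deriv ?_
    obtain ⟨e1, e2⟩ := hode x hx
    have hp : 0 < v x ^ γ := Real.rpow_pos_of_pos (hpos x hx) _
    rw [e2]
    have : (v x ^ (γ + 1) - A) / v x ^ γ * (J / v x - ρ) * derivWithin v (Icc 0 T') x
      = F x * (J / v x - ρ) := by
      rw [show (v x ^ (γ + 1) - A) / v x ^ γ * (J / v x - ρ) * derivWithin v (Icc 0 T') x =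
        ((v x ^ (γ + 1) - A) * derivWithin v (Icc 0 T') x) / v x ^ γ * (J / v x - ρ) by ring, e1]
      field_simp
    rw [this]
    simp; ring
  have := constant_of_derivWithin_zero (fun x hx => (hd x hx).differentiableWithinAt)
    (fun x hx => (hd x (Ico_subset_Icc_self hx)).derivWithin
      (uniqueDiffOn_Icc hT x (Ico_subset_Icc_self hx)))
  intro x hx
  have := this x hx
  linarith

lemma uniq (γ ρ J a c u₀ s0 l T' : ℝ) (H h k q Φ S u E v F : ℝ → ℝ) (hρ : 0 < ρ)
    (ha : 0 < a) (hac : a < c)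
    (hu₀ : 0 < u₀) (hu₀a : u₀ < a) (hs0 : s0 = Real.sqrt (c - u₀))
    (hk : ∀ t > 0, 0 < k t) (hh : ∀ t > 0, t ≤ c → 0 < h t)
    (hkeq : ∀ t > 0, t ^ (γ + 1) - a ^ (γ + 1) = (t - a) * k t)
    (hH : ∀ t > 0, H t = ρ * ((t - a) ^ 2 * (c - t) * h t))
    (hHd : ∀ t > 0, HasDerivAt H ((t ^ (γ + 1) - a ^ (γ + 1)) / t ^ γ * (J / t - ρ)) t)
    (hq : ∀ s, q s = Real.sqrt (2 * ρ * h (c - s ^ 2)) * (c - s ^ 2) ^ γ / (2 * k (c - s ^ 2)))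
    (hΦS : ∀ x, Φ (S x) = x) (hSΦ : ∀ s, S (Φ s) = s) (hS0 : S 0 = s0)
    (hSm : ∀ x ∈ Icc 0 l, S x ∈ Icc 0 s0) (hSp : ∀ x < l, 0 < S x) (hl : 0 < l)
    (hΦd : ∀ s ∈ Icc 0 s0, HasDerivAt Φ (- (q s)⁻¹) s) (hΦc : Continuous Φ)
    (hu : ∀ x, u x = c - S x ^ 2)
    (husm : ContDiffOn ℝ (⊤ : ℕ∞) u (Icc 0 l))
    (hupos : ∀ x ∈ Icc (0:ℝ) l, 0 < u x)
    (huode : ∀ x ∈ Icc (0:ℝ) l,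
          (u x ^ (γ + 1) - a ^ (γ + 1)) * derivWithin u (Icc 0 l) x = E x * u x ^ γ)
    (hu' : ∀ x ∈ Ico (0:ℝ) l, 0 < derivWithin u (Icc 0 l) x)
    (hT : 0 < T')
    (hvsm : ContDiffOn ℝ (⊤ : ℕ∞) v (Icc 0 T'))
    (hpos : ∀ x ∈ Icc (0:ℝ) T', 0 < v x)
    (hv0 : v 0 = u₀) (hF0 : F 0 = E 0)
    (hode : ∀ x ∈ Icc (0:ℝ) T',
            (v x ^ (γ + 1) - a ^ (γ + 1)) * derivWithin v (Icc 0 T') x = F x * v x ^ γ)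
    (hen : ∀ x ∈ Icc (0:ℝ) T', F x ^ 2 = 2 * H (v x)) :
    ∀ x ∈ Icc (0:ℝ) (min l T'), v x = u x ∧ F x = E x := by
  set m := min l T' with hm
  have hml : m ≤ l := min_le_left _ _
  have hmT : m ≤ T' := min_le_right _ _
  have hm0 : 0 < m := lt_min hl hT
  have hu0 : u 0 = u₀ := by
    rw [hu, hS0, hs0, Real.sq_sqrt (by linarith)]; ring
  set s : Set ℝ := {x | v x = u x ∧ derivWithin v (Icc 0 T') x = derivWithin u (Icc 0 l) x} with hs
  suffices hmain : Icc 0 m ⊆ s by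
    intro x hx
    obtain ⟨h1, h2⟩ := hmain hx
    refine ⟨h1, ?_⟩
    have e1 := hode x ⟨hx.1, hx.2.trans hmT⟩
    have e2 := huode x ⟨hx.1, hx.2.trans hml⟩
    have hp : 0 < u x ^ γ := Real.rpow_pos_of_pos (hupos x ⟨hx.1, hx.2.trans hml⟩) _
    rw [h1, h2, e2] at e1
    exact (mul_right_cancel₀ hp.ne' e1).symm
  have hvc := hvsm.continuousOn
  have huc := husm.continuousOn
  have hvc' : ContinuousOn (derivWithin v (Icc 0 T')) (Icc 0 T') :=
    hvsm.continuousOn_derivWithin (uniqueDiffOn_Icc hT) (by exact_mod_cast le_top)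
  have huc' : ContinuousOn (derivWithin u (Icc 0 l)) (Icc 0 l) :=
    husm.continuousOn_derivWithin (uniqueDiffOn_Icc hl) (by exact_mod_cast le_top)
  have hsubT : Icc 0 m ⊆ Icc 0 T' := Icc_subset_Icc_right hmT
  have hsubl : Icc 0 m ⊆ Icc 0 l := Icc_subset_Icc_right hml
  refine IsClosed.Icc_subset_of_forall_mem_nhdsWithin ?_ ?_ ?_
  · have c1 := ((hvc.mono hsubT).sub (huc.mono hsubl)).preimage_isClosed_of_isClosed isClosed_Icc
      (isClosed_singleton (x := (0:ℝ)))
    have c2 := ((hvc'.mono hsubT).sub (huc'.mono hsubl)).preimage_isClosed_of_isClosed isClosed_Icc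
      (isClosed_singleton (x := (0:ℝ)))
    convert c1.inter c2 using 1
    ext x
    simp only [hs, mem_inter_iff, mem_setOf_eq, mem_preimage, mem_singleton_iff, Pi.sub_apply,
      sub_eq_zero]
    tauto
  · refine ⟨by rw [hv0, hu0], ?_⟩
    have e1 := hode 0 ⟨le_rfl, hT.le⟩
    have e2 := huode 0 ⟨le_rfl, hl.le⟩
    rw [hv0, hkeq _ hu₀] at e1
    rw [hu0, hkeq _ hu₀] at e2
    have : (u₀ - a) * k u₀ ≠ 0 := mul_ne_zero (by linarith) (hk _ hu₀).ne'
    refine mul_left_cancel₀ this ?_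
    rw [e1, e2, hF0]
  · rintro x ⟨⟨hx1, hx2⟩, hx3⟩
    have hxT : x < T' := hx3.2.trans_le hmT
    have hxl : x < l := hx3.2.trans_le hml
    have hxIT : x ∈ Icc 0 T' := ⟨hx3.1, hxT.le⟩
    have hxIl : x ∈ Icc 0 l := ⟨hx3.1, hxl.le⟩
    have hle : nhdsWithin x (Ioi x) ≤ nhdsWithin x (Icc 0 T') := by
      rw [← nhdsWithin_Ioo_eq_nhdsGT hxT]
      exact nhdsWithin_mono _ fun y hy => ⟨hx3.1.trans hy.1.le, hy.2.le⟩
    have hvx : Tendsto v (nhdsWithin x (Ioi x)) (nhds (v x)) := (hvc x hxIT).tendsto.mono_left hle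
    have hvx' : Tendsto (derivWithin v (Icc 0 T')) (nhdsWithin x (Ioi x))
      (nhds (derivWithin v (Icc 0 T') x)) := (hvc' x hxIT).tendsto.mono_left hle
    have hvxc : v x < c := by
      rw [hx1, hu]
      have := hSp x hxl
      have : 0 < S x ^ 2 := by positivity
      linarith
    have hvx0 : u₀ ≤ v x := by
      rw [hx1, hu, ← hu0, hu, hS0]
      have := hSm x hxIl
      have := pow_le_pow_left₀ this.1 this.2 2
      linarith
    have hvpos : 0 < derivWithin v (Icc 0 T') x := by rw [hx2]; exact hu' x ⟨hx3.1, hxl⟩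
    have ev : ∀ᶠ y in nhdsWithin x (Ioi x), 0 < derivWithin v (Icc 0 T') y ∧ v y < c ∧ y < m ∧
        (v x < a → v y < a) := by
      have e1 := hvx'.eventually (lt_mem_nhds hvpos)
      have e2 := hvx.eventually (gt_mem_nhds hvxc)
      have e3 : ∀ᶠ y in nhdsWithin x (Ioi x), y < m := nhdsWithin_le_nhds (gt_mem_nhds hx3.2)
      have e4 : ∀ᶠ y in nhdsWithin x (Ioi x), (v x < a → v y < a) := by
        by_cases h : v x < a
        · filter_upwards [hvx.eventually (gt_mem_nhds h)] with y hy _ using hy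
        · exact Eventually.of_forall fun y hy => absurd hy h
      filter_upwards [e1, e2, e3, e4] with y h1 h2 h3 h4 using ⟨h1, h2, h3, h4⟩
    obtain ⟨z, hz, hzs⟩ := (mem_nhdsGT_iff_exists_Ioo_subset).1 ev
    have hz' : x < z := hz
    have hmemT : ∀ y ∈ Ioo x z, y ∈ Ioo 0 T' := fun y hy =>
      ⟨hx3.1.trans_lt hy.1, (hzs hy).2.2.1.trans_le hmT⟩
    have hmeml : ∀ y ∈ Ioo x z, y ∈ Ioo 0 l := fun y hy =>
      ⟨hx3.1.trans_lt hy.1, (hzs hy).2.2.1.trans_le hml⟩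
    have hvd : ∀ y ∈ Ioo x z, HasDerivAt v (derivWithin v (Icc 0 T') y) y := fun y hy =>
      ((hvsm.differentiableOn (by simp)) y
        (Ioo_subset_Icc_self (hmemT y hy))).hasDerivWithinAt.hasDerivAt
        (Icc_mem_nhds (hmemT y hy).1 (hmemT y hy).2)
    have hcI : ∀ y ∈ Ioo x z, ContinuousOn v (Icc x y) := fun y hy =>
      hvc.mono (Icc_subset_Icc hx3.1 (hmemT y hy).2.le)
    have hgt : ∀ y ∈ Ioo x z, v x < v y := by
      intro y hy
      have : StrictMonoOn v (Icc x y) := by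
        refine strictMonoOn_of_deriv_pos (convex_Icc x y) (hcI y hy) fun t ht => ?_
        rw [interior_Icc] at ht
        have ht' : t ∈ Ioo x z := ⟨ht.1, ht.2.trans hy.2⟩
        rw [(hvd t ht').deriv]
        exact (hzs ht').1
      exact this ⟨le_rfl, hy.1.le⟩ ⟨hy.1.le, le_rfl⟩ hy.1
    have hvna : ∀ y ∈ Ioo x z, v y ≠ a := by
      intro y hy
      by_cases h : v x < a
      · exact ((hzs hy).2.2.2 h).ne
      · push Not at h
        exact (h.trans_lt (hgt y hy)).ne'
    have key : ∀ y ∈ Ioo x z, derivWithin v (Icc 0 T') y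
        = 2 * Real.sqrt (c - v y) * q (Real.sqrt (c - v y)) ∧ 0 < q (Real.sqrt (c - v y)) := by
      intro y hy
      have hyT := Ioo_subset_Icc_self (hmemT y hy)
      have hvy := hpos y hyT
      have hvyc := (hzs hy).2.1
      have e1 := hode y hyT
      have e2 := hen y hyT
      have hd := (hzs hy).1
      set d := derivWithin v (Icc 0 T') y
      rw [hkeq _ hvy] at e1
      rw [hH _ hvy] at e2
      have hcv : 0 ≤ c - v y := by linarith
      have hkk := hk _ hvy
      have hhh := hh _ hvy hvyc.le
      have hw : 0 < v y ^ γ := Real.rpow_pos_of_pos hvy _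
      rw [hq, Real.sq_sqrt hcv, sub_sub_cancel]
      have hr : 0 < Real.sqrt (2 * ρ * h (v y)) := Real.sqrt_pos.2 (by positivity)
      have hr2 : Real.sqrt (2 * ρ * h (v y)) ^ 2 = 2 * ρ * h (v y) := Real.sq_sqrt (by positivity)
      have hσ2 : Real.sqrt (c - v y) ^ 2 = c - v y := Real.sq_sqrt hcv
      have hσ : 0 ≤ Real.sqrt (c - v y) := Real.sqrt_nonneg _
      set r := Real.sqrt (2 * ρ * h (v y))
      set σ := Real.sqrt (c - v y)
      refine ⟨?_, by positivity⟩
      have e3 : (k (v y) * d) ^ 2 = (σ * r * v y ^ γ) ^ 2 := by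
        have hne : (v y - a) ^ 2 ≠ 0 := pow_ne_zero _ (sub_ne_zero.2 (hvna y hy))
        refine mul_left_cancel₀ hne ?_
        have : (v y - a) ^ 2 * (k (v y) * d) ^ 2 = ((v y - a) * k (v y) * d) ^ 2 := by ring
        rw [this, e1, mul_pow, e2, mul_pow, mul_pow, hr2, hσ2]
        ring
      have e4 : k (v y) * d = σ * r * v y ^ γ :=
        (pow_left_inj₀ (by positivity) (by positivity) two_ne_zero).1 e3
      field_simp
      linarith
    have hveq : ∀ y ∈ Ioo x z, v y = u y := by
      intro y hy
      have hcc : ContinuousOn (fun t => Φ (Real.sqrt (c - v t)) - t) (Icc x y) := by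
        have := hcI y hy
        have h2 : ContinuousOn (fun t => Real.sqrt (c - v t)) (Icc x y) :=
          (continuousOn_const.sub this).sqrt
        exact (hΦc.comp_continuousOn h2).sub continuousOn_id
      obtain ⟨t, ht, ht2⟩ := exists_hasDerivAt_eq_slope (fun t => Φ (Real.sqrt (c - v t)) - t)
        (fun _ => 0) hy.1 hcc (by
          intro t ht
          have ht' : t ∈ Ioo x z := ⟨ht.1, ht.2.trans hy.2⟩
          obtain ⟨k1, k2⟩ := key t ht'
          have hct : 0 < c - v t := sub_pos.2 (hzs ht').2.1
          have d1 := ((hvd t ht').const_sub c).sqrt hct.ne'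
          have d2 := (hΦd (Real.sqrt (c - v t)) ⟨Real.sqrt_nonneg _, by
            rw [hs0]
            exact Real.sqrt_le_sqrt (by linarith [hgt t ht'])⟩).comp t d1
          refine (d2.sub (hasDerivAt_id t)).congr_deriv ?_
          rw [k1]
          have := Real.sqrt_pos.2 hct
          field_simp
          ring)
      have hfe : Φ (Real.sqrt (c - v y)) - y = Φ (Real.sqrt (c - v x)) - x := by
        have : y - x ≠ 0 := by linarith [hy.1]
        field_simp at ht2
        linarith
      have hsx : Real.sqrt (c - v x) = S x := by
        rw [hx1, hu, sub_sub_cancel]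
        exact Real.sqrt_sq (hSp x hxl).le
      rw [hsx, hΦS] at hfe
      have h1 : Φ (Real.sqrt (c - v y)) = y := by linarith
      have h2 : S y = Real.sqrt (c - v y) := by rw [← hSΦ (Real.sqrt (c - v y)), h1]
      rw [hu, h2, Real.sq_sqrt (by linarith [(hzs hy).2.1])]
      ring
    refine mem_nhdsGT_iff_exists_Ioo_subset.2 ⟨z, hz, fun y hy => ⟨hveq y hy, ?_⟩⟩
    rw [derivWithin_of_mem_nhds (Icc_mem_nhds (hmemT y hy).1 (hmemT y hy).2),
      derivWithin_of_mem_nhds (Icc_mem_nhds (hmeml y hy).1 (hmeml y hy).2)]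
    apply Filter.EventuallyEq.deriv_eq
    filter_upwards [isOpen_Ioo.mem_nhds hy] with t ht using hveq t ht

/-- Lemma 1.1 (existence part): for initial data on the accelerating critical trajectory
with `0 < u₀ < u_s`, there is a finite `l_max > 0` and a unique smooth accelerating
solution of the one-dimensional steady Euler–Poisson system on `[0, l_max]` whose speed
is strictly increasing on `[0, l_max)` and whose acceleration vanishes at `l_max`. -/
theorem stmt6
    (γ ρin S₀ J u₀ E₀ : ℝ)
    (hγ : 1 < γ) (hρin : 0 < ρin) (hS₀ : 0 < S₀) (hJ : 0 < J)
    (hζ₀ : 1 < uIn ρin J / usonic γ S₀ J)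
    (hinit : (u₀, E₀) ∈ critTrajAcc γ ρin S₀ J)
    (hu₀ : 0 < u₀) (hu₀s : u₀ < usonic γ S₀ J) :
    ∃ lmax : ℝ, 0 < lmax ∧
      ∃ u E : ℝ → ℝ,
        ContDiffOn ℝ (⊤ : ℕ∞) u (Icc 0 lmax) ∧ ContDiffOn ℝ (⊤ : ℕ∞) E (Icc 0 lmax) ∧
        (∀ x ∈ Icc (0:ℝ) lmax, 0 < u x) ∧
        u 0 = u₀ ∧ E 0 = E₀ ∧
        (∀ x ∈ Icc (0:ℝ) lmax,
          (u x ^ (γ + 1) - usonic γ S₀ J ^ (γ + 1)) * derivWithin u (Icc 0 lmax) x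
            = E x * u x ^ γ ∧
          derivWithin E (Icc 0 lmax) x = J / u x - ρin) ∧
        -- (i) strictly accelerating before l_max
        (∀ x ∈ Ico (0:ℝ) lmax, 0 < derivWithin u (Icc 0 lmax) x) ∧
        -- (ii) the acceleration vanishes at l_max
        Tendsto (derivWithin u (Icc 0 lmax)) (nhdsWithin lmax (Iio lmax)) (nhds 0) ∧
        -- uniqueness: any smooth solution with the same data agrees on the common interval
        (∀ T' : ℝ, 0 < T' → ∀ v F : ℝ → ℝ,
          ContDiffOn ℝ (⊤ : ℕ∞) v (Icc 0 T') → ContDiffOn ℝ (⊤ : ℕ∞) F (Icc 0 T') →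
          (∀ x ∈ Icc (0:ℝ) T', 0 < v x) →
          v 0 = u₀ → F 0 = E₀ →
          (∀ x ∈ Icc (0:ℝ) T',
            (v x ^ (γ + 1) - usonic γ S₀ J ^ (γ + 1)) * derivWithin v (Icc 0 T') x
              = F x * v x ^ γ ∧
            derivWithin F (Icc 0 T') x = J / v x - ρin) →
          ∀ x ∈ Icc (0:ℝ) (min lmax T'), v x = u x ∧ F x = E x) := by
  set a := usonic γ S₀ J with ha_def
  set b := uIn ρin J with hb_def
  have ha : 0 < a := by
    rw [ha_def, usonic]
    have : 0 < J ^ (γ - 1) := Real.rpow_pos_of_pos hJ _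
    have h2 : 0 < γ * S₀ * J ^ (γ - 1) := by positivity
    exact Real.rpow_pos_of_pos h2 _
  have hab : a < b := by rwa [one_lt_div ha] at hζ₀
  have hJb : J / b = ρin := by
    rw [hb_def, uIn]; field_simp
  have hb : 0 < b := ha.trans hab
  have hJe : J = ρin * b := by rw [← hJb]; field_simp
  obtain ⟨c, h, k, hbc, hhan, hkan, hk, hh, hkeq, hint, hintd⟩ := structA γ a b hγ ha hab
  have hac : a < c := hab.trans hbc
  set H := Hfun γ ρin S₀ J with hHdef
  have hHfun : H = fun u => ρin * ∫ t in a..u,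
      t ^ (-(γ + 1)) * ((t ^ (γ + 1) - a ^ (γ + 1)) * (b - t)) := by
    ext u
    rw [hHdef, Hfun, ← hb_def, ← ha_def, hJb]
  have hH : ∀ t > 0, H t = ρin * ((t - a) ^ 2 * (c - t) * h t) := by
    intro t ht
    rw [hHfun]; simp only []; rw [hint t ht]
  have hHd : ∀ t > 0, HasDerivAt H ((t ^ (γ + 1) - a ^ (γ + 1)) / t ^ γ * (J / t - ρin)) t := by
    intro t ht
    have := (hintd t ht).const_mul ρin
    rw [hHfun]
    refine this.congr_deriv ?_
    have hw : 0 < t ^ γ := Real.rpow_pos_of_pos ht _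
    rw [Real.rpow_neg ht.le, Real.rpow_add ht, Real.rpow_one, hJe]
    field_simp
  obtain ⟨⟨-, hE0⟩, hsign⟩ := hinit
  simp only [] at hE0 hsign
  have hu0c : u₀ < c := hu₀s.trans hac
  set s0 := Real.sqrt (c - u₀) with hs0
  have hs0pos : 0 < s0 := Real.sqrt_pos.2 (by linarith)
  have hs0sq : s0 ^ 2 = c - u₀ := Real.sq_sqrt (by linarith)
  set q : ℝ → ℝ := fun s =>
    Real.sqrt (2 * ρin * h (c - s ^ 2)) * (c - s ^ 2) ^ γ / (2 * k (c - s ^ 2)) with hq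
  have hmem : ∀ s ∈ Icc 0 s0, 0 < c - s ^ 2 ∧ c - s ^ 2 ≤ c := by
    intro s hs
    have := pow_le_pow_left₀ hs.1 hs.2 2
    exact ⟨by linarith, by linarith [sq_nonneg s]⟩
  have hrsm : ∀ t > 0, t ≤ c →
      ContDiffAt ℝ (⊤ : ℕ∞) (fun t => Real.sqrt (2 * ρin * h t)) t := by
    intro t ht htc
    have h1 : ContDiffAt ℝ (⊤ : ℕ∞) h t := (hhan t ht).contDiffAt
    have := hh t ht htc
    exact (contDiffAt_const.mul h1).sqrt (by positivity)
  have hqsm : ∀ s ∈ Icc 0 s0, ContDiffAt ℝ (⊤ : ℕ∞) q s := by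
    intro s hs
    obtain ⟨m1, m2⟩ := hmem s hs
    have h0 : ContDiffAt ℝ (⊤ : ℕ∞) (fun s : ℝ => c - s ^ 2) s := by fun_prop
    have h1 := (hrsm _ m1 m2).comp s h0
    have h2 : ContDiffAt ℝ (⊤ : ℕ∞) k (c - s ^ 2) := (hkan _ m1).contDiffAt
    have h3 := h2.comp s h0
    have h4 : ContDiffAt ℝ (⊤ : ℕ∞) (fun s : ℝ => (c - s ^ 2) ^ γ) s :=
      h0.rpow_const_of_ne m1.ne'
    have := hk _ m1
    exact (h1.mul h4).div (contDiffAt_const.mul h3) (mul_pos two_pos this).ne'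
  have hqpos : ∀ s ∈ Icc 0 s0, 0 < q s := by
    intro s hs
    obtain ⟨m1, m2⟩ := hmem s hs
    have h1 := hk _ m1
    have h2 := hh _ m1 m2
    have h3 : 0 < (c - s ^ 2) ^ γ := Real.rpow_pos_of_pos m1 _
    have : 0 < Real.sqrt (2 * ρin * h (c - s ^ 2)) := Real.sqrt_pos.2 (by positivity)
    simp only [hq]
    positivity
  obtain ⟨l, hl, Φ, S, hΦS, hSΦ, hS0, hSl, hSm, hSp, hSanti, hSd, hΦd, hSc, hΦc⟩ :=
    time_fun q s0 hs0pos (fun s hs => (hqsm s hs).continuousAt.continuousWithinAt) hqpos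
  have hSsm : ContDiffOn ℝ (⊤ : ℕ∞) S (Icc 0 l) :=
    smooth_ode q S l hl hSd fun x hx => hqsm _ (hSm x hx)
  set u : ℝ → ℝ := fun x => c - S x ^ 2 with hu
  set r : ℝ → ℝ := fun t => Real.sqrt (2 * ρin * h t) with hr
  set E : ℝ → ℝ := fun x => (u x - a) * S x * r (u x) with hE
  have husm : ContDiffOn ℝ (⊤ : ℕ∞) u (Icc 0 l) := contDiffOn_const.sub (hSsm.pow 2)
  have hum : ∀ x ∈ Icc 0 l, 0 < u x ∧ u x ≤ c := fun x hx => hmem _ (hSm x hx)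
  have hEsm : ContDiffOn ℝ (⊤ : ℕ∞) E (Icc 0 l) := by
    refine ((husm.sub contDiffOn_const).mul hSsm).mul ?_
    intro x hx
    exact (hrsm _ (hum x hx).1 (hum x hx).2).comp_contDiffWithinAt x (husm x hx)
  have hUD := uniqueDiffOn_Icc hl
  have hud : ∀ x ∈ Icc 0 l, HasDerivAt u (2 * S x * q (S x)) x := by
    intro x hx
    refine (((hSd x hx).pow 2).const_sub c).congr_deriv ?_
    simp
  have hud' : ∀ x ∈ Icc 0 l, derivWithin u (Icc 0 l) x = 2 * S x * q (S x) := fun x hx =>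
    (hud x hx).hasDerivWithinAt.derivWithin (hUD x hx)
  have hu0 : u 0 = u₀ := by simp only [hu, hS0, hs0sq]; ring
  have hode1 : ∀ x ∈ Icc (0:ℝ) l,
      (u x ^ (γ + 1) - a ^ (γ + 1)) * derivWithin u (Icc 0 l) x = E x * u x ^ γ := by
    intro x hx
    have h1 := hk _ (hum x hx).1
    rw [hud' x hx, hkeq _ (hum x hx).1]
    have : q (S x) = r (u x) * u x ^ γ / (2 * k (u x)) := rfl
    rw [this]
    simp only [hE]
    field_simp
  have hEsq : ∀ x ∈ Icc (0:ℝ) l, E x ^ 2 = 2 * H (u x) := by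
    intro x hx
    rw [hH _ (hum x hx).1]
    have h2 := hh _ (hum x hx).1 (hum x hx).2
    have : r (u x) ^ 2 = 2 * ρin * h (u x) := Real.sq_sqrt (by positivity)
    have h3 : c - u x = S x ^ 2 := by simp only [hu]; ring
    rw [h3]
    simp only [hE, mul_pow]
    rw [this]; ring
  have h0mem : (0:ℝ) ∈ Icc 0 l := ⟨le_rfl, hl.le⟩
  have hE00 : E 0 = E₀ := by
    have h1 := hEsq 0 h0mem
    rw [hu0] at h1
    have h2 : E 0 ≤ 0 := by
      simp only [hE]
      rw [hu0, hS0]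
      have : 0 ≤ r u₀ := Real.sqrt_nonneg _
      exact mul_nonpos_of_nonpos_of_nonneg
        (mul_nonpos_of_nonpos_of_nonneg (by linarith) hs0pos.le) this
    have h3 : E₀ ≤ 0 := by
      by_contra hcon
      push Not at hcon
      nlinarith
    have h4 : (-E 0) ^ 2 = (-E₀) ^ 2 := by rw [neg_sq, neg_sq, h1]; linarith
    have := (pow_left_inj₀ (by linarith) (by linarith) two_ne_zero).1 h4
    linarith
  have hode2 : ∀ x ∈ Icc (0:ℝ) l, derivWithin E (Icc 0 l) x = J / u x - ρin := by
    have hc1 : ContinuousOn (derivWithin E (Icc 0 l)) (Icc 0 l) :=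
      hEsm.continuousOn_derivWithin hUD (by exact_mod_cast le_top)
    have hc2 : ContinuousOn (fun x => J / u x - ρin) (Icc 0 l) :=
      (continuousOn_const.div husm.continuousOn fun x hx => (hum x hx).1.ne').sub continuousOn_const
    have hsub : Ioo 0 l ∩ {Φ (Real.sqrt (c - a))}ᶜ ⊆ Icc 0 l := fun x hx =>
      Ioo_subset_Icc_self hx.1
    refine Set.EqOn.of_subset_closure (s := Ioo 0 l ∩ {Φ (Real.sqrt (c - a))}ᶜ) ?_ hc1 hc2 hsub ?_
    · intro x hx
      have hx' := hsub hx
      obtain ⟨hx1, hx2⟩ := hx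
      have hSx := hSp x hx1.2
      have hua : u x ≠ a := by
        intro hua
        apply hx2
        have : c - a = S x ^ 2 := by rw [← hua]; simp only [hu]; ring
        rw [mem_singleton_iff, this, Real.sqrt_sq hSx.le, hΦS]
      have h2 := hh _ (hum x hx').1 (hum x hx').2
      have hrp : 0 < r (u x) := Real.sqrt_pos.2 (by positivity)
      have hEne : E x ≠ 0 :=
        mul_ne_zero (mul_ne_zero (sub_ne_zero.2 hua) hSx.ne') hrp.ne'
      have d1 : HasDerivWithinAt E (derivWithin E (Icc 0 l) x) (Icc 0 l) x :=
        (hEsm.differentiableOn (by simp) x hx').hasDerivWithinAt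
      have d2 := d1.pow 2
      have d3 := (((hHd (u x) (hum x hx').1).comp x (hud x hx')).const_mul 2).hasDerivWithinAt
        (s := Icc 0 l)
      have d4 := (hUD x hx').eq_deriv (Icc 0 l) d2 (d3.congr (fun y hy => hEsq y hy) (hEsq x hx'))
      have e1 := hode1 x hx'
      rw [hud' x hx'] at e1
      have hw : 0 < u x ^ γ := Real.rpow_pos_of_pos (hum x hx').1 _
      have e2 : (u x ^ (γ + 1) - a ^ (γ + 1)) / u x ^ γ * (J / u x - ρin) * (2 * S x * q (S x))
          = E x * (J / u x - ρin) := by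
        rw [show (u x ^ (γ + 1) - a ^ (γ + 1)) / u x ^ γ * (J / u x - ρin) * (2 * S x * q (S x)) =
          ((u x ^ (γ + 1) - a ^ (γ + 1)) * (2 * S x * q (S x))) / u x ^ γ * (J / u x - ρin) by ring,
          e1]
        field_simp
      rw [e2] at d4
      refine mul_left_cancel₀ hEne ?_
      simp only [Nat.cast_ofNat, Nat.add_one_sub_one, pow_one] at d4
      linarith
    · have hd : Dense ({Φ (Real.sqrt (c - a))}ᶜ : Set ℝ) := dense_compl_singleton _
      have := hd.open_subset_closure_inter (isOpen_Ioo (a := (0:ℝ)) (b := l))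
      rw [← closure_Ioo hl.ne]
      exact closure_minimal this isClosed_closure
  have hu'pos : ∀ x ∈ Ico (0:ℝ) l, 0 < derivWithin u (Icc 0 l) x := by
    intro x hx
    have hx' := Ico_subset_Icc_self hx
    rw [hud' x hx']
    have := hSp x hx.2
    have := hqpos _ (hSm x hx')
    positivity
  refine ⟨l, hl, u, E, husm, hEsm, fun x hx => (hum x hx).1, hu0, hE00,
    fun x hx => ⟨hode1 x hx, hode2 x hx⟩, hu'pos, ?_, ?_⟩
  · have hc1 : ContinuousOn (derivWithin u (Icc 0 l)) (Icc 0 l) :=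
      husm.continuousOn_derivWithin hUD (by exact_mod_cast le_top)
    have hlm : l ∈ Icc 0 l := ⟨hl.le, le_rfl⟩
    have h1 := (hc1 l hlm).tendsto
    rw [hud' l hlm, hSl] at h1
    simp only [mul_zero, zero_mul] at h1
    refine h1.mono_left ?_
    rw [← nhdsWithin_Ioo_eq_nhdsLT hl]
    exact nhdsWithin_mono _ Ioo_subset_Icc_self
  · intro T' hT v F hv hF hvpos hv0 hF0 hvode
    have hen := energy γ ρin J (a ^ (γ + 1)) T' hT H v F hHd (hv.differentiableOn (by simp))
      (hF.differentiableOn (by simp)) hvpos hvode (by rw [hF0, hv0]; linarith)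
    exact uniq γ ρin J a c u₀ s0 l T' H h k q Φ S u E v F hρin ha hac hu₀ hu₀s hs0 hk hh hkeq hH hHd
      (fun s => rfl) hΦS hSΦ hS0 hSm hSp hl hΦd hΦc (fun x => rfl) husm
      (fun x hx => (hum x hx).1) hode1 hu'pos hT hv hvpos hv0 (by rw [hF0, hE00])
      (fun x hx => (hvode x hx).1) hen
end

section
/- Assume ζ₀ := ū^{in}/u_s > 1, let (u₀, E₀) ∈ T_acc with 0 < u₀ < u_s, and let (ū₁, Ē) : [0, l_max] → ℝ² be the unique smooth accelerating solution of the one-dimensional Euler–Poisson ODE system with these initial data (ū₁ > 0, ū₁' > 0 on [0, l_max), ū₁'(x₁) → 0 as x₁ → l_max⁻). Then: (iii) the image {(ū₁(x₁), Ē(x₁)) : 0 ≤ x₁ ≤ l_max} equals T_acc ∩ {(u,E) : u ≥ u₀}; and (iv) there exists a unique constant l_s ∈ (0, l_max) such that ū₁(x₁) < u_s for x₁ < l_s, ū₁(l_s) = u_s, and ū₁(x₁) > u_s for x₁ > l_s. -/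
open Set Filter intervalIntegral

theorem aux_us_pos (γ S₀ J : ℝ) (hγ : 1 < γ) (hS₀ : 0 < S₀) (hJ : 0 < J) :
    0 < usonic γ S₀ J := by
  unfold usonic
  have : 0 < γ := by linarith
  positivity

theorem aux_H (γ ρin S₀ J : ℝ) (hγ : 1 < γ) (hρin : 0 < ρin) (hS₀ : 0 < S₀) (hJ : 0 < J)
    (v : ℝ) (hv : 0 < v) :
    HasDerivAt (Hfun γ ρin S₀ J) (ρin *
      (v ^ (-(γ + 1)) * ((v ^ (γ + 1) - usonic γ S₀ J ^ (γ + 1)) * (uIn ρin J - v)))) v := by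
  have hus := aux_us_pos γ S₀ J hγ hS₀ hJ
  have e : J / uIn ρin J = ρin := by unfold uIn; field_simp
  have hc : ContinuousOn (fun t : ℝ => t ^ (-(γ + 1)) *
      ((t ^ (γ + 1) - usonic γ S₀ J ^ (γ + 1)) * (uIn ρin J - t))) (Ioi 0) := by
    have h1 : ∀ p : ℝ, ContinuousOn (fun t : ℝ => t ^ p) (Ioi 0) := fun p =>
      continuousOn_id.rpow_const (fun x hx => Or.inl (ne_of_gt hx))
    exact (h1 _).mul (((h1 _).sub continuousOn_const).mul (continuousOn_const.sub continuousOn_id))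
  have hd := integral_hasDerivAt_right (a := usonic γ S₀ J) (b := v)
    (hc.mono (by
      intro t ht
      have := (uIcc_subset_Icc (a₂ := min (usonic γ S₀ J) v) (b₂ := max (usonic γ S₀ J) v)
        ⟨min_le_left _ _, le_max_left _ _⟩ ⟨min_le_right _ _, le_max_right _ _⟩ ht).1
      exact lt_of_lt_of_le (lt_min hus hv) this)).intervalIntegrable
    (hc.stronglyMeasurableAtFilter isOpen_Ioi v hv)
    (hc.continuousAt (Ioi_mem_nhds hv))
  have := hd.const_mul (J / uIn ρin J)
  rw [e] at this
  unfold Hfun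
  rw [e]
  exact this

theorem aux_Hs (γ ρin S₀ J : ℝ) : Hfun γ ρin S₀ J (usonic γ S₀ J) = 0 := by
  simp [Hfun]

theorem aux_anti1 (γ ρin S₀ J : ℝ) (hγ : 1 < γ) (hρin : 0 < ρin) (hS₀ : 0 < S₀) (hJ : 0 < J)
    (hlt : usonic γ S₀ J < uIn ρin J) :
    StrictAntiOn (Hfun γ ρin S₀ J) (Ioc 0 (usonic γ S₀ J)) := by
  refine strictAntiOn_of_deriv_neg (convex_Ioc _ _) (fun v hv =>
    (aux_H γ ρin S₀ J hγ hρin hS₀ hJ v hv.1).continuousAt.continuousWithinAt) ?_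
  intro v hv
  rw [interior_Ioc] at hv
  rw [(aux_H γ ρin S₀ J hγ hρin hS₀ hJ v hv.1).deriv]
  have h1 := Real.rpow_lt_rpow hv.1.le hv.2 (by linarith : 0 < γ + 1)
  have h2 : 0 < v ^ (-(γ + 1)) := Real.rpow_pos_of_pos hv.1 _
  have h3 : 0 < uIn ρin J - v := by linarith [hv.2]
  exact mul_neg_of_pos_of_neg hρin (mul_neg_of_pos_of_neg h2
    (mul_neg_of_neg_of_pos (by linarith) h3))

theorem aux_mono (γ ρin S₀ J : ℝ) (hγ : 1 < γ) (hρin : 0 < ρin) (hS₀ : 0 < S₀) (hJ : 0 < J) :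
    StrictMonoOn (Hfun γ ρin S₀ J) (Icc (usonic γ S₀ J) (uIn ρin J)) := by
  have hus := aux_us_pos γ S₀ J hγ hS₀ hJ
  refine strictMonoOn_of_deriv_pos (convex_Icc _ _) (fun v hv =>
    (aux_H γ ρin S₀ J hγ hρin hS₀ hJ v (hus.trans_le hv.1)).continuousAt.continuousWithinAt) ?_
  intro v hv
  rw [interior_Icc] at hv
  have hv0 := hus.trans hv.1
  rw [(aux_H γ ρin S₀ J hγ hρin hS₀ hJ v hv0).deriv]
  have h1 := Real.rpow_lt_rpow hus.le hv.1 (by linarith : 0 < γ + 1)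
  have h2 : 0 < v ^ (-(γ + 1)) := Real.rpow_pos_of_pos hv0 _
  exact mul_pos hρin (mul_pos h2 (mul_pos (by linarith) (by linarith [hv.2])))

theorem aux_anti2 (γ ρin S₀ J : ℝ) (hγ : 1 < γ) (hρin : 0 < ρin) (hS₀ : 0 < S₀) (hJ : 0 < J)
    (hlt : usonic γ S₀ J < uIn ρin J) :
    StrictAntiOn (Hfun γ ρin S₀ J) (Ici (uIn ρin J)) := by
  have hus := aux_us_pos γ S₀ J hγ hS₀ hJ
  refine strictAntiOn_of_deriv_neg (convex_Ici _) (fun v hv =>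
    (aux_H γ ρin S₀ J hγ hρin hS₀ hJ v
      ((hus.trans hlt).trans_le hv)).continuousAt.continuousWithinAt) ?_
  intro v hv
  rw [interior_Ici] at hv
  have hv1 : uIn ρin J < v := hv
  have hv0 := (hus.trans hlt).trans hv1
  rw [(aux_H γ ρin S₀ J hγ hρin hS₀ hJ v hv0).deriv]
  have h1 := Real.rpow_lt_rpow hus.le (hlt.trans hv1) (by linarith : 0 < γ + 1)
  have h2 : 0 < v ^ (-(γ + 1)) := Real.rpow_pos_of_pos hv0 _
  exact mul_neg_of_pos_of_neg hρin (mul_neg_of_pos_of_neg h2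
    (mul_neg_of_pos_of_neg (by linarith) (by linarith)))

/-- Lemma 1.1 (iii) and (iv): the accelerating smooth transonic solution traverses exactly
the portion `u ≥ u₀` of the accelerating critical trajectory, and passes through the sonic
speed at a unique location `l_s ∈ (0, l_max)`. -/
theorem stmt7
    (γ ρin S₀ J u₀ E₀ lmax : ℝ)
    (hγ : 1 < γ) (hρin : 0 < ρin) (hS₀ : 0 < S₀) (hJ : 0 < J)
    (hζ₀ : 1 < uIn ρin J / usonic γ S₀ J)
    (hinit : (u₀, E₀) ∈ critTrajAcc γ ρin S₀ J)
    (hu₀ : 0 < u₀) (hu₀s : u₀ < usonic γ S₀ J)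
    (hlmax : 0 < lmax)
    (u E : ℝ → ℝ)
    (husm : ContDiffOn ℝ (⊤ : ℕ∞) u (Icc 0 lmax)) (hEsm : ContDiffOn ℝ (⊤ : ℕ∞) E (Icc 0 lmax))
    (hupos : ∀ x ∈ Icc (0:ℝ) lmax, 0 < u x)
    (hu0 : u 0 = u₀) (hE0 : E 0 = E₀)
    (hODE : ∀ x ∈ Icc (0:ℝ) lmax,
      (u x ^ (γ + 1) - usonic γ S₀ J ^ (γ + 1)) * derivWithin u (Icc 0 lmax) x
        = E x * u x ^ γ ∧
      derivWithin E (Icc 0 lmax) x = J / u x - ρin)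
    (hacc : ∀ x ∈ Ico (0:ℝ) lmax, 0 < derivWithin u (Icc 0 lmax) x)
    (hacc0 : Tendsto (derivWithin u (Icc 0 lmax)) (nhdsWithin lmax (Iio lmax)) (nhds 0)) :
    -- (iii) the image of the solution is T_acc ∩ {u ≥ u₀}
    ((fun x => (u x, E x)) '' Icc 0 lmax
      = critTrajAcc γ ρin S₀ J ∩ {p : ℝ × ℝ | u₀ ≤ p.1}) ∧
    -- (iv) a unique sonic location l_s ∈ (0, l_max)
    (∃! ls : ℝ, ls ∈ Ioo 0 lmax ∧
      ∀ x ∈ Icc (0:ℝ) lmax,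
        (x < ls → u x < usonic γ S₀ J) ∧
        (x = ls → u x = usonic γ S₀ J) ∧
        (ls < x → usonic γ S₀ J < u x)) := by
  have hus := aux_us_pos γ S₀ J hγ hS₀ hJ
  have hlt : usonic γ S₀ J < uIn ρin J := by rwa [one_lt_div hus] at hζ₀
  have hH := aux_H γ ρin S₀ J hγ hρin hS₀ hJ
  have hA1 := aux_anti1 γ ρin S₀ J hγ hρin hS₀ hJ hlt
  have hM := aux_mono γ ρin S₀ J hγ hρin hS₀ hJ
  have hA2 := aux_anti2 γ ρin S₀ J hγ hρin hS₀ hJ hlt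
  have hHs := aux_Hs γ ρin S₀ J
  have huI : uIn ρin J = J / ρin := rfl
  set us := usonic γ S₀ J with hus_def
  set H := Hfun γ ρin S₀ J with hH_def
  set ui := uIn ρin J with hui_def
  have hγ1 : 0 < γ + 1 := by linarith
  have hUD : UniqueDiffOn ℝ (Icc 0 lmax) := uniqueDiffOn_Icc hlmax
  have h0m : (0:ℝ) ∈ Icc 0 lmax := ⟨le_rfl, hlmax.le⟩
  have hlm : lmax ∈ Icc 0 lmax := ⟨hlmax.le, le_rfl⟩
  have hdu : ∀ x ∈ Icc 0 lmax,
      HasDerivWithinAt u (derivWithin u (Icc 0 lmax) x) (Icc 0 lmax) x := fun x hx =>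
    (husm.differentiableOn (by simp) x hx).hasDerivWithinAt
  have hdE : ∀ x ∈ Icc 0 lmax,
      HasDerivWithinAt E (derivWithin E (Icc 0 lmax) x) (Icc 0 lmax) x := fun x hx =>
    (hEsm.differentiableOn (by simp) x hx).hasDerivWithinAt
  have hsm : ContDiffOn ℝ 1 (derivWithin u (Icc 0 lmax)) (Icc 0 lmax) :=
    husm.derivWithin hUD (by
      have h : ((2 : ℕ∞) : WithTop ℕ∞) ≤ ((⊤ : ℕ∞) : WithTop ℕ∞) := WithTop.coe_le_coe.2 le_top
      have e : (1 + 1 : WithTop ℕ∞) = ((2 : ℕ∞) : WithTop ℕ∞) := by norm_num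
      rw [e]; exact h)
  -- derivative at the end point
  have hum : derivWithin u (Icc 0 lmax) lmax = 0 := by
    have hc : Tendsto (derivWithin u (Icc 0 lmax)) (nhdsWithin lmax (Iio lmax))
        (nhds (derivWithin u (Icc 0 lmax) lmax)) := by
      have := hsm.continuousOn lmax hlm
      have h2 : ContinuousWithinAt (derivWithin u (Icc 0 lmax)) (Ico 0 lmax) lmax :=
        this.mono Ico_subset_Icc_self
      unfold ContinuousWithinAt at h2
      rwa [nhdsWithin_Ico_eq_nhdsLT hlmax] at h2
    exact tendsto_nhds_unique hc hacc0
  have hEm : E lmax = 0 := by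
    have := (hODE lmax hlm).1
    rw [hum, mul_zero] at this
    have h2 := Real.rpow_pos_of_pos (hupos _ hlm) γ
    rcases mul_eq_zero.1 this.symm with h | h
    · exact h
    · linarith
  -- strict monotonicity
  have hmono : StrictMonoOn u (Icc 0 lmax) := by
    refine strictMonoOn_of_deriv_pos (convex_Icc _ _) husm.continuousOn ?_
    intro x hx
    rw [interior_Icc] at hx
    have := hacc x ⟨hx.1.le, hx.2⟩
    rwa [derivWithin_of_mem_nhds (Icc_mem_nhds hx.1 hx.2)] at this
  have hdpos : ∀ x ∈ Icc 0 lmax, 0 ≤ derivWithin u (Icc 0 lmax) x := by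
    intro x hx
    rcases hx.2.eq_or_lt with h | h
    · rw [h, hum]
    · exact (hacc x ⟨hx.1, h⟩).le
  -- energy
  have hen : ∀ x ∈ Icc 0 lmax, E x ^ 2 / 2 - H (u x) = 0 := by
    have hd : ∀ x ∈ Icc 0 lmax,
        HasDerivWithinAt (fun x => E x ^ 2 / 2 - H (u x)) 0 (Icc 0 lmax) x := by
      intro x hx
      have h1 := (((hdE x hx).pow 2).div_const 2).sub
        ((hH (u x) (hupos x hx)).comp_hasDerivWithinAt x (hdu x hx))
      refine h1.congr_deriv ?_
      obtain ⟨o1, o2⟩ := hODE x hx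
      have hu := hupos x hx
      rw [o2]
      have e1 : ρin * (u x ^ (-(γ + 1)) * ((u x ^ (γ + 1) - us ^ (γ + 1)) * (ui - u x))) *
          derivWithin u (Icc 0 lmax) x
          = ρin * (u x ^ (-(γ + 1)) * (ui - u x)) * (E x * u x ^ γ) := by
        rw [← o1]; ring
      rw [e1]
      have e2 : u x ^ (-(γ + 1)) * u x ^ γ = (u x)⁻¹ := by
        rw [← Real.rpow_add hu, ← Real.rpow_neg_one]; congr 1; ring
      have e3 : ρin * (u x ^ (-(γ + 1)) * (ui - u x)) * (E x * u x ^ γ)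
          = ρin * (ui - u x) * E x * (u x ^ (-(γ + 1)) * u x ^ γ) := by ring
      rw [e3, e2, huI]
      field_simp
      push_cast
      ring
    intro x hx
    have := constant_of_derivWithin_zero (fun x hx => (hd x hx).differentiableWithinAt)
      (fun x hx => (hd x (Ico_subset_Icc_self hx)).derivWithin
        (hUD x (Ico_subset_Icc_self hx))) x hx
    rw [this, hu0, hE0]
    exact hinit.1.2
  have hHm : H (u lmax) = 0 := by
    have := hen lmax hlm
    rw [hEm] at this
    linarith
  -- not sonic at the end
  have hns : u lmax ≠ us := by
    intro h
    have hl := ((hdu lmax hlm).rpow_const (p := γ + 1)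
      (Or.inl (hupos _ hlm).ne')).sub_const (us ^ (γ + 1))
    have hl2 := hl.mul ((hsm.differentiableOn (by simp) lmax hlm).hasDerivWithinAt)
    have hr := (hdE lmax hlm).mul ((hdu lmax hlm).rpow_const (p := γ) (Or.inl (hupos _ hlm).ne'))
    have hr2 := hl2.congr (fun x hx => (hODE x hx).1.symm) (hODE lmax hlm).1.symm
    have := (hUD lmax hlm).eq_deriv _ hr2 hr
    rw [hum, hEm, h, (hODE lmax hlm).2, h] at this
    simp only [sub_self, mul_zero, zero_mul, add_zero] at this
    have h2 := Real.rpow_pos_of_pos hus γ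
    have h3 : 0 < J / us - ρin := by
      rw [huI, lt_div_iff₀ hρin] at hlt
      rw [sub_pos, lt_div_iff₀ hus]; linarith
    have := mul_pos h3 h2
    linarith
  have hmi : ui < u lmax := by
    have hp := hupos _ hlm
    by_contra hcon
    push Not at hcon
    rcases lt_or_gt_of_ne hns with h | h
    · have := hA1 ⟨hp, h.le⟩ ⟨hus, le_rfl⟩ h
      linarith
    · have := hM ⟨le_rfl, hlt.le⟩ ⟨h.le, hcon⟩ h
      linarith
  have hsgn : ∀ x ∈ Icc 0 lmax, 0 ≤ (u x - us) * E x := by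
    intro x hx
    have o1 := (hODE x hx).1
    have hp := Real.rpow_pos_of_pos (hupos x hx) γ
    have hd := hdpos x hx
    rcases le_total us (u x) with h | h
    · have h1 := Real.rpow_le_rpow hus.le h hγ1.le
      have h2 : 0 ≤ E x * u x ^ γ := by
        rw [← o1]; exact mul_nonneg (by linarith) hd
      exact mul_nonneg (by linarith) (nonneg_of_mul_nonneg_left h2 hp)
    · have h1 := Real.rpow_le_rpow (hupos x hx).le h hγ1.le
      have h2 : E x * u x ^ γ ≤ 0 := by
        rw [← o1]; exact mul_nonpos_of_nonpos_of_nonneg (by linarith) hd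
      exact mul_nonneg_of_nonpos_of_nonpos (by linarith) (nonpos_of_mul_nonpos_left h2 hp)
  have hivt : ∀ v, u₀ ≤ v → v ≤ u lmax → ∃ x ∈ Icc 0 lmax, u x = v := by
    intro v h1 h2
    exact intermediate_value_Icc hlmax.le husm.continuousOn ⟨by rw [hu0]; exact h1, h2⟩
  refine ⟨?_, ?_⟩
  · ext ⟨v, F⟩
    constructor
    · rintro ⟨x, hx, hxe⟩
      simp only [Prod.mk.injEq] at hxe
      obtain ⟨rfl, rfl⟩ := hxe
      refine ⟨⟨⟨hupos x hx, hen x hx⟩, hsgn x hx⟩, ?_⟩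
      have := hmono.monotoneOn h0m hx hx.1
      rw [hu0] at this
      exact this
    · rintro ⟨⟨⟨hv, hvF⟩, hvs⟩, hvu⟩
      have hv : 0 < v := hv
      have hvF : F ^ 2 / 2 - H v = 0 := hvF
      have hvs : 0 ≤ (v - us) * F := hvs
      have hvu : u₀ ≤ v := hvu
      have hvm : v ≤ u lmax := by
        by_contra hcon
        push Not at hcon
        have := hA2 (mem_Ici.2 hmi.le) (mem_Ici.2 (hmi.trans hcon).le) hcon
        nlinarith [sq_nonneg F]
      obtain ⟨x, hx, rfl⟩ := hivt v hvu hvm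
      refine ⟨x, hx, ?_⟩
      simp only [Prod.mk.injEq, true_and]
      have hsq : E x ^ 2 = F ^ 2 := by linarith [hen x hx]
      have hs := hsgn x hx
      rcases sq_eq_sq_iff_eq_or_eq_neg.1 hsq with h | h
      · exact h
      · by_cases hz : u x = us
        · rw [hz, hHs] at hvF
          have : F = 0 := by
            have : F ^ 2 = 0 := by linarith
            exact pow_eq_zero_iff (two_ne_zero) |>.1 this
          rw [h, this, neg_zero]
        · rw [h] at hs
          have : (u x - us) * F = 0 := by linarith
          rcases mul_eq_zero.1 this with h' | h'
          · exact absurd (sub_eq_zero.1 h') hz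
          · rw [h, h', neg_zero]
  · obtain ⟨ls, hls, hlsu⟩ := hivt us hu₀s.le (hlt.trans hmi).le
    have hls0 : 0 < ls := by
      rcases hls.1.eq_or_lt with h | h
      · rw [← h, hu0] at hlsu; linarith
      · exact h
    have hls1 : ls < lmax := by
      rcases hls.2.eq_or_lt with h | h
      · rw [h] at hlsu; exact absurd hlsu hns
      · exact h
    refine ⟨ls, ⟨⟨hls0, hls1⟩, ?_⟩, ?_⟩
    · intro x hx
      refine ⟨fun h => ?_, fun h => ?_, fun h => ?_⟩
      · rw [← hlsu]; exact hmono hx hls h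
      · rw [h, hlsu]
      · rw [← hlsu]; exact hmono hls hx h
    · rintro y ⟨hy, hy2⟩
      have hy' := Ioo_subset_Icc_self hy
      exact hmono.injOn hy' hls (((hy2 y hy').2.1 rfl).trans hlsu.symm)
end

section
/- Assume ζ₀ := ū^{in}/u_s > 1, let (u₀, E₀) ∈ T_acc with 0 < u₀ < u_s, and let (ū₁, Ē) : [0, l_max] → ℝ² be a smooth solution of the system (ū₁^{γ+1} − u_s^{γ+1})·ū₁' = Ē·ū₁^γ, Ē' = J/ū₁ − ρ̄^{in} with (ū₁, Ē)(0) = (u₀, E₀), ū₁ > 0, and ū₁' > 0 on [0, l_max). Define φ̄(x₁) := ∫₀^{x₁} ū₁(t) dt. Then φ̄ is smooth on [0, l_max] and satisfies, for all x₁ ∈ [0, l_max], the second-order degenerate equation ((φ̄'(x₁))^{γ+1} − u_s^{γ+1})·φ̄''(x₁) − sgn(φ̄'(x₁) − u_s)·√(2H(φ̄'(x₁)))·(φ̄'(x₁))^γ = 0, where sgn(s) = 1 for s > 0, sgn(s) = −1 for s < 0, and sgn(0) = 0. -/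
open Set Filter intervalIntegral

theorem aux_Hderiv (γ ρin S₀ J : ℝ) (hγ : 1 < γ) (hs : 0 < usonic γ S₀ J) (v : ℝ) (hv : 0 < v) :
    HasDerivAt (Hfun γ ρin S₀ J) ((J / uIn ρin J) *
      (v ^ (-(γ + 1)) * ((v ^ (γ + 1) - usonic γ S₀ J ^ (γ + 1)) * (uIn ρin J - v)))) v := by
  have hc : ∀ t : ℝ, 0 < t → ContinuousAt (fun t : ℝ => t ^ (-(γ + 1)) *
      ((t ^ (γ + 1) - usonic γ S₀ J ^ (γ + 1)) * (uIn ρin J - t))) t := by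
    intro t ht
    have h1 := Real.continuousAt_rpow_const t (-(γ + 1)) (Or.inl ht.ne')
    have h2 := Real.continuousAt_rpow_const t (γ + 1) (Or.inl ht.ne')
    exact h1.mul ((h2.sub continuousAt_const).mul (continuousAt_const.sub continuousAt_id))
  unfold Hfun
  apply HasDerivAt.const_mul
  apply intervalIntegral.integral_hasDerivAt_right
  · apply ContinuousOn.intervalIntegrable
    intro t ht
    exact (hc t (lt_of_lt_of_le (lt_min hs hv) ht.1)).continuousWithinAt
  · exact ContinuousOn.stronglyMeasurableAtFilter isOpen_Ioi
      (fun t ht => (hc t ht).continuousWithinAt) v hv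
  · exact hc v hv

/-- The potential `φ̄(x₁) = ∫₀^{x₁} ū₁` of the accelerating smooth transonic solution is a
globally smooth solution of a second-order degenerate equation of Keldysh type. -/
theorem stmt9
    (γ ρin S₀ J u₀ E₀ lmax : ℝ)
    (hγ : 1 < γ) (hρin : 0 < ρin) (hS₀ : 0 < S₀) (hJ : 0 < J)
    (hζ₀ : 1 < uIn ρin J / usonic γ S₀ J)
    (hinit : (u₀, E₀) ∈ critTrajAcc γ ρin S₀ J)
    (hu₀ : 0 < u₀) (hu₀s : u₀ < usonic γ S₀ J)
    (hlmax : 0 < lmax)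
    (u E : ℝ → ℝ)
    (husm : ContDiffOn ℝ (⊤ : ℕ∞) u (Icc 0 lmax)) (hEsm : ContDiffOn ℝ (⊤ : ℕ∞) E (Icc 0 lmax))
    (hupos : ∀ x ∈ Icc (0:ℝ) lmax, 0 < u x)
    (hu0 : u 0 = u₀) (hE0 : E 0 = E₀)
    (hODE : ∀ x ∈ Icc (0:ℝ) lmax,
      (u x ^ (γ + 1) - usonic γ S₀ J ^ (γ + 1)) * derivWithin u (Icc 0 lmax) x
        = E x * u x ^ γ ∧
      derivWithin E (Icc 0 lmax) x = J / u x - ρin)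
    (hacc : ∀ x ∈ Ico (0:ℝ) lmax, 0 < derivWithin u (Icc 0 lmax) x)
    :
    ContDiffOn ℝ (⊤ : ℕ∞) (fun x => ∫ t in (0:ℝ)..x, u t) (Icc 0 lmax) ∧
    ∀ x ∈ Icc (0:ℝ) lmax,
      (derivWithin (fun y => ∫ t in (0:ℝ)..y, u t) (Icc 0 lmax) x ^ (γ + 1)
          - usonic γ S₀ J ^ (γ + 1))
        * derivWithin (fun y => derivWithin (fun z => ∫ t in (0:ℝ)..z, u t) (Icc 0 lmax) y)
            (Icc 0 lmax) x
      - Real.sign (derivWithin (fun y => ∫ t in (0:ℝ)..y, u t) (Icc 0 lmax) x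
            - usonic γ S₀ J)
        * Real.sqrt (2 * Hfun γ ρin S₀ J
            (derivWithin (fun y => ∫ t in (0:ℝ)..y, u t) (Icc 0 lmax) x))
        * derivWithin (fun y => ∫ t in (0:ℝ)..y, u t) (Icc 0 lmax) x ^ γ = 0 := by
  have hus : 0 < usonic γ S₀ J := by unfold usonic; positivity
  have hin : 0 < uIn ρin J := by unfold uIn; positivity
  have hUD : UniqueDiffOn ℝ (Icc (0:ℝ) lmax) := uniqueDiffOn_Icc hlmax
  have huc : ContinuousOn u (Icc 0 lmax) := husm.continuousOn
  have hφ : ∀ x ∈ Icc (0:ℝ) lmax,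
      HasDerivWithinAt (fun y => ∫ t in (0:ℝ)..y, u t) (u x) (Icc 0 lmax) x := by
    intro x hx
    haveI : Fact (x ∈ Icc (0:ℝ) lmax) := ⟨hx⟩
    refine intervalIntegral.integral_hasDerivWithinAt_right (t := Icc 0 lmax) ?_ ?_ (huc x hx)
    · apply ContinuousOn.intervalIntegrable
      rw [uIcc_of_le hx.1]
      exact huc.mono (Icc_subset_Icc_right hx.2)
    · exact huc.stronglyMeasurableAtFilter_nhdsWithin measurableSet_Icc x
  have hφ' : ∀ x ∈ Icc (0:ℝ) lmax,
      derivWithin (fun y => ∫ t in (0:ℝ)..y, u t) (Icc 0 lmax) x = u x :=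
    fun x hx => (hφ x hx).derivWithin (hUD x hx)
  have hdu : ∀ x ∈ Icc (0:ℝ) lmax, HasDerivWithinAt u (derivWithin u (Icc 0 lmax) x) (Icc 0 lmax) x :=
    fun x hx => ((husm.differentiableOn (by simp)) x hx).hasDerivWithinAt
  have hdE : ∀ x ∈ Icc (0:ℝ) lmax, HasDerivWithinAt E (derivWithin E (Icc 0 lmax) x) (Icc 0 lmax) x :=
    fun x hx => ((hEsm.differentiableOn (by simp)) x hx).hasDerivWithinAt
  constructor
  · rw [show ((⊤ : ℕ∞) : WithTop ℕ∞) = ((⊤ : ℕ∞) : WithTop ℕ∞) from rfl,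
      contDiffOn_infty_iff_derivWithin hUD]
    exact ⟨fun x hx => (hφ x hx).differentiableWithinAt, husm.congr hφ'⟩
  -- nonnegativity of the derivative
  have hnn : ∀ x ∈ Icc (0:ℝ) lmax, 0 ≤ derivWithin u (Icc 0 lmax) x := by
    have hm : MonotoneOn u (Icc 0 lmax) := by
      apply monotoneOn_of_deriv_nonneg (convex_Icc _ _) huc
      · exact (husm.differentiableOn (by simp)).mono interior_subset
      · intro x hx
        rw [interior_Icc] at hx
        rw [← derivWithin_of_mem_nhds (Icc_mem_nhds hx.1 hx.2)]
        exact (hacc x ⟨hx.1.le, hx.2⟩).le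
    intro x hx
    exact hm.derivWithin_nonneg
  -- energy conservation
  have hen : ∀ x ∈ Icc (0:ℝ) lmax, E x ^ 2 / 2 - Hfun γ ρin S₀ J (u x) = 0 := by
    have hd : ∀ x ∈ Icc (0:ℝ) lmax, HasDerivWithinAt
        (fun x => E x ^ 2 / 2 - Hfun γ ρin S₀ J (u x)) 0 (Icc 0 lmax) x := by
      intro x hx
      have h1 := (((hdE x hx).pow 2).div_const 2).sub
        ((aux_Hderiv γ ρin S₀ J hγ hus (u x) (hupos x hx)).comp_hasDerivWithinAt x (hdu x hx))
      refine h1.congr_deriv ?_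
      obtain ⟨o1, o2⟩ := hODE x hx
      have hp := hupos x hx
      have e1 : u x ^ (-(γ + 1)) * u x ^ γ = (u x)⁻¹ := by
        rw [← Real.rpow_add hp, show -(γ + 1) + γ = -1 by ring, Real.rpow_neg_one]
      have e2 : J / uIn ρin J = ρin := by unfold uIn; field_simp
      have e3 : ρin * uIn ρin J = J := by unfold uIn; field_simp
      rw [o2, e2]
      have e4 : ρin * (u x ^ (-(γ + 1)) * ((u x ^ (γ + 1) - usonic γ S₀ J ^ (γ + 1)) *
          (uIn ρin J - u x))) * derivWithin u (Icc 0 lmax) x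
          = (ρin * uIn ρin J - ρin * u x) * E x * (u x ^ (-(γ + 1)) * u x ^ γ) := by
        linear_combination (ρin * u x ^ (-(γ + 1)) * (uIn ρin J - u x)) * o1
      rw [e4, e1, e3]
      field_simp
      ring
    intro x hx
    have hc := constant_of_derivWithin_zero (f := fun x => E x ^ 2 / 2 - Hfun γ ρin S₀ J (u x))
      (fun y hy => (hd y hy).differentiableWithinAt)
      (fun y hy => (hd y (Ico_subset_Icc_self hy)).derivWithin (hUD y (Ico_subset_Icc_self hy))) x hx
    rw [hc, hu0, hE0]
    exact hinit.1.2
  intro x hx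
  rw [derivWithin_congr hφ' (hφ' x hx), hφ' x hx, (hODE x hx).1,
    show 2 * Hfun γ ρin S₀ J (u x) = E x ^ 2 by linarith [hen x hx], Real.sqrt_sq_eq_abs]
  have hp := hupos x hx
  have hpg : 0 < u x ^ γ := Real.rpow_pos_of_pos hp γ
  have o1 := (hODE x hx).1
  have hn := hnn x hx
  rcases lt_trichotomy (u x) (usonic γ S₀ J) with h | h | h
  · have h2 := Real.rpow_lt_rpow hp.le h (by linarith : 0 < γ + 1)
    have : E x ≤ 0 := by
      by_contra! hE
      nlinarith [mul_pos hE hpg, mul_nonneg (sub_pos.2 h2).le hn]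
    rw [Real.sign_of_neg (sub_neg.2 h), abs_of_nonpos this]; ring
  · have : E x = 0 := by
      rw [h, sub_self, zero_mul, ← h] at o1
      rcases mul_eq_zero.1 o1.symm with h | h
      · exact h
      · exact absurd h hpg.ne'
    simp [this]
  · have h2 := Real.rpow_lt_rpow hus.le h (by linarith : 0 < γ + 1)
    have : 0 ≤ E x := by
      by_contra! hE
      nlinarith [mul_pos (neg_pos.2 hE) hpg, mul_nonneg (sub_pos.2 h2).le hn]
    rw [Real.sign_of_pos (sub_pos.2 h), abs_of_nonneg this]; ring
end

section
/- Assume ζ₀ := ū^{in}/u_s > 1, let (u₀, E₀) ∈ T_acc with 0 < u₀ < u_s, and let (ū₁, Ē) : [0, l_max] → ℝ² be a smooth solution of the system (ū₁^{γ+1} − u_s^{γ+1})·ū₁' = Ē·ū₁^γ, Ē' = J/ū₁ − ρ̄^{in} with (ū₁, Ē)(0) = (u₀, E₀), ū₁ > 0, and ū₁' > 0 on [0, l_max). Define α₁₁ := 1 − (ū₁/u_s)^{γ+1} and β₁ := (Ē − (γ+1)ū₁'ū₁)·ū₁^{γ−1}/u_s^{γ+1}. Then for every L ∈ (0, l_max)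 there exists a constant λ_L > 0 such that for every m ∈ {0,1,2,3} and every x₁ ∈ [0, L]: −2β₁(x₁) − (2m−1)·α₁₁'(x₁) ≥ λ_L. -/
open Set Filter intervalIntegral

/-- The key coefficient inequality `−2β₁ − (2m−1)∂₁α₁₁ ≥ λ_L > 0` on `[0, L]`, `L < l_max`,
for `m = 0,1,2,3`, along the accelerating smooth transonic solution. -/
theorem stmt11
    (γ ρin S₀ J u₀ E₀ lmax : ℝ)
    (hγ : 1 < γ) (hρin : 0 < ρin) (hS₀ : 0 < S₀) (hJ : 0 < J)
    (hζ₀ : 1 < uIn ρin J / usonic γ S₀ J)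
    (hinit : (u₀, E₀) ∈ critTrajAcc γ ρin S₀ J)
    (hu₀ : 0 < u₀) (hu₀s : u₀ < usonic γ S₀ J)
    (hlmax : 0 < lmax)
    (u E : ℝ → ℝ)
    (husm : ContDiffOn ℝ (⊤ : ℕ∞) u (Icc 0 lmax)) (hEsm : ContDiffOn ℝ (⊤ : ℕ∞) E (Icc 0 lmax))
    (hupos : ∀ x ∈ Icc (0:ℝ) lmax, 0 < u x)
    (hu0 : u 0 = u₀) (hE0 : E 0 = E₀)
    (hODE : ∀ x ∈ Icc (0:ℝ) lmax,
      (u x ^ (γ + 1) - usonic γ S₀ J ^ (γ + 1)) * derivWithin u (Icc 0 lmax) x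
        = E x * u x ^ γ ∧
      derivWithin E (Icc 0 lmax) x = J / u x - ρin)
    (hacc : ∀ x ∈ Ico (0:ℝ) lmax, 0 < derivWithin u (Icc 0 lmax) x)
    :
    ∀ L : ℝ, 0 < L → L < lmax →
      ∃ lamL : ℝ, 0 < lamL ∧
        ∀ m : ℕ, m ≤ 3 → ∀ x ∈ Icc (0:ℝ) L,
          lamL ≤
            -2 * ((E x - (γ + 1) * derivWithin u (Icc 0 lmax) x * u x) * u x ^ (γ - 1)
                    / usonic γ S₀ J ^ (γ + 1))
              - (2 * (m : ℝ) - 1)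
                * derivWithin (fun y => 1 - (u y / usonic γ S₀ J) ^ (γ + 1))
                    (Icc 0 lmax) x := by
  intro L hL hLl
  set s := usonic γ S₀ J with hs_def
  have hs : 0 < s := lt_trans hu₀ hu₀s
  set I := Icc (0:ℝ) lmax with hI
  have hud : UniqueDiffOn ℝ I := uniqueDiffOn_Icc hlmax
  have hsub : Icc (0:ℝ) L ⊆ I := Icc_subset_Icc_right hLl.le
  have hdc : ContinuousOn (derivWithin u I) I :=
    husm.continuousOn_derivWithin hud (by norm_cast)
  have hc : ContinuousOn (fun x => 2 * derivWithin u I x / u x) (Icc 0 L) :=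
    ((continuousOn_const.mul hdc).div husm.continuousOn
      (fun x hx => (hupos x hx).ne')).mono hsub
  obtain ⟨x₀, hx₀, hmin⟩ := isCompact_Icc.exists_isMinOn (nonempty_Icc.2 hL.le) hc
  refine ⟨2 * derivWithin u I x₀ / u x₀, ?_, ?_⟩
  · have h1 := hacc x₀ ⟨hx₀.1, hx₀.2.trans_lt hLl⟩
    have h2 := hupos x₀ (hsub hx₀)
    positivity
  intro m _ x hx
  refine (isMinOn_iff.1 hmin x hx).trans ?_
  have hxI := hsub hx
  have hp := hacc x ⟨hx.1, hx.2.trans_lt hLl⟩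
  have hux := hupos x hxI
  have hode := (hODE x hxI).1
  have hdu : HasDerivWithinAt u (derivWithin u I x) I x :=
    ((husm.differentiableOn (by simp)) x hxI).hasDerivWithinAt
  have hda : HasDerivWithinAt (fun y => 1 - (u y / s) ^ (γ + 1))
      (-(derivWithin u I x / s * (γ + 1) * (u x / s) ^ (γ + 1 - 1))) I x :=
    ((hdu.div_const s).rpow_const (Or.inl (div_pos hux hs).ne')).const_sub 1
  rw [hda.derivWithin (hud x hxI)]
  set p := derivWithin u I x
  set v := u x
  have e1 : v ^ γ = v * v ^ (γ - 1) := by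
    rw [Real.rpow_sub_one hux.ne']; field_simp
  have e2 : v ^ (γ + 1) = v * v * v ^ (γ - 1) := by
    rw [Real.rpow_add_one hux.ne', e1]; ring
  have e3 : (v / s) ^ (γ + 1 - 1) = v * v ^ (γ - 1) * s / s ^ (γ + 1) := by
    rw [add_sub_cancel_right, Real.div_rpow hux.le hs.le, Real.rpow_add_one hs.ne', e1]
    have : s ^ γ ≠ 0 := (Real.rpow_pos_of_pos hs _).ne'
    field_simp
  rw [e3]
  rw [e1, e2] at hode
  have hS : 0 < s ^ (γ + 1) := Real.rpow_pos_of_pos hs _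
  have hw : 0 < v ^ (γ - 1) := Real.rpow_pos_of_pos hux _
  set S := s ^ (γ + 1)
  set w := v ^ (γ - 1)
  have hEw : E x * w = (v * v * w - S) * p / v := by
    rw [hode]; field_simp
  have key : -2 * ((E x - (γ + 1) * p * v) * w / S)
      - (2 * (m : ℝ) - 1) * -(p / s * (γ + 1) * (v * w * s / S))
      = 2 * p / v + ((2 * (m:ℝ) + 1) * (γ + 1) - 2) * (p * v * w / S) := by
    rw [sub_mul (E x), hEw]; field_simp; ring
  rw [key]
  have : 0 ≤ (2 * (m:ℝ) + 1) * (γ + 1) - 2 := by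
    have hm : (0:ℝ) ≤ m := Nat.cast_nonneg m
    nlinarith
  have : 0 ≤ ((2 * (m:ℝ) + 1) * (γ + 1) - 2) * (p * v * w / S) :=
    mul_nonneg this (by positivity)
  linarith
end

section
/- Assume ζ₀ := ū^{in}/u_s > 1, let (u₀, E₀) ∈ T_dec with u₀ > u_s, and let (ū₁, Ē) : [0, l̃_max) → ℝ² be a smooth solution of the system (ū₁^{γ+1} − u_s^{γ+1})·ū₁' = Ē·ū₁^γ, Ē' = J/ū₁ − ρ̄^{in} with (ū₁, Ē)(0) = (u₀, E₀), ū₁ > 0, and ū₁' < 0 on [0, l̃_max). Define α₁₁ := 1 − (ū₁/u_s)^{γ+1} and β₁ := (Ē − (γ+1)ū₁'ū₁)·ū₁^{γ−1}/u_s^{γ+1}. Then for every m ∈ {0,1,2,3} and every x₁ ∈ [0, l̃_max): −2β₁(x₁) − (2m−1)·α₁₁'(x₁) < 0. In particular, the coefficient inequality −2β₁ − (2m−1)∂₁α₁₁ ≥ λ > 0 fails for every positive constant λ along the decelerating smooth transonic solution. -/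
open Set Filter intervalIntegral

/-- Along the decelerating smooth transonic solution, the coefficient quantity
`−2β₁ − (2m−1)∂₁α₁₁` is strictly negative for `m = 0,1,2,3`; in particular the key
coefficient inequality `−2β₁ − (2m−1)∂₁α₁₁ ≥ λ > 0` fails for every positive `λ`. -/
theorem stmt14
    (γ ρin S₀ J u₀ E₀ lmax : ℝ)
    (hγ : 1 < γ) (hρin : 0 < ρin) (hS₀ : 0 < S₀) (hJ : 0 < J)
    (hζ₀ : 1 < uIn ρin J / usonic γ S₀ J)
    (hinit : (u₀, E₀) ∈ critTrajDec γ ρin S₀ J)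
    (hu₀s : usonic γ S₀ J < u₀)
    (hlmax : 0 < lmax)
    (u E : ℝ → ℝ)
    (husm : ContDiffOn ℝ (⊤ : ℕ∞) u (Ico 0 lmax)) (hEsm : ContDiffOn ℝ (⊤ : ℕ∞) E (Ico 0 lmax))
    (hupos : ∀ x ∈ Ico (0:ℝ) lmax, 0 < u x)
    (hu0 : u 0 = u₀) (hE0 : E 0 = E₀)
    (hODE : ∀ x ∈ Ico (0:ℝ) lmax,
      (u x ^ (γ + 1) - usonic γ S₀ J ^ (γ + 1)) * derivWithin u (Ico 0 lmax) x
        = E x * u x ^ γ ∧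
      derivWithin E (Ico 0 lmax) x = J / u x - ρin)
    (hdec : ∀ x ∈ Ico (0:ℝ) lmax, derivWithin u (Ico 0 lmax) x < 0) :
    (∀ m : ℕ, m ≤ 3 → ∀ x ∈ Ico (0:ℝ) lmax,
      -2 * ((E x - (γ + 1) * derivWithin u (Ico 0 lmax) x * u x) * u x ^ (γ - 1)
              / usonic γ S₀ J ^ (γ + 1))
        - (2 * (m : ℝ) - 1)
          * derivWithin (fun y => 1 - (u y / usonic γ S₀ J) ^ (γ + 1)) (Ico 0 lmax) x
      < 0) ∧
    (∀ lam : ℝ, 0 < lam →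
      ¬ (∀ m : ℕ, m ≤ 3 → ∀ x ∈ Ico (0:ℝ) lmax,
        lam ≤
          -2 * ((E x - (γ + 1) * derivWithin u (Ico 0 lmax) x * u x) * u x ^ (γ - 1)
                  / usonic γ S₀ J ^ (γ + 1))
            - (2 * (m : ℝ) - 1)
              * derivWithin (fun y => 1 - (u y / usonic γ S₀ J) ^ (γ + 1))
                  (Ico 0 lmax) x)) := by
  have hs : 0 < usonic γ S₀ J := by
    unfold usonic
    have := Real.rpow_pos_of_pos hJ (γ - 1)
    apply Real.rpow_pos_of_pos
    positivity
  have key : ∀ m : ℕ, m ≤ 3 → ∀ x ∈ Ico (0:ℝ) lmax,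
      -2 * ((E x - (γ + 1) * derivWithin u (Ico 0 lmax) x * u x) * u x ^ (γ - 1)
              / usonic γ S₀ J ^ (γ + 1))
        - (2 * (m : ℝ) - 1)
          * derivWithin (fun y => 1 - (u y / usonic γ S₀ J) ^ (γ + 1)) (Ico 0 lmax) x
      < 0 := by
    intro m _ x hx
    have hux := hupos x hx
    have hd := hdec x hx
    have hode := (hODE x hx).1
    have hdiff : DifferentiableWithinAt ℝ u (Ico 0 lmax) x :=
      (husm.differentiableOn (by simp)) x hx
    have hud : UniqueDiffWithinAt ℝ (Ico (0:ℝ) lmax) x := uniqueDiffOn_Ico 0 lmax x hx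
    have hder := (((hdiff.hasDerivWithinAt.div_const (usonic γ S₀ J)).rpow_const
      (p := γ + 1) (Or.inl (by positivity))).const_sub 1).derivWithin hud
    rw [hder]
    generalize derivWithin u (Ico 0 lmax) x = d at *
    generalize usonic γ S₀ J = s at *
    have h1 : (u x / s) ^ (γ + 1 - 1) = u x ^ (γ - 1) * u x * s / s ^ (γ + 1) := by
      rw [add_sub_cancel_right, Real.div_rpow hux.le hs.le, Real.rpow_add_one hs.ne',
        Real.rpow_sub_one hux.ne']
      field_simp
    rw [h1]
    have h2 : u x ^ γ = u x ^ (γ - 1) * u x := by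
      rw [Real.rpow_sub_one hux.ne']; field_simp
    rw [Real.rpow_add_one hux.ne', h2] at hode
    have hp := Real.rpow_pos_of_pos hux (γ - 1)
    have hS := Real.rpow_pos_of_pos hs (γ + 1)
    generalize u x ^ (γ - 1) = P at *
    generalize s ^ (γ + 1) = S at *
    generalize u x = v at *
    have hm : (0:ℝ) ≤ m := Nat.cast_nonneg m
    have e : -2 * ((E x - (γ + 1) * d * v) * P / S)
        - (2 * (m : ℝ) - 1) * -(d / s * (γ + 1) * (P * v * s / S))
        = d * (((2 * m + 1) * (γ + 1) - 2) * (P * v * v) + 2 * S) / (S * v) := by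
      field_simp
      linear_combination 2 * hode
    rw [e]
    apply div_neg_of_neg_of_pos _ (by positivity)
    apply mul_neg_of_neg_of_pos hd
    have : 0 < (2 * (m:ℝ) + 1) * (γ + 1) - 2 := by nlinarith
    positivity
  refine ⟨key, fun lam hlam h => ?_⟩
  have h0 : (0:ℝ) ∈ Ico (0:ℝ) lmax := ⟨le_rfl, hlmax⟩
  have a := key 0 (by norm_num) 0 h0
  have b := h 0 (by norm_num) 0 h0
  linarith
end
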